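/- (Łojasiewicz gradient inequality) Let M = (M_0, M_1, M_2, …) be an increasing sequence of positive real numbers with M_0 = 1 that is logarithmically convex, satisfies ∑_{k≥0} M_k/((k+1)M_{k+1}) = ∞, and satisfies sup_{j≥1} (M_{j+1}/M_j)^{1/j} < ∞. Let U ⊆ ℝ^N be a connected open set and f ∈ C^ℝ_M(U), and suppose that for all x ∈ U, ∇f(x) = 0 implies f(x) = 0, where ∇f = (∂f/∂x_1, …, ∂f/∂x_N). Then for every compact K ⊆ U there exist a constant C > 0, a real μ with 0 < μ ≤ 1, and an open neighborhood W of K in U such that |∇f(x)| ≥ C·|f(x)|^{1−μ} for all x ∈ W. -/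

import Mathlib

/-- The `i`-th partial derivative of a function on Euclidean space. -/
noncomputable def pd {ι : Type} [Fintype ι] [DecidableEq ι] {W : Type} [NormedAddCommGroup W]
    [NormedSpace ℝ W] (i : ι) (f : EuclideanSpace ℝ ι → W) : EuclideanSpace ℝ ι → W :=
  fun x => fderiv ℝ f x (EuclideanSpace.single i 1)

/-- The multi-index derivative `D^α f`. -/
noncomputable def mderiv {ι : Type} [Fintype ι] [DecidableEq ι] {W : Type} [NormedAddCommGroup W]
    [NormedSpace ℝ W] (α : ι → ℕ) (f : EuclideanSpace ℝ ι → W) : EuclideanSpace ℝ ι → W :=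
  (Finset.univ : Finset ι).toList.foldr (fun i g => (pd i)^[α i] g) f

/-- Membership in the real Denjoy-Carleman class `C^ℝ_M(U)`: `f` is `C^∞` on `U` and on every
compact `K ⊆ U` there are `A, B > 0` with `|(1/α!) D^α f(x)| ≤ A B^{|α|} M_{|α|}`. -/
def CRM {ι : Type} [Fintype ι] [DecidableEq ι] (M : ℕ → ℝ)
    (U : Set (EuclideanSpace ℝ ι)) (f : EuclideanSpace ℝ ι → ℝ) : Prop :=
  ContDiffOn ℝ (⊤ : ℕ∞) f U ∧
  ∀ K : Set (EuclideanSpace ℝ ι), K ⊆ U → IsCompact K →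
    ∃ A B : ℝ, 0 < A ∧ 0 < B ∧ ∀ x ∈ K, ∀ α : ι → ℕ,
      (1 / (∏ i, ((α i).factorial : ℝ))) * |mderiv α f x| ≤
        A * B ^ (∑ i, α i) * M (∑ i, α i)

/-!
A function of a quasianalytic Denjoy-Carleman class that vanishes at a point, but not identically
near it, becomes a monomial times a unit after finitely many blow-ups and ramifications, as an
analytic one does. The Weierstrass preparation used in the analytic proof is replaced by closure of
the class under division by a coordinate and under implicit functions. These permit an induction on
the order of vanishing in the last variable, which quasianalyticity makes finite after a linear
change of coordinates. For a monomial times a unit, `x_i ∂f/∂x_i` is comparable to `f` while `|x_i|`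
is at most a power of `|f|`, if `x_i` is the smallest coordinate that occurs; this is the gradient
inequality. The chain rule carries it down through each blow-up, since a proper map covers a
neighbourhood by images of finitely many charts, and at a point where `f` does not vanish neither
does its gradient.
-/

namespace DenjoyCarleman

open Filter Topology Set
open scoped ContDiff Nat

/-- The properties of a weight sequence `M` behind the closure properties of the Denjoy-Carleman
class with derivative bounds `A * B ^ m * (m ! * M m)`: `mul_le` gives products and compositions,
`succ_le` gives derivatives. -/
structure IsWeight (M : ℕ → ℝ) : Prop where
  one_le : ∀ j, 1 ≤ M j
  zero : M 0 = 1
  mul_le : ∀ i j, M i * M j ≤ M (i + j)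
  succ_le : ∃ C D : ℝ, 0 < C ∧ 0 < D ∧ ∀ j, M (j + 1) ≤ C * D ^ j * M j

/-- Smoothness of `f` at `x` together with bounds of Denjoy-Carleman type on all its derivatives
there. The shift `s` lets a derivative of order `s` be measured against the sequence of the
function it comes from. -/
def HasDerivBounds {E W : Type*} [NormedAddCommGroup E] [NormedSpace ℝ E]
    [NormedAddCommGroup W] [NormedSpace ℝ W] (M : ℕ → ℝ) (s : ℕ) (A B : ℝ) (f : E → W) (x : E) :
    Prop :=
  ContDiffAt ℝ ∞ f x ∧ ∀ m : ℕ, ‖iteratedFDeriv ℝ m f x‖ ≤ A * B ^ m * ((m + s)! * M (m + s))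

/-- `f` represents a germ at `0` of a function of Denjoy-Carleman class `M`. -/
def IsGerm {E W : Type*} [NormedAddCommGroup E] [NormedSpace ℝ E]
    [NormedAddCommGroup W] [NormedSpace ℝ W] (M : ℕ → ℝ) (f : E → W) : Prop :=
  ∃ A B : ℝ, 0 < A ∧ 0 < B ∧ ∀ᶠ x in 𝓝 (0 : E), HasDerivBounds M 0 A B f x

section Germs

variable {M : ℕ → ℝ}
variable {E F W W' V : Type*} [NormedAddCommGroup E] [NormedSpace ℝ E]
  [NormedAddCommGroup F] [NormedSpace ℝ F]
  [NormedAddCommGroup W] [NormedSpace ℝ W] [NormedAddCommGroup W'] [NormedSpace ℝ W']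
  [NormedAddCommGroup V] [NormedSpace ℝ V]

lemma IsWeight.pos (hM : IsWeight M) (j : ℕ) : 0 < M j := one_pos.trans_le (hM.one_le j)

lemma exists_isOpen_contDiffOn {f : E → W} {x : E} (hf : ContDiffAt ℝ ∞ f x) (m : ℕ) :
    ∃ u, IsOpen u ∧ x ∈ u ∧ ContDiffOn ℝ m f u := by
  obtain ⟨u, hu, hfu⟩ := (hf.of_le (m := m) (mod_cast le_top)).contDiffOn le_rfl (by simp)
  obtain ⟨s, hsu, hs, hxs⟩ := mem_nhds_iff.1 hu
  exact ⟨s, hs, hxs, hfu.mono hsu⟩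

lemma norm_iteratedFDeriv_bilinear_le (L : V →L[ℝ] W →L[ℝ] W') {f : E → V} {g : E → W} {x : E}
    (hf : ContDiffAt ℝ ∞ f x) (hg : ContDiffAt ℝ ∞ g x) (n : ℕ) :
    ‖iteratedFDeriv ℝ n (fun y ↦ L (f y) (g y)) x‖ ≤
      ‖L‖ * ∑ i ∈ Finset.range (n + 1), (n.choose i : ℝ) * ‖iteratedFDeriv ℝ i f x‖ *
        ‖iteratedFDeriv ℝ (n - i) g x‖ := by
  obtain ⟨u, hu, hxu, hfu⟩ := exists_isOpen_contDiffOn hf n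
  obtain ⟨v, hv, hxv, hgv⟩ := exists_isOpen_contDiffOn hg n
  have huv : IsOpen (u ∩ v) := hu.inter hv
  simpa only [iteratedFDerivWithin_of_isOpen _ huv ⟨hxu, hxv⟩] using
    L.norm_iteratedFDerivWithin_le_of_bilinear (hfu.mono inter_subset_left)
      (hgv.mono inter_subset_right) huv.uniqueDiffOn ⟨hxu, hxv⟩ (n := n) le_rfl

lemma norm_iteratedFDeriv_comp_clm_le (L : F →L[ℝ] E) {f : E → W} {x : F}
    (hf : ContDiffAt ℝ ∞ f (L x)) (m : ℕ) :
    ‖iteratedFDeriv ℝ m (fun y ↦ f (L y)) x‖ ≤ ‖iteratedFDeriv ℝ m f (L x)‖ * ‖L‖ ^ m := by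
  obtain ⟨u, hu, hxu, hfu⟩ := exists_isOpen_contDiffOn hf m
  have hpre : IsOpen (L ⁻¹' u) := hu.preimage L.continuous
  have hcomp := L.iteratedFDerivWithin_comp_right hfu hu.uniqueDiffOn hpre.uniqueDiffOn hxu
    (i := m) le_rfl
  rw [iteratedFDerivWithin_of_isOpen m hpre hxu, iteratedFDerivWithin_of_isOpen m hu hxu] at hcomp
  calc ‖iteratedFDeriv ℝ m (f ∘ L) x‖
      = ‖(iteratedFDeriv ℝ m f (L x)).compContinuousLinearMap fun _ ↦ L‖ := by rw [hcomp]
    _ ≤ ‖iteratedFDeriv ℝ m f (L x)‖ * ∏ _i : Fin m, ‖L‖ :=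
        ContinuousMultilinearMap.norm_compContinuousLinearMap_le _ _
    _ = ‖iteratedFDeriv ℝ m f (L x)‖ * ‖L‖ ^ m := by simp

lemma choose_mul_factorial_mul_factorial_le (s : ℕ) {m i : ℕ} (hi : i ≤ m) :
    m.choose i * i ! * (m - i + s)! ≤ (m + s)! := by
  have hchoose : m.choose i * i ! = m.descFactorial i := by
    rw [Nat.descFactorial_eq_factorial_mul_choose, mul_comm]
  have hfact : (m + s).descFactorial i * (m + s - i)! = (m + s)! := by
    rw [mul_comm]; exact Nat.factorial_mul_descFactorial (by lia)
  rw [hchoose, ← hfact, show m - i + s = m + s - i by lia]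
  exact Nat.mul_le_mul_right _ (Nat.descFactorial_le i (by lia))

lemma IsWeight.choose_mul_le (hM : IsWeight M) (s : ℕ) {m i : ℕ} (hi : i ≤ m) :
    (m.choose i : ℝ) * (i ! * M i) * ((m - i + s)! * M (m - i + s)) ≤ (m + s)! * M (m + s) := by
  have hfact : (m.choose i * i ! * (m - i + s)! : ℝ) ≤ (m + s)! :=
    mod_cast choose_mul_factorial_mul_factorial_le s hi
  have hmul : M i * M (m - i + s) ≤ M (m + s) := by
    simpa only [show i + (m - i + s) = m + s by lia] using hM.mul_le i (m - i + s)
  have := (hM.pos i).le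
  have := (hM.pos (m - i + s)).le
  calc (m.choose i : ℝ) * (i ! * M i) * ((m - i + s)! * M (m - i + s))
      = (m.choose i * i ! * (m - i + s)!) * (M i * M (m - i + s)) := by ring
    _ ≤ (m + s)! * M (m + s) := by gcongr

lemma HasDerivBounds.mono (hM : IsWeight M) {s : ℕ} {A B A' B' : ℝ} {f : E → W} {x : E}
    (hf : HasDerivBounds M s A B f x) (hA : 0 ≤ A) (hB : 0 ≤ B) (hAA : A ≤ A') (hBB : B ≤ B') :
    HasDerivBounds M s A' B' f x := by
  refine ⟨hf.1, fun m ↦ (hf.2 m).trans ?_⟩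
  have := (hM.pos (m + s)).le
  have := hA.trans hAA
  gcongr

lemma HasDerivBounds.fderiv_succ {s : ℕ} {A B : ℝ} {f : E → W} {x : E}
    (hf : HasDerivBounds M s A B f x) : HasDerivBounds M (s + 1) (A * B) B (fderiv ℝ f) x := by
  refine ⟨hf.1.fderiv_right (by simp), fun m ↦ ?_⟩
  rw [norm_iteratedFDeriv_fderiv]
  refine (hf.2 (m + 1)).trans_eq ?_
  rw [show m + 1 + s = m + (s + 1) by lia]
  ring

/-- The gap `2 * B₁ ≤ B` turns the Leibniz sum into a geometric series, so the growth rate `B` of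
the second factor is preserved. -/
lemma HasDerivBounds.bilinear (hM : IsWeight M) (L : V →L[ℝ] W →L[ℝ] W') {s : ℕ} {f : E → V}
    {g : E → W} {x : E} {A₁ B₁ A B : ℝ} (hA₁ : 0 ≤ A₁) (hA : 0 ≤ A) (hB₁ : 0 ≤ B₁)
    (hB : 2 * B₁ ≤ B) (hf : HasDerivBounds M 0 A₁ B₁ f x) (hg : HasDerivBounds M s A B g x) :
    HasDerivBounds M s (2 * ‖L‖ * A₁ * A) B (fun y ↦ L (f y) (g y)) x := by
  refine ⟨L.isBoundedBilinearMap.contDiff.contDiffAt.comp x (hf.1.prodMk hg.1), fun m ↦ ?_⟩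
  have hB0 : 0 ≤ B := by linarith
  have hMpos : 0 ≤ M (m + s) := (hM.pos _).le
  set K := A₁ * A * B ^ m * ((m + s)! * M (m + s)) with hK
  have hterm : ∀ i ∈ Finset.range (m + 1), (m.choose i : ℝ) * ‖iteratedFDeriv ℝ i f x‖ *
      ‖iteratedFDeriv ℝ (m - i) g x‖ ≤ (1 / 2) ^ i * K := by
    intro i hi
    have hi : i ≤ m := by simpa [Nat.lt_succ_iff] using hi
    have hpow : B₁ ^ i ≤ (1 / 2) ^ i * B ^ i := by
      rw [← mul_pow]; exact pow_le_pow_left₀ hB₁ (by linarith) i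
    have hcomb := hM.choose_mul_le s hi
    have hfi := hf.2 i
    have hgi := hg.2 (m - i)
    have := (hM.pos i).le
    have := (hM.pos (m - i + s)).le
    calc (m.choose i : ℝ) * ‖iteratedFDeriv ℝ i f x‖ * ‖iteratedFDeriv ℝ (m - i) g x‖
        ≤ m.choose i * (A₁ * B₁ ^ i * (i ! * M i)) *
          (A * B ^ (m - i) * ((m - i + s)! * M (m - i + s))) := by gcongr; exact hfi
      _ = A₁ * A * (B₁ ^ i * B ^ (m - i)) *
          (m.choose i * (i ! * M i) * ((m - i + s)! * M (m - i + s))) := by ring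
      _ ≤ A₁ * A * ((1 / 2) ^ i * B ^ i * B ^ (m - i)) * ((m + s)! * M (m + s)) := by gcongr
      _ = (1 / 2) ^ i * K := by
        rw [hK, mul_assoc ((1 / 2 : ℝ) ^ i), ← pow_add, Nat.add_sub_cancel' hi]; ring
  calc ‖iteratedFDeriv ℝ m (fun y ↦ L (f y) (g y)) x‖
      ≤ ‖L‖ * ∑ i ∈ Finset.range (m + 1), (m.choose i : ℝ) * ‖iteratedFDeriv ℝ i f x‖ *
        ‖iteratedFDeriv ℝ (m - i) g x‖ := norm_iteratedFDeriv_bilinear_le L hf.1 hg.1 m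
    _ ≤ ‖L‖ * ((∑ i ∈ Finset.range (m + 1), (1 / 2 : ℝ) ^ i) * K) := by
        rw [Finset.sum_mul]
        exact mul_le_mul_of_nonneg_left (Finset.sum_le_sum hterm) (norm_nonneg L)
    _ ≤ ‖L‖ * (2 * K) := by gcongr; exact sum_geometric_two_le (m + 1)
    _ = 2 * ‖L‖ * A₁ * A * B ^ m * ((m + s)! * M (m + s)) := by rw [hK]; ring

namespace IsGerm

lemma congr {f g : E → W} (hf : IsGerm M f) (h : f =ᶠ[𝓝 0] g) : IsGerm M g := by
  obtain ⟨A, B, hA, hB, hf⟩ := hf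
  refine ⟨A, B, hA, hB, ?_⟩
  filter_upwards [hf, h.eventuallyEq_nhds] with x hx hfg
  refine ⟨hx.1.congr_of_eventuallyEq hfg.symm, fun m ↦ ?_⟩
  rw [← (hfg.iteratedFDeriv ℝ m).eq_of_nhds]
  exact hx.2 m

lemma eventually_contDiffAt {f : E → W} (hf : IsGerm M f) :
    ∀ᶠ x in 𝓝 (0 : E), ContDiffAt ℝ ∞ f x :=
  let ⟨_, _, _, _, hf⟩ := hf
  hf.mono fun _ hx ↦ hx.1

lemma continuousAt {f : E → W} (hf : IsGerm M f) : ContinuousAt f 0 :=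
  hf.eventually_contDiffAt.self_of_nhds.continuousAt

lemma tendsto {f : E → F} (hf : IsGerm M f) (h0 : f 0 = 0) : Tendsto f (𝓝 0) (𝓝 0) := by
  simpa only [ContinuousAt, h0] using hf.continuousAt

lemma clm_comp (hM : IsWeight M) {f : E → W} (hf : IsGerm M f) (L : W →L[ℝ] W') :
    IsGerm M (fun x ↦ L (f x)) := by
  obtain ⟨A, B, hA, hB, hf⟩ := hf
  refine ⟨(‖L‖ + 1) * A, B, by positivity, hB, ?_⟩
  filter_upwards [hf] with x hx
  refine ⟨L.contDiff.contDiffAt.comp x hx.1, fun m ↦ ?_⟩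
  have := (hM.pos m).le
  calc ‖iteratedFDeriv ℝ m (fun x ↦ L (f x)) x‖ ≤ ‖L‖ * ‖iteratedFDeriv ℝ m f x‖ :=
        L.norm_iteratedFDeriv_comp_left hx.1 (mod_cast le_top)
    _ ≤ (‖L‖ + 1) * (A * B ^ m * (m ! * M m)) := by gcongr; exacts [by linarith, hx.2 m]
    _ = (‖L‖ + 1) * A * B ^ m * (m ! * M m) := by ring

lemma comp_clm (hM : IsWeight M) {f : E → W} (hf : IsGerm M f) (L : F →L[ℝ] E) :
    IsGerm M (fun x ↦ f (L x)) := by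
  obtain ⟨A, B, hA, hB, hf⟩ := hf
  refine ⟨A, B * (‖L‖ + 1), hA, by positivity, ?_⟩
  have hL : Tendsto L (𝓝 0) (𝓝 0) := by simpa only [map_zero] using L.continuous.tendsto 0
  filter_upwards [hL.eventually hf] with x hx
  refine ⟨hx.1.comp x L.contDiff.contDiffAt, fun m ↦ ?_⟩
  have := (hM.pos m).le
  calc ‖iteratedFDeriv ℝ m (fun y ↦ f (L y)) x‖
      ≤ ‖iteratedFDeriv ℝ m f (L x)‖ * ‖L‖ ^ m := norm_iteratedFDeriv_comp_clm_le L hx.1 m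
    _ ≤ A * B ^ m * (m ! * M m) * (‖L‖ + 1) ^ m := by gcongr; exacts [hx.2 m, by linarith]
    _ = A * (B * (‖L‖ + 1)) ^ m * (m ! * M m) := by rw [mul_pow]; ring

protected lemma const (hM : IsWeight M) (c : W) : IsGerm M (fun _ : E ↦ c) := by
  refine ⟨‖c‖ + 1, 1, by positivity, one_pos, .of_forall fun x ↦ ⟨contDiffAt_const, fun m ↦ ?_⟩⟩
  have := (hM.pos m).le
  rcases eq_or_ne m 0 with rfl | hm
  · simp [hM.zero]
  · rw [iteratedFDeriv_const_of_ne hm, Pi.zero_apply, norm_zero]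
    positivity

lemma bilinear (hM : IsWeight M) (L : V →L[ℝ] W →L[ℝ] W') {f : E → V} {g : E → W}
    (hf : IsGerm M f) (hg : IsGerm M g) : IsGerm M (fun x ↦ L (f x) (g x)) := by
  obtain ⟨A, B, hA, hB, hf⟩ := hf
  obtain ⟨A', B', hA', hB', hg⟩ := hg
  refine ⟨2 * (‖L‖ + 1) * A * A', 2 * B + B', by positivity, by positivity, ?_⟩
  filter_upwards [hf, hg] with x hfx hgx
  have hgx' := hgx.mono hM hA'.le hB'.le le_rfl (show B' ≤ 2 * B + B' by linarith)
  refine (hfx.bilinear hM L hA.le hA'.le hB.le (by linarith) hgx').mono hM (by positivity)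
    (by positivity) ?_ le_rfl
  gcongr
  linarith

protected lemma add (hM : IsWeight M) {f g : E → W} (hf : IsGerm M f) (hg : IsGerm M g) :
    IsGerm M (fun x ↦ f x + g x) := by
  obtain ⟨A, B, hA, hB, hf⟩ := hf
  obtain ⟨A', B', hA', hB', hg⟩ := hg
  refine ⟨A + A', B + B', by positivity, by positivity, ?_⟩
  filter_upwards [hf, hg] with x hfx hgx
  have hfx' := hfx.mono hM hA.le hB.le le_rfl (show B ≤ B + B' by linarith)
  have hgx' := hgx.mono hM hA'.le hB'.le le_rfl (show B' ≤ B + B' by linarith)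
  refine ⟨hfx.1.add hgx.1, fun m ↦ ?_⟩
  calc ‖iteratedFDeriv ℝ m (fun x ↦ f x + g x) x‖
      = ‖iteratedFDeriv ℝ m f x + iteratedFDeriv ℝ m g x‖ := by
        congr 1
        exact iteratedFDeriv_add_apply (hfx.1.of_le (mod_cast le_top))
          (hgx.1.of_le (mod_cast le_top))
    _ ≤ A * (B + B') ^ m * (m ! * M m) + A' * (B + B') ^ m * (m ! * M m) :=
        (norm_add_le _ _).trans (add_le_add (hfx'.2 m) (hgx'.2 m))
    _ = (A + A') * (B + B') ^ m * (m ! * M m) := by ring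

protected lemma fderiv (hM : IsWeight M) {f : E → W} (hf : IsGerm M f) : IsGerm M (fderiv ℝ f) := by
  obtain ⟨A, B, hA, hB, hf⟩ := hf
  obtain ⟨C, D, hC, hD, hCD⟩ := hM.succ_le
  refine ⟨A * B * C, B * D * 2, by positivity, by positivity, ?_⟩
  filter_upwards [hf] with x hx
  refine ⟨hx.fderiv_succ.1, fun m ↦ (hx.fderiv_succ.2 m).trans ?_⟩
  have hm : ((m : ℝ) + 1) ≤ 2 ^ m := mod_cast Nat.lt_two_pow_self (n := m)
  have := (hM.pos m).le
  have := (hM.pos (m + 1)).le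
  calc A * B * B ^ m * ((m + 1)! * M (m + 1))
      = A * B * B ^ m * ((m + 1) * m ! * M (m + 1)) := by
        rw [Nat.factorial_succ]; push_cast; ring
    _ ≤ A * B * B ^ m * (2 ^ m * m ! * (C * D ^ m * M m)) := by gcongr; exact hCD m
    _ = A * B * C * (B * D * 2) ^ m * (m ! * M m) := by rw [mul_pow, mul_pow]; ring

lemma clm (hM : IsWeight M) (L : E →L[ℝ] W) : IsGerm M L := by
  refine ⟨‖L‖ + 1, 1, by positivity, one_pos, ?_⟩
  filter_upwards [Metric.ball_mem_nhds (0 : E) one_pos] with x hx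
  have hx : ‖x‖ < 1 := by simpa using hx
  refine ⟨L.contDiff.contDiffAt, fun m ↦ ?_⟩
  have hfderiv : fderiv ℝ L = fun _ ↦ L := funext fun _ ↦ L.fderiv
  match m with
  | 0 =>
    have hLx := L.le_of_opNorm_le_of_le le_rfl hx.le
    simpa [hM.zero] using hLx.trans (by linarith)
  | 1 =>
    rw [← zero_add 1, ← norm_iteratedFDeriv_fderiv, hfderiv, norm_iteratedFDeriv_zero]
    simpa using (le_add_of_nonneg_right zero_le_one).trans
      (le_mul_of_one_le_right (by positivity) (hM.one_le 1))
  | k + 2 =>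
    have := (hM.pos (k + 2)).le
    rw [← norm_iteratedFDeriv_fderiv, hfderiv, iteratedFDeriv_const_of_ne (by lia),
      Pi.zero_apply, norm_zero]
    positivity

protected lemma mul (hM : IsWeight M) {f g : E → ℝ} (hf : IsGerm M f) (hg : IsGerm M g) :
    IsGerm M (fun x ↦ f x * g x) :=
  bilinear hM (ContinuousLinearMap.mul ℝ ℝ) hf hg

protected lemma smul (hM : IsWeight M) {f : E → ℝ} {g : E → W} (hf : IsGerm M f)
    (hg : IsGerm M g) : IsGerm M (fun x ↦ f x • g x) :=
  bilinear hM (ContinuousLinearMap.lsmul ℝ ℝ) hf hg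

protected lemma sub (hM : IsWeight M) {f g : E → W} (hf : IsGerm M f) (hg : IsGerm M g) :
    IsGerm M (fun x ↦ f x - g x) := by
  simpa [sub_eq_add_neg] using hf.add hM (hg.clm_comp hM (-ContinuousLinearMap.id ℝ W))

protected lemma pow (hM : IsWeight M) {f : E → ℝ} (hf : IsGerm M f) (k : ℕ) :
    IsGerm M (fun x ↦ f x ^ k) := by
  induction k with
  | zero => simpa using IsGerm.const hM (1 : ℝ)
  | succ k ih => simpa only [pow_succ] using ih.mul hM hf

protected lemma sum (hM : IsWeight M) {ι : Type*} (s : Finset ι) {f : ι → E → W}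
    (hf : ∀ i ∈ s, IsGerm M (f i)) : IsGerm M (fun x ↦ ∑ i ∈ s, f i x) := by
  classical
  induction s using Finset.induction_on with
  | empty => simpa using IsGerm.const hM (0 : W)
  | insert a s ha ih =>
    simp only [Finset.sum_insert ha]
    exact (hf a (by simp)).add hM (ih fun i hi ↦ hf i (by simp [hi]))

protected lemma prod (hM : IsWeight M) {ι : Type*} (s : Finset ι) {f : ι → E → ℝ}
    (hf : ∀ i ∈ s, IsGerm M (f i)) : IsGerm M (fun x ↦ ∏ i ∈ s, f i x) := by
  classical
  induction s using Finset.induction_on with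
  | empty => simpa using IsGerm.const hM (1 : ℝ)
  | insert a s ha ih =>
    simp only [Finset.prod_insert ha]
    exact (hf a (by simp)).mul hM (ih fun i hi ↦ hf i (by simp [hi]))

lemma prodMk (hM : IsWeight M) {f : E → V} {g : E → W} (hf : IsGerm M f) (hg : IsGerm M g) :
    IsGerm M (fun x ↦ (f x, g x)) := by
  simpa using (hf.clm_comp hM (ContinuousLinearMap.inl ℝ V W)).add hM
    (hg.clm_comp hM (ContinuousLinearMap.inr ℝ V W))

lemma pi (hM : IsWeight M) {ι : Type*} [Fintype ι] {f : ι → E → ℝ} (hf : ∀ i, IsGerm M (f i)) :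
    IsGerm M (fun x i ↦ f i x) := by
  classical
  refine (IsGerm.sum hM Finset.univ (f := fun i x ↦ f i x • (Pi.single i (1 : ℝ) : ι → ℝ))
    fun i _ ↦ (hf i).smul hM (.const hM _)).congr (.of_forall fun x ↦ ?_)
  ext j
  simp [Finset.sum_apply, Pi.single_apply]

end IsGerm

end Germs

section Composition

variable {M : ℕ → ℝ}
variable {E F W : Type} [NormedAddCommGroup E] [NormedSpace ℝ E]
  [NormedAddCommGroup F] [NormedSpace ℝ F] [NormedAddCommGroup W] [NormedSpace ℝ W]

lemma fderiv_comp_eventuallyEq {Φ : F → E} {H : E → F →L[ℝ] E} {U : Set F} (hU : IsOpen U)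
    (hΦ : ∀ x ∈ U, DifferentiableAt ℝ Φ x) (hd : ∀ x ∈ U, fderiv ℝ Φ x = H (Φ x)) {g : E → W}
    (hg : ∀ x ∈ U, DifferentiableAt ℝ g (Φ x)) {x : F} (hx : x ∈ U) :
    fderiv ℝ (fun z ↦ g (Φ z)) =ᶠ[𝓝 x] fun z ↦ (fderiv ℝ g (Φ z)).comp (H (Φ z)) := by
  filter_upwards [hU.mem_nhds hx] with z hz
  rw [← hd z hz]
  exact fderiv_comp z (hg z hz) (hΦ z hz)

/-- Each derivative of `g ∘ Φ` falls back on a composition `(H · g') ∘ Φ`, so the induction replaces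
`g` by `H · g'` and raises the shift `s`; no Faà di Bruno formula is needed. -/
lemma norm_iteratedFDeriv_comp_le_of_fderiv_eq (hM : IsWeight M) {Φ : F → E} {H : E → F →L[ℝ] E}
    {U : Set F} {S : Set E} (hU : IsOpen U) (hUS : MapsTo Φ U S)
    (hΦ : ∀ x ∈ U, DifferentiableAt ℝ Φ x) (hd : ∀ x ∈ U, fderiv ℝ Φ x = H (Φ x))
    {A₁ B₁ B : ℝ} (hA₁ : 0 ≤ A₁) (hB₁ : 0 ≤ B₁) (hB : 2 * B₁ ≤ B)
    (hH : ∀ y ∈ S, HasDerivBounds M 0 A₁ B₁ H y) (k : ℕ) :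
    ∀ (W : Type) [NormedAddCommGroup W] [NormedSpace ℝ W] (g : E → W) (s : ℕ) (A : ℝ), 0 ≤ A →
      (∀ y ∈ S, HasDerivBounds M s A B g y) → ∀ x ∈ U,
      ‖iteratedFDeriv ℝ k (fun z ↦ g (Φ z)) x‖ ≤
        A * (2 * A₁ * B) ^ k * ((k + s)! * M (k + s)) := by
  induction k with
  | zero =>
    intro W _ _ g s A _ hg x hx
    simpa using (hg _ (hUS hx)).2 0
  | succ k ih =>
    intro W _ _ g s A hA hg x hx
    have hB0 : 0 ≤ B := by linarith
    let L := (ContinuousLinearMap.compL ℝ F E W).flip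
    have hL : ‖L‖ ≤ 1 := by
      rw [ContinuousLinearMap.opNorm_flip]
      exact ContinuousLinearMap.norm_compL_le ℝ F E W
    have hfderiv : fderiv ℝ (fun z ↦ g (Φ z)) =ᶠ[𝓝 x]
        fun z ↦ (fun y ↦ L (H y) (fderiv ℝ g y)) (Φ z) :=
      fderiv_comp_eventuallyEq hU hΦ hd
        (fun z hz ↦ (hg _ (hUS hz)).1.differentiableAt (by simp)) hx
    have hbounds : ∀ y ∈ S,
        HasDerivBounds M (s + 1) (2 * A₁ * (A * B)) B (fun y ↦ L (H y) (fderiv ℝ g y)) y := by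
      refine fun y hy ↦ ((hH y hy).bilinear hM L hA₁ (by positivity) hB₁ hB
        (hg y hy).fderiv_succ).mono hM (by positivity) hB0 ?_ le_rfl
      have : ‖L‖ * (A₁ * (A * B)) ≤ 1 * (A₁ * (A * B)) := by gcongr
      linarith
    rw [← norm_iteratedFDeriv_fderiv, (hfderiv.iteratedFDeriv ℝ k).eq_of_nhds]
    refine (ih (F →L[ℝ] W) _ (s + 1) _ (by positivity) hbounds x hx).trans_eq ?_
    rw [show k + (s + 1) = k + 1 + s by lia]
    ring

namespace IsGerm

lemma comp_of_fderiv_eq (hM : IsWeight M) {Φ : F → E} {H : E → F →L[ℝ] E} (h0 : Φ 0 = 0)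
    (hΦ : ∀ᶠ x in 𝓝 0, ContDiffAt ℝ ∞ Φ x) (hd : ∀ᶠ x in 𝓝 0, fderiv ℝ Φ x = H (Φ x))
    (hH : IsGerm M H) {g : E → W} (hg : IsGerm M g) : IsGerm M (fun x ↦ g (Φ x)) := by
  obtain ⟨A₁, B₁, hA₁, hB₁, hH⟩ := hH
  obtain ⟨A, B, hA, hB, hg⟩ := hg
  obtain ⟨S, hS, hSo, h0S⟩ := mem_nhds_iff.1 (hH.and hg)
  have hΦS : ∀ᶠ x in 𝓝 (0 : F), Φ x ∈ S :=
    hΦ.self_of_nhds.continuousAt.eventually (by rw [h0]; exact hSo.mem_nhds h0S)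
  obtain ⟨U, hU, hUo, h0U⟩ := mem_nhds_iff.1 (hΦ.and (hd.and hΦS))
  refine ⟨A, 2 * A₁ * (2 * B₁ + B), hA, by positivity, ?_⟩
  filter_upwards [hUo.mem_nhds h0U] with x hx
  refine ⟨(hS (hU hx).2.2).2.1.comp x (hU hx).1, fun m ↦ ?_⟩
  exact norm_iteratedFDeriv_comp_le_of_fderiv_eq hM hUo (fun x hx ↦ (hU hx).2.2)
    (fun x hx ↦ (hU hx).1.differentiableAt (by simp)) (fun x hx ↦ (hU hx).2.1) hA₁.le hB₁.le
    (by linarith) (fun y hy ↦ (hS hy).1) m W g 0 A hA.le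
    (fun y hy ↦ (hS hy).2.mono hM hA.le hB.le le_rfl (by linarith)) x hx

/-- The graph map `Φ z = (z, π z)` satisfies `Φ' = H ∘ Φ` with `H p = (id, π' p.1)`. -/
protected lemma comp (hM : IsWeight M) {f : E → W} (hf : IsGerm M f) {π : F → E}
    (hπ : IsGerm M π) (h0 : π 0 = 0) : IsGerm M (fun x ↦ f (π x)) := by
  let H : F × E → F →L[ℝ] F × E := fun p ↦ ContinuousLinearMap.inl ℝ F E +
    ContinuousLinearMap.compL ℝ F E (F × E) (ContinuousLinearMap.inr ℝ F E) (fderiv ℝ π p.1)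
  have hH : IsGerm M H :=
    (IsGerm.const hM _).add hM (((hπ.fderiv hM).comp_clm hM (.fst ℝ F E)).clm_comp hM _)
  refine comp_of_fderiv_eq hM (Φ := fun z ↦ (z, π z)) (by simp [h0])
    (hπ.eventually_contDiffAt.mono fun x hx ↦ contDiffAt_id.prodMk hx)
    (hπ.eventually_contDiffAt.mono fun x hx ↦ ?_) hH (hf.comp_clm hM (.snd ℝ F E))
  have hgraph := (hasFDerivAt_id x).prodMk (hx.differentiableAt (by simp)).hasFDerivAt
  refine hgraph.fderiv.trans ?_
  ext v <;> simp [H]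

lemma inv_const_add (hM : IsWeight M) {c : ℝ} (hc : c ≠ 0) : IsGerm M (fun w : ℝ ↦ (c + w)⁻¹) := by
  have hc' : 0 < |c| := abs_pos.2 hc
  refine ⟨2 / |c|, 2 / |c|, by positivity, by positivity, ?_⟩
  filter_upwards [Metric.ball_mem_nhds (0 : ℝ) (half_pos hc')] with w hw
  have hw : |w| < |c| / 2 := by simpa using hw
  have hcw : |c| / 2 ≤ |c + w| := by
    have := abs_sub_abs_le_abs_sub c (-w)
    rw [abs_neg, sub_neg_eq_add] at this
    linarith
  have hne : c + w ≠ 0 := abs_pos.1 (by linarith)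
  refine ⟨(contDiffAt_const.add contDiffAt_id).inv hne, fun m ↦ ?_⟩
  have hderiv : iteratedDeriv m (fun w : ℝ ↦ (c + w)⁻¹) w
      = (-1) ^ m * m ! * (c + w) ^ (-1 - m : ℤ) := by
    rw [congrFun (iteratedDeriv_comp_const_add m (fun z : ℝ ↦ z⁻¹) c) w,
      iteratedDeriv_eq_iterate]
    exact congrFun (iter_deriv_inv' m) (c + w)
  have hnorm : ‖iteratedFDeriv ℝ m (fun w : ℝ ↦ (c + w)⁻¹) w‖ = m ! * |c + w|⁻¹ ^ (m + 1) := by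
    rw [norm_iteratedFDeriv_eq_norm_iteratedDeriv, hderiv, norm_mul, norm_mul, norm_pow, norm_neg,
      norm_one, one_pow, one_mul, norm_zpow, show (-1 - m : ℤ) = -((m + 1 : ℕ) : ℤ) by grind,
      zpow_neg, zpow_natCast, inv_pow, Real.norm_eq_abs, Real.norm_eq_abs, Nat.abs_cast]
  have hinv : |c + w|⁻¹ ≤ 2 / |c| := by
    rw [inv_le_comm₀ (by linarith) (by positivity)]
    simpa using hcw
  rw [hnorm]
  calc m ! * |c + w|⁻¹ ^ (m + 1) ≤ m ! * (2 / |c|) ^ (m + 1) := by gcongr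
    _ ≤ m ! * (2 / |c|) ^ (m + 1) * M m :=
        le_mul_of_one_le_right (by positivity) (hM.one_le m)
    _ = 2 / |c| * (2 / |c|) ^ m * (m ! * M m) := by ring

protected lemma inv (hM : IsWeight M) {f : E → ℝ} (hf : IsGerm M f) (h0 : f 0 ≠ 0) :
    IsGerm M (fun x ↦ (f x)⁻¹) := by
  have hsub : IsGerm M (fun x ↦ f x - f 0) := hf.sub hM (.const hM _)
  simpa using (inv_const_add hM h0).comp hM hsub (by simp)

end IsGerm

end Composition

section ImplicitFunction

variable {M : ℕ → ℝ} {E : Type} [NormedAddCommGroup E] [NormedSpace ℝ E]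

lemma isInvertible_comp_inr {T : E × ℝ →L[ℝ] ℝ} (hT : T (0, 1) ≠ 0) :
    (T ∘L .inr ℝ E ℝ).IsInvertible :=
  ⟨ContinuousLinearEquiv.unitsEquivAut ℝ (Units.mk0 _ hT), by ext; simp⟩

lemma exists_implicit_contDiffAt [CompleteSpace E] {c : E × ℝ → ℝ}
    (hc : ∀ᶠ p in 𝓝 0, ContDiffAt ℝ ∞ c p) (h0 : c 0 = 0) (hc' : fderiv ℝ c 0 (0, 1) ≠ 0) :
    ∃ ψ : E → ℝ, ψ 0 = 0 ∧ (∀ᶠ x in 𝓝 0, ContDiffAt ℝ ∞ ψ x) ∧ ∀ᶠ x in 𝓝 0, c (x, ψ x) = 0 := by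
  have hn : (∞ : WithTop ℕ∞) ≠ 0 := by simp
  have hc0 := hc.self_of_nhds
  have hinv := isInvertible_comp_inr hc'
  let ψ := hc0.implicitFunction hn hinv
  have hψ0 : ψ 0 = 0 := hc0.implicitFunction_apply_self hn hinv
  have hψsmooth : ContDiffAt ℝ ∞ ψ 0 := hc0.contDiffAt_implicitFunction hn hinv
  have hψc : ∀ᶠ x in 𝓝 (0 : E), c (x, ψ x) = 0 := by
    have := hc0.eventually_apply_implicitFunction hn hinv
    rwa [h0] at this
  have hgraph : Tendsto (fun x ↦ (x, ψ x)) (𝓝 (0 : E)) (𝓝 (0 : E × ℝ)) := by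
    have := continuousAt_id.prodMk hψsmooth.continuousAt
    simpa only [ContinuousAt, id_eq, hψ0, Prod.mk_zero_zero] using this
  have hψ1 : ∀ᶠ x in 𝓝 (0 : E), ContDiffAt ℝ 1 ψ x :=
    (hψsmooth.of_le (mod_cast le_top)).eventually (by simp)
  have hne : ∀ᶠ p in 𝓝 (0 : E × ℝ), fderiv ℝ c p (0, 1) ≠ 0 :=
    ((hc0.continuousAt_fderiv hn).clm_apply continuousAt_const).eventually_ne hc'
  refine ⟨ψ, hψ0, ?_, hψc⟩
  -- Near each graph point `ψ` coincides with the implicit function based at that point.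
  filter_upwards [hψ1, hψc.eventually_nhds, hgraph.eventually hne, hgraph.eventually hc]
    with x hψx hcx hnex hsmooth
  have hinvx := isInvertible_comp_inr hnex
  refine (hsmooth.contDiffAt_implicitFunction hn hinvx).congr_of_eventuallyEq ?_
  have hgraphx : Tendsto (fun z ↦ (z, ψ z)) (𝓝 x) (𝓝 (x, ψ x)) :=
    continuousAt_id.prodMk hψx.continuousAt
  filter_upwards [hgraphx.eventually (hsmooth.eventually_apply_eq_iff_implicitFunction hn hinvx),
    hcx] with z hz hcz
  exact (hz.1 (by rw [hcz, hcx.self_of_nhds])).symm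

lemma fderiv_implicit_apply {c : E × ℝ → ℝ} {ψ : E → ℝ} {x : E} (hψ : DifferentiableAt ℝ ψ x)
    (hc : DifferentiableAt ℝ c (x, ψ x)) (hcψ : ∀ᶠ z in 𝓝 x, c (z, ψ z) = 0)
    (hne : fderiv ℝ c (x, ψ x) (0, 1) ≠ 0) (v : E) :
    fderiv ℝ ψ x v = -((fderiv ℝ c (x, ψ x) (0, 1))⁻¹ * fderiv ℝ c (x, ψ x) (v, 0)) := by
  have hchain := hc.hasFDerivAt.comp x ((hasFDerivAt_id x).prodMk hψ.hasFDerivAt)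
  have hzero : HasFDerivAt (fun z ↦ c (z, ψ z)) (0 : E →L[ℝ] ℝ) x :=
    (hasFDerivAt_const 0 x).congr_of_eventuallyEq hcψ
  have hsum : fderiv ℝ c (x, ψ x) (v, fderiv ℝ ψ x v) = 0 :=
    congrArg (fun T ↦ T v) (hchain.unique hzero)
  have hsplit : ((v, fderiv ℝ ψ x v) : E × ℝ) = (v, 0) + fderiv ℝ ψ x v • (0, 1) := by simp
  rw [hsplit, map_add, map_smul, smul_eq_mul] at hsum
  field_simp
  linarith

theorem IsGerm.exists_implicit [CompleteSpace E] (hM : IsWeight M) {c : E × ℝ → ℝ}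
    (hc : IsGerm M c) (h0 : c 0 = 0) (hc' : fderiv ℝ c 0 (0, 1) ≠ 0) :
    ∃ ψ : E → ℝ, IsGerm M ψ ∧ ψ 0 = 0 ∧ ∀ᶠ x in 𝓝 0, c (x, ψ x) = 0 := by
  obtain ⟨ψ, hψ0, hψ, hcψ⟩ := exists_implicit_contDiffAt hc.eventually_contDiffAt h0 hc'
  refine ⟨ψ, ?_, hψ0, hcψ⟩
  let cy : E × ℝ → ℝ := fun p ↦ fderiv ℝ c p (0, 1)
  have hcy : IsGerm M cy := (hc.fderiv hM).clm_comp hM (.apply ℝ ℝ ((0 : E), (1 : ℝ)))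
  let H : E × ℝ → E →L[ℝ] E × ℝ := fun p ↦ ContinuousLinearMap.inl ℝ E ℝ -
    ContinuousLinearMap.compL ℝ E ℝ (E × ℝ) (ContinuousLinearMap.inr ℝ E ℝ)
      ((cy p)⁻¹ • (ContinuousLinearMap.compL ℝ E (E × ℝ) ℝ).flip (.inl ℝ E ℝ) (fderiv ℝ c p))
  have hH : IsGerm M H := (IsGerm.const hM _).sub hM
    (((hcy.inv hM hc').smul hM ((hc.fderiv hM).clm_comp hM _)).clm_comp hM _)
  have hgraph : Tendsto (fun x ↦ (x, ψ x)) (𝓝 (0 : E)) (𝓝 (0 : E × ℝ)) := by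
    have := continuousAt_id.prodMk hψ.self_of_nhds.continuousAt
    simpa only [ContinuousAt, id_eq, hψ0, Prod.mk_zero_zero] using this
  refine comp_of_fderiv_eq hM (Φ := fun z ↦ (z, ψ z)) (H := H) (by simp [hψ0])
    (hψ.mono fun x hx ↦ contDiffAt_id.prodMk hx) ?_ hH (.clm hM (.snd ℝ E ℝ))
  filter_upwards [hψ, hcψ.eventually_nhds, hgraph.eventually (hcy.continuousAt.eventually_ne hc'),
    hgraph.eventually hc.eventually_contDiffAt] with x hψx hcx hne hsmooth
  have hψx := hψx.differentiableAt (n := ∞) (by simp)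
  refine ((hasFDerivAt_id x).prodMk hψx.hasFDerivAt).fderiv.trans ?_
  ext v
  · simp [H]
  · simpa [H, cy] using fderiv_implicit_apply hψx (hsmooth.differentiableAt (by simp)) hcx hne v

end ImplicitFunction

section Division

variable {E : Type} [NormedAddCommGroup E] [NormedSpace ℝ E]

section ParametricIntegral

variable {W : Type} [NormedAddCommGroup W] [NormedSpace ℝ W] {S : Set E} {g : ℝ × E → W}

lemma hasFDerivAt_section {t : ℝ} {x : E} (hg : ContDiffAt ℝ ∞ g (t, x)) :
    HasFDerivAt (fun y ↦ g (t, y)) (fderiv ℝ g (t, x) ∘L .inr ℝ ℝ E) x :=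
  (hg.differentiableAt (by simp)).hasFDerivAt.comp x (hasFDerivAt_prodMk_right t x)

lemma continuousOn_section (hg : ∀ t ∈ Icc (0 : ℝ) 1, ∀ x ∈ S, ContDiffAt ℝ ∞ g (t, x)) {x : E}
    (hx : x ∈ S) : ContinuousOn (fun t ↦ g (t, x)) (Icc 0 1) := fun t ht ↦
  ((hg t ht x hx).continuousAt.comp (f := fun t : ℝ ↦ (t, x)) (by fun_prop)).continuousWithinAt

lemma contDiffAt_fderiv_comp_inr {p : ℝ × E} (hg : ContDiffAt ℝ ∞ g p) :
    ContDiffAt ℝ ∞ (fun p ↦ fderiv ℝ g p ∘L .inr ℝ ℝ E) p :=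
  (hg.fderiv_right (by simp)).clm_comp contDiffAt_const

lemma hasFDerivAt_integral_section (hS : IsOpen S) {C : ℝ}
    (hg : ∀ t ∈ Icc (0 : ℝ) 1, ∀ x ∈ S, ContDiffAt ℝ ∞ g (t, x))
    (hb : ∀ t ∈ Icc (0 : ℝ) 1, ∀ x ∈ S, ‖iteratedFDeriv ℝ 1 (fun y ↦ g (t, y)) x‖ ≤ C)
    {x : E} (hx : x ∈ S) :
    HasFDerivAt (fun x ↦ ∫ t in (0 : ℝ)..1, g (t, x))
      (∫ t in (0 : ℝ)..1, fderiv ℝ g (t, x) ∘L .inr ℝ ℝ E) x := by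
  have hIoc : uIoc (0 : ℝ) 1 ⊆ Icc 0 1 := by
    rw [uIoc_of_le zero_le_one]; exact Ioc_subset_Icc_self
  refine intervalIntegral.hasFDerivAt_integral_of_dominated_of_fderiv_le (bound := fun _ ↦ C)
    (F := fun x t ↦ g (t, x)) (F' := fun x t ↦ fderiv ℝ g (t, x) ∘L .inr ℝ ℝ E)
    (hS.mem_nhds hx) ?_ ?_ ?_ ?_ intervalIntegrable_const ?_
  · filter_upwards [hS.mem_nhds hx] with y hy
    exact ((continuousOn_section hg hy).mono hIoc).aestronglyMeasurable measurableSet_uIoc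
  · refine ContinuousOn.intervalIntegrable ?_
    rw [uIcc_of_le zero_le_one]
    exact continuousOn_section hg hx
  · exact ((continuousOn_section (fun t ht x hx ↦ contDiffAt_fderiv_comp_inr (hg t ht x hx))
      hx).mono hIoc).aestronglyMeasurable measurableSet_uIoc
  · refine .of_forall fun t ht y hy ↦ ?_
    rw [← (hasFDerivAt_section (hg t (hIoc ht) y hy)).fderiv, ← norm_iteratedFDeriv_zero (𝕜 := ℝ),
      norm_iteratedFDeriv_fderiv]
    exact hb t (hIoc ht) y hy
  · exact .of_forall fun t ht y hy ↦ hasFDerivAt_section (hg t (hIoc ht) y hy)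

lemma norm_iteratedFDeriv_fderiv_section {t : ℝ} {x : E}
    (hg : ∀ᶠ y in 𝓝 x, ContDiffAt ℝ ∞ g (t, y)) (m : ℕ) :
    ‖iteratedFDeriv ℝ m (fun y ↦ fderiv ℝ g (t, y) ∘L .inr ℝ ℝ E) x‖ =
      ‖iteratedFDeriv ℝ (m + 1) (fun y ↦ g (t, y)) x‖ := by
  have heq : (fun y ↦ fderiv ℝ g (t, y) ∘L .inr ℝ ℝ E) =ᶠ[𝓝 x] fderiv ℝ fun y ↦ g (t, y) :=
    hg.mono fun y hy ↦ (hasFDerivAt_section hy).fderiv.symm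
  rw [(heq.iteratedFDeriv ℝ m).eq_of_nhds, norm_iteratedFDeriv_fderiv]

lemma contDiffOn_and_norm_iteratedFDeriv_integral_le (hS : IsOpen S) (m : ℕ) :
    ∀ (W : Type) [NormedAddCommGroup W] [NormedSpace ℝ W] (g : ℝ × E → W)
      (C : ℕ → ℝ), (∀ t ∈ Icc (0 : ℝ) 1, ∀ x ∈ S, ContDiffAt ℝ ∞ g (t, x)) →
      (∀ m, ∀ t ∈ Icc (0 : ℝ) 1, ∀ x ∈ S, ‖iteratedFDeriv ℝ m (fun y ↦ g (t, y)) x‖ ≤ C m) →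
      ContDiffOn ℝ m (fun x ↦ ∫ t in (0 : ℝ)..1, g (t, x)) S ∧
        ∀ x ∈ S, ‖iteratedFDeriv ℝ m (fun x ↦ ∫ t in (0 : ℝ)..1, g (t, x)) x‖ ≤ C m := by
  induction m with
  | zero =>
    intro W _ _ g C hg hb
    refine ⟨?_, fun x hx ↦ ?_⟩
    · exact contDiffOn_zero.2 fun x hx ↦
        (hasFDerivAt_integral_section hS hg (hb 1) hx).continuousAt.continuousWithinAt
    · rw [norm_iteratedFDeriv_zero]
      simpa using intervalIntegral.norm_integral_le_of_norm_le_const (a := (0 : ℝ)) (b := 1)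
        (f := fun t ↦ g (t, x)) (C := C 0) fun t ht ↦ by
          rw [uIoc_of_le zero_le_one] at ht
          simpa using hb 0 t (Ioc_subset_Icc_self ht) x hx
  | succ m ih =>
    intro W _ _ g C hg hb
    have hderiv : ∀ x ∈ S, HasFDerivAt (fun x ↦ ∫ t in (0 : ℝ)..1, g (t, x))
        (∫ t in (0 : ℝ)..1, fderiv ℝ g (t, x) ∘L .inr ℝ ℝ E) x := fun x hx ↦
      hasFDerivAt_integral_section hS hg (hb 1) hx
    obtain ⟨hsmooth, hbound⟩ := ih (E →L[ℝ] W) (fun p ↦ fderiv ℝ g p ∘L .inr ℝ ℝ E)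
      (fun m ↦ C (m + 1)) (fun t ht x hx ↦ contDiffAt_fderiv_comp_inr (hg t ht x hx))
      fun m t ht x hx ↦ by
        rw [norm_iteratedFDeriv_fderiv_section ((hS.eventually_mem hx).mono (hg t ht))]
        exact hb _ t ht x hx
    refine ⟨?_, fun x hx ↦ ?_⟩
    · push_cast
      rw [contDiffOn_succ_iff_fderiv_of_isOpen hS]
      exact ⟨fun x hx ↦ (hderiv x hx).differentiableAt.differentiableWithinAt, by simp,
        hsmooth.congr fun x hx ↦ (hderiv x hx).fderiv⟩
    · have heq : fderiv ℝ (fun x ↦ ∫ t in (0 : ℝ)..1, g (t, x)) =ᶠ[𝓝 x]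
          fun x ↦ ∫ t in (0 : ℝ)..1, fderiv ℝ g (t, x) ∘L .inr ℝ ℝ E := by
        filter_upwards [hS.mem_nhds hx] with y hy using (hderiv y hy).fderiv
      rw [← norm_iteratedFDeriv_fderiv, (heq.iteratedFDeriv ℝ m).eq_of_nhds]
      exact hbound x hx

end ParametricIntegral

/-- For `l v = 1`, the path `t ↦ shrink l v t x` runs from the projection of `x` to the hyperplane
`l = 0` along `v`, at `t = 0`, to `x`, at `t = 1`. -/
noncomputable def shrink (l : E →L[ℝ] ℝ) (v : E) (t : ℝ) : E →L[ℝ] E :=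
  .id ℝ E - (1 - t) • l.smulRight v

section Shrink

variable (l : E →L[ℝ] ℝ) (v : E)

lemma shrink_apply (t : ℝ) (x : E) : shrink l v t x = x - (1 - t) • (l x • v) := by simp [shrink]

lemma norm_shrink_le {t : ℝ} (ht : t ∈ Icc (0 : ℝ) 1) : ‖shrink l v t‖ ≤ 1 + ‖l‖ * ‖v‖ := by
  refine (norm_sub_le _ _).trans (add_le_add ContinuousLinearMap.norm_id_le ?_)
  rw [norm_smul, ContinuousLinearMap.norm_smulRight_apply]
  have : ‖1 - t‖ ≤ 1 := by rw [Real.norm_eq_abs, abs_le]; constructor <;> linarith [ht.1, ht.2]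
  exact mul_le_of_le_one_left (by positivity) this

lemma shrink_mem_ball {t r : ℝ} (ht : t ∈ Icc (0 : ℝ) 1) {x : E}
    (hx : x ∈ Metric.ball 0 (r / (1 + ‖l‖ * ‖v‖))) : shrink l v t x ∈ Metric.ball 0 r := by
  rw [mem_ball_zero_iff, lt_div_iff₀ (by positivity), mul_comm] at hx
  rw [mem_ball_zero_iff]
  exact ((shrink l v t).le_of_opNorm_le (norm_shrink_le l v ht) x).trans_lt hx

lemma contDiff_shrink : ContDiff ℝ ∞ fun p : ℝ × E ↦ shrink l v p.1 p.2 := by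
  simp only [shrink_apply]
  fun_prop

lemma hasDerivAt_comp_shrink {f : E → ℝ} {t : ℝ} {x : E}
    (hf : DifferentiableAt ℝ f (shrink l v t x)) :
    HasDerivAt (fun t ↦ f (shrink l v t x)) (l x * fderiv ℝ f (shrink l v t x) v) t := by
  have hpath : HasDerivAt (fun t ↦ shrink l v t x) (l x • v) t := by
    simp only [shrink_apply]
    simpa using (((hasDerivAt_id t).const_sub 1).smul_const (l x • v)).const_sub x
  have hcomp := hf.hasFDerivAt.comp_hasDerivAt t hpath
  rw [map_smul, smul_eq_mul] at hcomp
  exact hcomp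

lemma eq_mul_integral_of_eq_zero {f : E → ℝ} {x : E}
    (hf : ∀ t ∈ Icc (0 : ℝ) 1, ContDiffAt ℝ ∞ f (shrink l v t x)) (h0 : f (shrink l v 0 x) = 0) :
    f x = l x * ∫ t in (0 : ℝ)..1, fderiv ℝ f (shrink l v t x) v := by
  rw [← uIcc_of_le zero_le_one] at hf
  have hcont : ContinuousOn (fun t ↦ l x * fderiv ℝ f (shrink l v t x) v) (uIcc 0 1) := by
    intro t ht
    have hpath : Continuous fun t ↦ shrink l v t x := by simp only [shrink_apply]; fun_prop
    exact (continuousAt_const.mul ((((hf t ht).continuousAt_fderiv (by simp)).comp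
      (f := fun t ↦ shrink l v t x) hpath.continuousAt).clm_apply
        continuousAt_const)).continuousWithinAt
  have hftc := intervalIntegral.integral_eq_sub_of_hasDerivAt
    (fun t ht ↦ hasDerivAt_comp_shrink l v ((hf t ht).differentiableAt (by simp)))
    hcont.intervalIntegrable
  have h1 : shrink l v 1 x = x := by simp [shrink_apply]
  rw [h0, h1, sub_zero, intervalIntegral.integral_const_mul] at hftc
  exact hftc.symm

end Shrink

theorem IsGerm.exists_eq_linear_mul {M : ℕ → ℝ} (hM : IsWeight M) {f : E → ℝ} (hf : IsGerm M f)
    (l : E →L[ℝ] ℝ) (v : E) (hlv : l v = 1) (h0 : ∀ᶠ x in 𝓝 0, l x = 0 → f x = 0) :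
    ∃ g : E → ℝ, IsGerm M g ∧ ∀ᶠ x in 𝓝 0, f x = l x * g x := by
  obtain ⟨A, B, hA, hB, hf'⟩ := (hf.fderiv hM).clm_comp hM (.apply ℝ ℝ v)
  obtain ⟨r, hr, hball⟩ :=
    Metric.eventually_nhds_iff_ball.1 ((hf'.and hf.eventually_contDiffAt).and h0)
  set K := 1 + ‖l‖ * ‖v‖
  have hshrink : ∀ t ∈ Icc (0 : ℝ) 1, ∀ x ∈ Metric.ball (0 : E) (r / K),
    shrink l v t x ∈ Metric.ball 0 r := fun t ht x hx ↦ shrink_mem_ball l v ht hx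
  let g : ℝ × E → ℝ := fun p ↦ fderiv ℝ f (shrink l v p.1 p.2) v
  have hsmooth : ∀ t ∈ Icc (0 : ℝ) 1, ∀ x ∈ Metric.ball (0 : E) (r / K),
      ContDiffAt ℝ ∞ g (t, x) := fun t ht x hx ↦
    ContDiffAt.comp (t, x) (f := fun p : ℝ × E ↦ shrink l v p.1 p.2)
      (hball _ (hshrink t ht x hx)).1.1.1 (contDiff_shrink l v).contDiffAt
  have hbound : ∀ m, ∀ t ∈ Icc (0 : ℝ) 1, ∀ x ∈ Metric.ball (0 : E) (r / K),
      ‖iteratedFDeriv ℝ m (fun y ↦ g (t, y)) x‖ ≤ A * (B * K) ^ m * (m ! * M m) := by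
    intro m t ht x hx
    have hfx := (hball _ (hshrink t ht x hx)).1.1
    have := (hM.pos m).le
    calc ‖iteratedFDeriv ℝ m (fun y ↦ g (t, y)) x‖
        ≤ ‖iteratedFDeriv ℝ m (fun x ↦ fderiv ℝ f x v) (shrink l v t x)‖ * ‖shrink l v t‖ ^ m :=
          norm_iteratedFDeriv_comp_clm_le (shrink l v t) hfx.1 m
      _ ≤ A * B ^ m * (m ! * M m) * K ^ m := by
          gcongr; exacts [hfx.2 m, norm_shrink_le l v ht]
      _ = A * (B * K) ^ m * (m ! * M m) := by rw [mul_pow]; ring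
  have hint := fun m ↦ contDiffOn_and_norm_iteratedFDeriv_integral_le Metric.isOpen_ball m ℝ g _
    hsmooth hbound
  have hmem : Metric.ball (0 : E) (r / K) ∈ 𝓝 0 := Metric.ball_mem_nhds _ (by positivity)
  refine ⟨fun x ↦ ∫ t in (0 : ℝ)..1, g (t, x), ⟨A, B * K, hA, by positivity, ?_⟩, ?_⟩
  · filter_upwards [hmem] with x hx
    exact ⟨(contDiffOn_infty.2 fun m ↦ (hint m).1).contDiffAt (Metric.isOpen_ball.mem_nhds hx),
      fun m ↦ (hint m).2 x hx⟩
  · filter_upwards [hmem] with x hx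
    exact eq_mul_integral_of_eq_zero l v (fun t ht ↦ (hball _ (hshrink t ht x hx)).1.2)
      ((hball _ (hshrink 0 (by simp) x hx)).2 (by simp [shrink_apply, hlv]))

end Division

section Quasianalyticity

/-- `H 0` is smooth on `[0, 1]` with successive derivatives `H 1, H 2, …`, bounded by
`N 0, N 1, …`. -/
structure IsBoundedDerivSeq (N : ℕ → ℝ) (H : ℕ → ℝ → ℝ) : Prop where
  hasDerivAt : ∀ k, ∀ t ∈ Icc (0 : ℝ) 1, HasDerivAt (H k) (H (k + 1) t) t
  abs_le : ∀ k, ∀ t ∈ Icc (0 : ℝ) 1, |H k t| ≤ N k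

section Bang

variable {N : ℕ → ℝ} {H : ℕ → ℝ → ℝ}

lemma abs_le_mul_exp_of_abs_deriv_le {h h' : ℝ → ℝ} {a L x y : ℝ}
    (hh : ∀ z ∈ Icc x y, HasDerivAt h (h' z) z) (hx : |h x| ≤ a)
    (hh' : ∀ z ∈ Icc x y, |h' z| ≤ a * (Real.exp (L * (z - x)) * L)) :
    ∀ z ∈ Icc x y, |h z| ≤ a * Real.exp (L * (z - x)) := by
  have hexp : ∀ z, HasDerivAt (fun z ↦ a * Real.exp (L * (z - x)))
      (a * (Real.exp (L * (z - x)) * L)) z := fun z ↦ by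
    have hlin : HasDerivAt (fun z ↦ L * (z - x)) L z := by
      simpa using ((hasDerivAt_id z).sub_const x).const_mul L
    exact hlin.exp.const_mul a
  intro z hz
  exact image_norm_le_of_norm_deriv_right_le_deriv_boundary
    (fun z hz ↦ (hh z hz).continuousAt.continuousWithinAt)
    (fun z hz ↦ (hh z (Ico_subset_Icc_self hz)).hasDerivWithinAt) (by simpa using hx) hexp
    (fun z hz ↦ hh' z (Ico_subset_Icc_self hz)) hz

lemma exp_natCast_add_one_sub (k : ℕ) (a : ℝ) :
    Real.exp ((k + 1 : ℕ) - a) = Real.exp (k - a) * Real.exp 1 := by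
  rw [← Real.exp_add]; congr 1; push_cast; ring

lemma abs_le_mul_exp_of_bang (hN : ∀ k, 0 < N k)
    (hlog : Monotone fun k ↦ N (k + 1) / N k) (hH : IsBoundedDerivSeq N H) (n : ℕ) {x y : ℝ}
    (hx : 0 ≤ x) (hy : y ≤ 1) (hP : ∀ k, |H k x| ≤ Real.exp (k - (n + 1 : ℕ)) * N k)
    {i : ℕ} (hi : i ≤ n + 1) :
    ∀ z ∈ Icc x y, |H i z| ≤ Real.exp (i - (n + 1 : ℕ)) * N i *
      Real.exp (Real.exp 1 * (N (n + 1) / N n) * (z - x)) := by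
  have hsub : Icc x y ⊆ Icc 0 1 := Icc_subset_Icc hx hy
  set L := Real.exp 1 * (N (n + 1) / N n) with hL
  have hL0 : 0 ≤ L := by have := (hN n).le; have := (hN (n + 1)).le; positivity
  induction hi using Nat.decreasingInduction with
  | self =>
    intro z hz
    have hexp : 1 ≤ Real.exp (L * (z - x)) := Real.one_le_exp (mul_nonneg hL0 (by linarith [hz.1]))
    rw [sub_self, Real.exp_zero, one_mul]
    exact (hH.abs_le _ z (hsub hz)).trans (le_mul_of_one_le_right (hN _).le hexp)
  | of_succ i hi ih =>
    refine abs_le_mul_exp_of_abs_deriv_le (fun z hz ↦ hH.hasDerivAt i z (hsub hz)) (hP i)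
      fun z hz ↦ (ih z hz).trans ?_
    have hratio : N (i + 1) ≤ N (n + 1) / N n * N i :=
      (div_le_iff₀ (hN i)).1 (hlog (Nat.lt_succ_iff.1 hi))
    calc Real.exp ((i + 1 : ℕ) - (n + 1 : ℕ)) * N (i + 1) * Real.exp (L * (z - x))
        = Real.exp (i - (n + 1 : ℕ)) * Real.exp 1 * N (i + 1) * Real.exp (L * (z - x)) := by
          rw [exp_natCast_add_one_sub]
      _ ≤ Real.exp (i - (n + 1 : ℕ)) * Real.exp 1 * (N (n + 1) / N n * N i) *
            Real.exp (L * (z - x)) := by gcongr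
      _ = Real.exp (i - (n + 1 : ℕ)) * N i * (Real.exp (L * (z - x)) * L) := by rw [hL]; ring

lemma bang_step (hN : ∀ k, 0 < N k) (hlog : Monotone fun k ↦ N (k + 1) / N k)
    (hH : IsBoundedDerivSeq N H) (n : ℕ) {x y : ℝ} (hx : 0 ≤ x) (hxy : x ≤ y) (hy : y ≤ 1)
    (hd : y - x ≤ N n / (Real.exp 1 * N (n + 1)))
    (hP : ∀ k, |H k x| ≤ Real.exp (k - (n + 1 : ℕ)) * N k) (k : ℕ) :
    |H k y| ≤ Real.exp (k - n) * N k := by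
  have hshift : Real.exp ((k : ℝ) - n) = Real.exp (k - (n + 1 : ℕ)) * Real.exp 1 := by
    rw [← Real.exp_add]; congr 1; push_cast; ring
  have hNk := (hN k).le
  rcases le_total k (n + 1) with hk | hk
  · have hstep : Real.exp 1 * (N (n + 1) / N n) * (y - x) ≤ 1 := by
      have hpos := hN n
      have hpos' := hN (n + 1)
      rw [le_div_iff₀ (by positivity)] at hd
      rw [mul_div_assoc', div_mul_eq_mul_div, div_le_one hpos]
      linarith
    calc |H k y|
        ≤ Real.exp (k - (n + 1 : ℕ)) * N k *
          Real.exp (Real.exp 1 * (N (n + 1) / N n) * (y - x)) :=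
          abs_le_mul_exp_of_bang hN hlog hH n hx hy hP hk y ⟨hxy, le_rfl⟩
      _ ≤ Real.exp (k - (n + 1 : ℕ)) * N k * Real.exp 1 := by gcongr
      _ = Real.exp (k - n) * N k := by rw [hshift]; ring
  · have hkn : (n : ℝ) ≤ k := mod_cast (by lia : n ≤ k)
    exact (hH.abs_le k y ⟨hx.trans hxy, hy⟩).trans
      (le_mul_of_one_le_left hNk (Real.one_le_exp (by linarith)))

lemma bang_iterate (hN : ∀ k, 0 < N k) (hlog : Monotone fun k ↦ N (k + 1) / N k)
    (hH : IsBoundedDerivSeq N H) {x : ℝ} (hx : 0 ≤ x) (j : ℕ) :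
    ∀ (m : ℕ) (y : ℝ), x ≤ y → y ≤ 1 →
      y - x ≤ ∑ i ∈ Finset.range j, N (m + i) / (Real.exp 1 * N (m + i + 1)) →
      (∀ k, |H k x| ≤ Real.exp (k - (m + j : ℕ)) * N k) →
      ∀ k, |H k y| ≤ Real.exp (k - m) * N k := by
  have hc : ∀ n, 0 ≤ N n / (Real.exp 1 * N (n + 1)) := fun n ↦
    (div_pos (hN _) (mul_pos (Real.exp_pos _) (hN _))).le
  induction j with
  | zero =>
    intro m y hxy _ hd hP k
    obtain rfl : y = x := le_antisymm (by simpa using hd) hxy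
    simpa using hP k
  | succ j ih =>
    intro m y hxy hy hd hP k
    set c := N m / (Real.exp 1 * N (m + 1)) with hcm
    have hle : max x (y - c) ≤ y := max_le hxy (by linarith [hc m])
    have hrest : max x (y - c) - x ≤
        ∑ i ∈ Finset.range j, N (m + 1 + i) / (Real.exp 1 * N (m + 1 + i + 1)) := by
      rw [Finset.sum_range_succ', add_zero, ← hcm, Finset.sum_congr rfl fun i _ ↦ by
        rw [show m + (i + 1) = m + 1 + i by lia]] at hd
      rw [sub_le_iff_le_add]
      refine max_le ?_ (by linarith)
      linarith [Finset.sum_nonneg fun i (_ : i ∈ Finset.range j) ↦ hc (m + 1 + i)]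
    refine bang_step hN hlog hH m (hx.trans (le_max_left _ _)) hle hy
      (by linarith [le_max_right x (y - c)])
      (ih (m + 1) _ (le_max_left _ _) (hle.trans hy) hrest fun k ↦ ?_) k
    simpa only [show m + 1 + j = m + (j + 1) by lia] using hP k

/-- Bang's argument: the bound `|H k| ≤ exp (k - m) * N k` holds at `0` for every `m`, and lowering
`m` by one lets it spread over an interval of length `N m / (e * N (m + 1))`. As these lengths have
infinite sum, it reaches all of `[0, 1]` for every `m`. -/
theorem eq_zero_of_bang (hN : ∀ k, 0 < N k) (hlog : Monotone fun k ↦ N (k + 1) / N k)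
    (hdiv : ¬ Summable fun k ↦ N k / N (k + 1)) (hH : IsBoundedDerivSeq N H)
    (h0 : ∀ k, H k 0 = 0) : ∀ t ∈ Icc (0 : ℝ) 1, H 0 t = 0 := by
  let c : ℕ → ℝ := fun n ↦ N n / (Real.exp 1 * N (n + 1))
  have hc : ∀ n, 0 ≤ c n := fun n ↦ (div_pos (hN _) (mul_pos (Real.exp_pos _) (hN _))).le
  have hcdiv : ¬ Summable c := fun h ↦ hdiv <| (h.mul_left (Real.exp 1)).congr fun n ↦ by
    have := (hN (n + 1)).ne'
    simp only [c]
    field_simp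
  intro t ht
  have hsmall : ∀ m : ℕ, |H 0 t| ≤ Real.exp (-(m : ℝ)) * N 0 := by
    intro m
    have htail : ¬ Summable fun i ↦ c (m + i) := by
      simpa only [add_comm] using (summable_nat_add_iff (f := c) m).not.2 hcdiv
    obtain ⟨j, hj⟩ := (((not_summable_iff_tendsto_nat_atTop_of_nonneg fun i ↦ hc (m + i)).1
      htail).eventually_ge_atTop t).exists
    simpa using bang_iterate hN hlog hH le_rfl j m t ht.1 ht.2 (by simpa using hj)
      (fun k ↦ by rw [h0, abs_zero]; exact mul_nonneg (Real.exp_pos _).le (hN k).le) 0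
  have hlim : Tendsto (fun m : ℕ ↦ Real.exp (-(m : ℝ)) * N 0) atTop (𝓝 0) := by
    simpa using (Real.tendsto_exp_neg_atTop_nhds_zero.comp
      tendsto_natCast_atTop_atTop).mul_const (N 0)
  exact abs_nonpos_iff.1 (ge_of_tendsto' hlim hsmall)

end Bang

/-- A weight satisfying in addition the hypotheses of the Denjoy-Carleman theorem, which makes the
class quasianalytic. -/
structure IsQuasianalyticWeight (M : ℕ → ℝ) : Prop extends IsWeight M where
  log_convex : ∀ j, M (j + 1) / M j ≤ M (j + 2) / M (j + 1)
  not_summable : ¬ Summable fun k : ℕ ↦ M k / ((k + 1) * M (k + 1))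

section Ray

variable {M : ℕ → ℝ} {E : Type} [NormedAddCommGroup E] [NormedSpace ℝ E]

lemma hasDerivAt_iteratedFDeriv_line {f : E → ℝ} {p w : E} {t : ℝ} (k : ℕ)
    (hf : ContDiffAt ℝ ∞ f (p + t • w)) :
    HasDerivAt (fun t ↦ iteratedFDeriv ℝ k f (p + t • w) fun _ ↦ w)
      (iteratedFDeriv ℝ (k + 1) f (p + t • w) fun _ ↦ w) t := by
  have hdiff : DifferentiableAt ℝ (iteratedFDeriv ℝ k f) (p + t • w) :=
    hf.differentiableAt_iteratedFDeriv (mod_cast WithTop.coe_lt_top _)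
  have hline : HasDerivAt (fun t ↦ p + t • w) w t := by
    simpa using ((hasDerivAt_id t).smul_const w).const_add p
  rw [iteratedFDeriv_succ_apply_left]
  exact (ContinuousMultilinearMap.apply ℝ (fun _ : Fin k ↦ E) ℝ
    fun _ ↦ w).hasFDerivAt.comp_hasDerivAt t (hdiff.hasFDerivAt.comp_hasDerivAt t hline)

lemma HasDerivBounds.abs_iteratedFDeriv_apply_le (hM : IsWeight M) {A B : ℝ} (hA : 0 ≤ A)
    (hB : 0 ≤ B) {f : E → ℝ} {x : E} (hf : HasDerivBounds M 0 A B f x) (w : E) (k : ℕ) :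
    |iteratedFDeriv ℝ k f x fun _ ↦ w| ≤ A * (B * (‖w‖ + 1)) ^ k * (k ! * M k) := by
  have hop := (iteratedFDeriv ℝ k f x).le_opNorm fun _ ↦ w
  simp only [Finset.prod_const, Finset.card_univ, Fintype.card_fin] at hop
  have := (hM.pos k).le
  calc |iteratedFDeriv ℝ k f x fun _ ↦ w| ≤ ‖iteratedFDeriv ℝ k f x‖ * ‖w‖ ^ k := hop
    _ ≤ A * B ^ k * (k ! * M k) * (‖w‖ + 1) ^ k := by gcongr; exacts [hf.2 k, by linarith]
    _ = A * (B * (‖w‖ + 1)) ^ k * (k ! * M k) := by rw [mul_pow]; ring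

lemma scaledWeight_ratio (hM : IsWeight M) {A B : ℝ} (hA : 0 < A) (hB : 0 < B) (k : ℕ) :
    A * B ^ (k + 1) * ((k + 1)! * M (k + 1)) / (A * B ^ k * (k ! * M k)) =
      B * ((k + 1) * (M (k + 1) / M k)) := by
  have := (hM.pos k).ne'
  have : (k ! : ℝ) ≠ 0 := by positivity
  rw [Nat.factorial_succ, pow_succ]
  push_cast
  field_simp

lemma IsQuasianalyticWeight.monotone_scaledWeight_ratio (hM : IsQuasianalyticWeight M) {A B : ℝ}
    (hA : 0 < A) (hB : 0 < B) :
    Monotone fun k ↦ A * B ^ (k + 1) * ((k + 1)! * M (k + 1)) / (A * B ^ k * (k ! * M k)) := by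
  refine monotone_nat_of_le_succ fun k ↦ ?_
  rw [scaledWeight_ratio hM.toIsWeight hA hB, scaledWeight_ratio hM.toIsWeight hA hB]
  have := hM.pos k
  have := hM.pos (k + 1)
  have := hM.log_convex k
  push_cast
  gcongr
  linarith

lemma IsQuasianalyticWeight.not_summable_scaledWeight_ratio (hM : IsQuasianalyticWeight M)
    {A B : ℝ} (hA : 0 < A) (hB : 0 < B) :
    ¬ Summable fun k ↦ A * B ^ k * (k ! * M k) / (A * B ^ (k + 1) * ((k + 1)! * M (k + 1))) := by
  refine fun hs ↦ hM.not_summable <| (hs.mul_left B).congr fun k ↦ ?_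
  have := hM.pos k
  have := hM.pos (k + 1)
  rw [← inv_div, scaledWeight_ratio hM.toIsWeight hA hB]
  field_simp

lemma IsGerm.exists_ball_eq_zero_of_iteratedFDeriv (hM : IsQuasianalyticWeight M) {f : E → ℝ}
    (hf : IsGerm M f) : ∃ r > 0, (∀ x ∈ Metric.ball (0 : E) r, ContDiffAt ℝ ∞ f x) ∧
      ∀ p ∈ Metric.ball (0 : E) r, ∀ x ∈ Metric.ball (0 : E) r,
        (∀ k, (iteratedFDeriv ℝ k f p fun _ ↦ x - p) = 0) → f x = 0 := by
  obtain ⟨A, B, hA, hB, hf⟩ := hf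
  obtain ⟨r, hr, hball⟩ := Metric.eventually_nhds_iff_ball.1 hf
  refine ⟨r, hr, fun x hx ↦ (hball x hx).1, fun p hp x hx h0 ↦ ?_⟩
  have hseg : ∀ t ∈ Icc (0 : ℝ) 1, p + t • (x - p) ∈ Metric.ball (0 : E) r := fun t ht ↦
    (convex_ball (0 : E) r).add_smul_sub_mem hp hx ht
  have hB' : 0 < B * (‖x - p‖ + 1) := by positivity
  have hH : IsBoundedDerivSeq (fun k ↦ A * (B * (‖x - p‖ + 1)) ^ k * (k ! * M k))
      fun k t ↦ iteratedFDeriv ℝ k f (p + t • (x - p)) fun _ ↦ x - p :=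
    ⟨fun k t ht ↦ hasDerivAt_iteratedFDeriv_line k (hball _ (hseg t ht)).1,
      fun k t ht ↦ (hball _ (hseg t ht)).abs_iteratedFDeriv_apply_le hM.toIsWeight hA.le hB.le _ k⟩
  have hzero := eq_zero_of_bang (fun k ↦ by have := hM.pos k; positivity)
    (hM.monotone_scaledWeight_ratio hA hB') (hM.not_summable_scaledWeight_ratio hA hB') hH
    (fun k ↦ by simpa using h0 k) 1 (by simp)
  simpa using hzero

end Ray

end Quasianalyticity

section DirectionalDerivative

variable {M : ℕ → ℝ} {E F : Type} [NormedAddCommGroup E] [NormedSpace ℝ E]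
  [NormedAddCommGroup F] [NormedSpace ℝ F]

/-- The derivative of `f` in the direction `v`, as an operator on functions, for iteration. -/
noncomputable def dirDeriv (v : E) (f : E → ℝ) : E → ℝ := fun x ↦ fderiv ℝ f x v

lemma dirDeriv_iterate_eq {f : E → ℝ} (v : E) {S : Set E} (hS : IsOpen S)
    (hf : ∀ x ∈ S, ContDiffAt ℝ ∞ f x) (k : ℕ) :
    ∀ x ∈ S, (dirDeriv v)^[k] f x = iteratedFDeriv ℝ k f x fun _ ↦ v := by
  induction k with
  | zero => intro x _; simp
  | succ k ih =>
    intro x hx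
    have heq : (dirDeriv v)^[k] f =ᶠ[𝓝 x] fun x ↦ iteratedFDeriv ℝ k f x fun _ ↦ v := by
      filter_upwards [hS.mem_nhds hx] with y hy using ih y hy
    have hdiff : DifferentiableAt ℝ (iteratedFDeriv ℝ k f) x :=
      (hf x hx).differentiableAt_iteratedFDeriv (mod_cast WithTop.coe_lt_top _)
    have happly : HasFDerivAt (fun x ↦ iteratedFDeriv ℝ k f x fun _ ↦ v) _ x :=
      (ContinuousMultilinearMap.apply ℝ (fun _ : Fin k ↦ E) ℝ fun _ ↦ v).hasFDerivAt.comp x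
        hdiff.hasFDerivAt
    rw [Function.iterate_succ_apply', dirDeriv, heq.fderiv_eq, iteratedFDeriv_succ_apply_left,
      happly.fderiv]
    rfl

lemma dirDeriv_congr {f g : E → ℝ} {x : E} (h : f =ᶠ[𝓝 x] g) (v : E) :
    dirDeriv v f =ᶠ[𝓝 x] dirDeriv v g := by
  filter_upwards [h.fderiv (𝕜 := ℝ)] with y hy
  simp only [dirDeriv, hy]

lemma dirDeriv_iterate_congr {f g : E → ℝ} {x : E} (h : f =ᶠ[𝓝 x] g) (v : E) (k : ℕ) :
    (dirDeriv v)^[k] f =ᶠ[𝓝 x] (dirDeriv v)^[k] g := by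
  induction k with
  | zero => exact h
  | succ k ih => simpa only [Function.iterate_succ_apply'] using dirDeriv_congr ih v

namespace IsGerm

protected lemma dirDeriv (hM : IsWeight M) {f : E → ℝ} (hf : IsGerm M f) (v : E) :
    IsGerm M (dirDeriv v f) :=
  (hf.fderiv hM).clm_comp hM (.apply ℝ ℝ v)

lemma dirDeriv_iterate (hM : IsWeight M) {f : E → ℝ} (hf : IsGerm M f) (v : E) (k : ℕ) :
    IsGerm M ((dirDeriv v)^[k] f) := by
  induction k with
  | zero => exact hf
  | succ k ih => simpa only [Function.iterate_succ_apply'] using ih.dirDeriv hM v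

lemma dirDeriv_iterate_comp_clm (hM : IsWeight M) {f : E → ℝ} (hf : IsGerm M f) (L : F →L[ℝ] E)
    (v : F) (k : ℕ) :
    ∀ᶠ x in 𝓝 0, (dirDeriv v)^[k] (fun x ↦ f (L x)) x = (dirDeriv (L v))^[k] f (L x) := by
  induction k with
  | zero => simp
  | succ k ih =>
    have hL : Tendsto L (𝓝 0) (𝓝 0) := by simpa only [map_zero] using L.continuous.tendsto 0
    simp only [Function.iterate_succ_apply']
    filter_upwards [dirDeriv_congr ih v,
      hL.eventually (hf.dirDeriv_iterate hM (L v) k).eventually_contDiffAt] with x hx hsmooth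
    have hchain : HasFDerivAt (fun x ↦ (dirDeriv (L v))^[k] f (L x)) _ x :=
      (hsmooth.differentiableAt (by simp)).hasFDerivAt.comp x L.hasFDerivAt
    rw [hx, dirDeriv, hchain.fderiv]
    rfl

lemma exists_ball_eq_zero (hM : IsQuasianalyticWeight M) {f : E → ℝ} (hf : IsGerm M f) :
    ∃ r > 0, ∀ p ∈ Metric.ball (0 : E) r, f =ᶠ[𝓝 p] 0 → ∀ x ∈ Metric.ball (0 : E) r, f x = 0 := by
  obtain ⟨r, hr, _, hzero⟩ := hf.exists_ball_eq_zero_of_iteratedFDeriv hM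
  refine ⟨r, hr, fun p hp hfp x hx ↦ hzero p hp x hx fun k ↦ ?_⟩
  rw [(hfp.iteratedFDeriv ℝ k).eq_of_nhds]
  simp

lemma eventually_eq_zero_or_eq_zero (hM : IsQuasianalyticWeight M) {f g : E → ℝ} (hf : IsGerm M f)
    (hg : IsGerm M g) (h : ∀ᶠ x in 𝓝 0, f x * g x = 0) :
    (∀ᶠ x in 𝓝 0, f x = 0) ∨ ∀ᶠ x in 𝓝 0, g x = 0 := by
  obtain ⟨r, hr, hg⟩ := hg.exists_ball_eq_zero hM
  obtain ⟨s, hs, h⟩ := Metric.eventually_nhds_iff_ball.1 (h.and hf.eventually_contDiffAt)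
  by_cases hz : ∀ x ∈ Metric.ball (0 : E) (min r s), f x = 0
  · exact .inl (Metric.eventually_nhds_iff_ball.2 ⟨min r s, lt_min hr hs, hz⟩)
  · push Not at hz
    obtain ⟨p, hp, hfp⟩ := hz
    have hps : p ∈ Metric.ball (0 : E) s := Metric.ball_subset_ball (min_le_right _ _) hp
    refine .inr (Metric.eventually_nhds_iff_ball.2 ⟨r, hr, hg p
      (Metric.ball_subset_ball (min_le_left _ _) hp) ?_⟩)
    filter_upwards [(h p hps).2.continuousAt.eventually_ne hfp, Metric.isOpen_ball.mem_nhds hps]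
      with y hy hys
    exact (mul_eq_zero.1 (h y hys).1).resolve_left hy

lemma exists_dirDeriv_iterate_ne_zero (hM : IsQuasianalyticWeight M) {f : E → ℝ}
    (hf : IsGerm M f) (h : ¬ ∀ᶠ x in 𝓝 0, f x = 0) :
    ∃ (v : E) (d : ℕ), (dirDeriv v)^[d] f 0 ≠ 0 := by
  obtain ⟨r, hr, hsmooth, hzero⟩ := hf.exists_ball_eq_zero_of_iteratedFDeriv hM
  contrapose! h
  refine Metric.eventually_nhds_iff_ball.2 ⟨r, hr, fun x hx ↦
    hzero 0 (Metric.mem_ball_self hr) x hx fun k ↦ ?_⟩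
  rw [← dirDeriv_iterate_eq _ Metric.isOpen_ball hsmooth k 0 (Metric.mem_ball_self hr)]
  exact h _ k

end IsGerm

end DirectionalDerivative

section VerticalTaylor

lemma tendsto_prodMk_zero {E : Type} [NormedAddCommGroup E] :
    Tendsto (fun x : E ↦ (x, (0 : ℝ))) (𝓝 0) (𝓝 0) :=
  Continuous.tendsto' (by fun_prop) _ _ rfl

lemma tendsto_fst_zero {E : Type} [NormedAddCommGroup E] :
    Tendsto (fun p : E × ℝ ↦ p.1) (𝓝 0) (𝓝 0) :=
  Continuous.tendsto' (by fun_prop) _ _ rfl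

variable {M : ℕ → ℝ} {E : Type} [NormedAddCommGroup E] [NormedSpace ℝ E]

namespace IsGerm

lemma comp_fst (hM : IsWeight M) {f : E → ℝ} (hf : IsGerm M f) :
    IsGerm M (fun p : E × ℝ ↦ f p.1) :=
  hf.comp_clm hM (.fst ℝ E ℝ)

lemma comp_prodMk_zero (hM : IsWeight M) {f : E × ℝ → ℝ} (hf : IsGerm M f) :
    IsGerm M (fun x : E ↦ f (x, 0)) :=
  hf.comp_clm hM (.inl ℝ E ℝ)

protected lemma snd (hM : IsWeight M) : IsGerm M (fun p : E × ℝ ↦ p.2) :=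
  IsGerm.clm hM (.snd ℝ E ℝ)

lemma prodMap_id (hM : IsWeight M) {F : Type} [NormedAddCommGroup F] [NormedSpace ℝ F] {f : E → F}
    (hf : IsGerm M f) : IsGerm M (fun p : E × ℝ ↦ (f p.1, p.2)) :=
  (hf.comp_clm hM (.fst ℝ E ℝ)).prodMk hM (.snd hM)

lemma exists_eq_add_snd_mul (hM : IsWeight M) {u : E × ℝ → ℝ} (hu : IsGerm M u) :
    ∃ w : E × ℝ → ℝ, IsGerm M w ∧ ∀ᶠ p in 𝓝 0, u p = u (p.1, 0) + p.2 * w p := by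
  obtain ⟨w, hw, huw⟩ := (hu.sub hM ((hu.comp_prodMk_zero hM).comp_fst hM)).exists_eq_linear_mul hM
    (.snd ℝ E ℝ) (0, 1) rfl (.of_forall <| by rintro ⟨x, y⟩ (rfl : y = 0); simp)
  exact ⟨w, hw, huw.mono fun p hp ↦ sub_eq_iff_eq_add'.1 hp⟩

lemma exists_taylor (hM : IsWeight M) {g : E × ℝ → ℝ} (hg : IsGerm M g) (k : ℕ) :
    ∃ (c : ℕ → E → ℝ) (u : E × ℝ → ℝ), (∀ i, IsGerm M (c i)) ∧ IsGerm M u ∧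
      ∀ᶠ p in 𝓝 0, g p = ∑ i ∈ Finset.range k, c i p.1 * p.2 ^ i + p.2 ^ k * u p := by
  induction k with
  | zero => exact ⟨fun _ _ ↦ 0, g, fun _ ↦ .const hM 0, hg, by simp⟩
  | succ k ih =>
    obtain ⟨c, u, hc, hu, hgu⟩ := ih
    obtain ⟨w, hw, huw⟩ := hu.exists_eq_add_snd_mul hM
    refine ⟨Function.update c k fun x ↦ u (x, 0), w, fun i ↦ ?_, hw, ?_⟩
    · rcases eq_or_ne i k with rfl | hi
      · simpa using hu.comp_prodMk_zero hM
      · simpa [hi] using hc i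
    · filter_upwards [hgu, huw] with p hgp hup
      have hsum : ∑ i ∈ Finset.range k, Function.update c k (fun x ↦ u (x, 0)) i p.1 * p.2 ^ i =
          ∑ i ∈ Finset.range k, c i p.1 * p.2 ^ i :=
        Finset.sum_congr rfl fun i hi ↦ by
          rw [Function.update_of_ne (Finset.mem_range.1 hi).ne]
      rw [hgp, Finset.sum_range_succ, hsum, Function.update_self, hup]
      ring

end IsGerm

/-- The derivative in the last variable. -/
noncomputable abbrev vertDeriv (f : E × ℝ → ℝ) : E × ℝ → ℝ := dirDeriv ((0 : E), (1 : ℝ)) f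

lemma vertDeriv_comp_fst {c : E → ℝ} {p : E × ℝ} (hc : DifferentiableAt ℝ c p.1) :
    vertDeriv (fun p ↦ c p.1) p = 0 := by
  have h : HasFDerivAt (fun p : E × ℝ ↦ c p.1) _ p := hc.hasFDerivAt.comp p hasFDerivAt_fst
  simp [vertDeriv, dirDeriv, h.fderiv]

lemma vertDeriv_add {a b : E × ℝ → ℝ} {p : E × ℝ} (ha : DifferentiableAt ℝ a p)
    (hb : DifferentiableAt ℝ b p) :
    vertDeriv (fun p ↦ a p + b p) p = vertDeriv a p + vertDeriv b p := by
  simp [vertDeriv, dirDeriv, fderiv_fun_add ha hb]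

lemma vertDeriv_const_mul {a : E × ℝ → ℝ} {p : E × ℝ} (ha : DifferentiableAt ℝ a p) (c : ℝ) :
    vertDeriv (fun p ↦ c * a p) p = c * vertDeriv a p := by
  simp [vertDeriv, dirDeriv, fderiv_const_mul ha]

lemma vertDeriv_snd_mul {a : E × ℝ → ℝ} {p : E × ℝ} (ha : DifferentiableAt ℝ a p) :
    vertDeriv (fun p ↦ p.2 * a p) p = p.2 * vertDeriv a p + a p := by
  simp [vertDeriv, dirDeriv, fderiv_fun_mul differentiableAt_snd ha, fderiv_snd]

namespace IsGerm

lemma vertDeriv_iterate_succ_snd_mul (hM : IsWeight M) {g : E × ℝ → ℝ} (hg : IsGerm M g) (i : ℕ) :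
    ∀ᶠ p in 𝓝 0, vertDeriv^[i + 1] (fun p ↦ p.2 * g p) p =
      p.2 * vertDeriv^[i + 1] g p + (i + 1) * vertDeriv^[i] g p := by
  induction i with
  | zero =>
    filter_upwards [hg.eventually_contDiffAt] with p hp
    simpa using vertDeriv_snd_mul (hp.differentiableAt (by simp))
  | succ i ih =>
    have hgerm (j : ℕ) := hg.dirDeriv_iterate hM ((0 : E), (1 : ℝ)) j
    filter_upwards [dirDeriv_congr ih (0, 1), (hgerm i).eventually_contDiffAt,
      (hgerm (i + 1)).eventually_contDiffAt,
      ((IsGerm.snd hM).mul hM (hgerm (i + 1))).eventually_contDiffAt]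
      with p hp hi hi' hsnd
    rw [Function.iterate_succ_apply']
    refine hp.trans ?_
    have hi := hi.differentiableAt (by simp)
    have hi' := hi'.differentiableAt (by simp)
    refine (vertDeriv_add (hsnd.differentiableAt (by simp)) (hi.const_mul _)).trans ?_
    rw [vertDeriv_snd_mul hi', vertDeriv_const_mul hi, ← Function.iterate_succ_apply' vertDeriv,
      ← Function.iterate_succ_apply' vertDeriv]
    push_cast
    ring

lemma vertDeriv_iterate_succ_comp_fst_add (hM : IsWeight M) {c : E → ℝ} {g : E × ℝ → ℝ}
    (hc : IsGerm M c) (hg : IsGerm M g) (i : ℕ) :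
    vertDeriv^[i + 1] (fun p ↦ c p.1 + g p) =ᶠ[𝓝 0] vertDeriv^[i + 1] g := by
  simp only [Function.iterate_succ_apply]
  refine dirDeriv_iterate_congr ?_ _ i
  filter_upwards [hg.eventually_contDiffAt, tendsto_fst_zero.eventually hc.eventually_contDiffAt,
    (hc.comp_fst hM).eventually_contDiffAt] with p hgp hcp hcp'
  rw [vertDeriv_add (hcp'.differentiableAt (by simp)) (hgp.differentiableAt (by simp)),
    vertDeriv_comp_fst (hcp.differentiableAt (by simp)), zero_add]

end IsGerm

lemma eventually_vertDeriv_iterate_taylor (hM : IsWeight M) (k : ℕ) :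
    ∀ {g : E × ℝ → ℝ} {c : ℕ → E → ℝ} {u : E × ℝ → ℝ}, (∀ i, IsGerm M (c i)) → IsGerm M u →
      (∀ᶠ p in 𝓝 0, g p = ∑ i ∈ Finset.range k, c i p.1 * p.2 ^ i + p.2 ^ k * u p) →
      ∀ᶠ x in 𝓝 0, (∀ i < k, vertDeriv^[i] g (x, 0) = i ! * c i x) ∧
        vertDeriv^[k] g (x, 0) = k ! * u (x, 0) := by
  induction k with
  | zero =>
    intro g c u _ _ h
    filter_upwards [tendsto_prodMk_zero.eventually h] with x hx
    simpa using hx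
  | succ k ih =>
    intro g c u hc hu h
    let g₁ : E × ℝ → ℝ := fun p ↦ ∑ i ∈ Finset.range k, c (i + 1) p.1 * p.2 ^ i + p.2 ^ k * u p
    have hg₁ : IsGerm M g₁ :=
      (IsGerm.sum hM _ fun i _ ↦ ((hc _).comp_fst hM).mul hM ((IsGerm.snd hM).pow hM i)).add hM
        (((IsGerm.snd hM).pow hM k).mul hM hu)
    have hg : g =ᶠ[𝓝 0] fun p ↦ c 0 p.1 + p.2 * g₁ p := by
      filter_upwards [h] with p hp
      rw [hp, Finset.sum_range_succ', mul_add, Finset.mul_sum]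
      simp only [pow_succ', mul_left_comm p.2, mul_assoc, pow_zero, mul_one]
      ring
    have hderiv : ∀ᶠ x in 𝓝 (0 : E), ∀ i ∈ Finset.range (k + 1),
        vertDeriv^[i + 1] g (x, 0) = (i + 1) * vertDeriv^[i] g₁ (x, 0) := by
      refine (Filter.eventually_all_finset _).2 fun i _ ↦ ?_
      filter_upwards [tendsto_prodMk_zero.eventually ((dirDeriv_iterate_congr hg _ _).trans
          ((hc 0).vertDeriv_iterate_succ_comp_fst_add hM ((IsGerm.snd hM).mul hM hg₁) i)),
        tendsto_prodMk_zero.eventually (hg₁.vertDeriv_iterate_succ_snd_mul hM i)] with x hx hx'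
      simpa using hx.trans hx'
    filter_upwards [ih (g := g₁) (c := fun i ↦ c (i + 1)) (fun i ↦ hc _) hu
      (.of_forall fun p ↦ rfl), hderiv, tendsto_prodMk_zero.eventually hg] with x hx hderivx hgx
    refine ⟨fun i hi ↦ ?_, ?_⟩
    · match i with
      | 0 => simpa using hgx
      | i + 1 =>
        rw [hderivx i (by simp; lia), hx.1 i (by lia), Nat.factorial_succ]
        push_cast
        ring
    · rw [hderivx k (by simp), hx.2, Nat.factorial_succ]
      push_cast
      ring

end VerticalTaylor

section Resolvable

variable {M : ℕ → ℝ} {E F : Type} [NormedAddCommGroup E] [NormedSpace ℝ E]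
  [NormedAddCommGroup F] [NormedSpace ℝ F]

/-- A family of map germs at `0` covers if, however small the neighbourhoods of `0` to which its
members are restricted, the images of finitely many of them fill a neighbourhood of `0`. -/
def IsGermCover {J E F : Type} [NormedAddCommGroup E] [NormedAddCommGroup F] (π : J → E → F) :
    Prop :=
  ∀ V : J → Set E, (∀ j, V j ∈ 𝓝 0) → ∃ T : Finset J, (⋃ j ∈ T, π j '' V j) ∈ 𝓝 (0 : F)

/-- `f` acquires the property `P` along every branch of some finite tower of germ covers by maps of
class `M` fixing the origin. -/
inductive Resolvable (M : ℕ → ℝ) (P : (E → ℝ) → Prop) : (E → ℝ) → Prop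
  | base (f : E → ℝ) (h : P f) : Resolvable M P f
  | step {J : Type} (π : J → E → E) (hπ : ∀ j, IsGerm M (π j)) (h0 : ∀ j, π j 0 = 0)
      (hcover : IsGermCover π) (f : E → ℝ) (h : ∀ j, Resolvable M P fun x ↦ f (π j x)) :
      Resolvable M P f

namespace IsGermCover

lemma of_right_inverse {E F : Type} [NormedAddCommGroup E] [NormedAddCommGroup F] {π : E → F}
    {σ : F → E} (hσ : Tendsto σ (𝓝 0) (𝓝 0)) (h : ∀ᶠ x in 𝓝 0, π (σ x) = x) :
    IsGermCover fun _ : Unit ↦ π := by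
  intro V hV
  refine ⟨{()}, ?_⟩
  filter_upwards [hσ (hV ()), h] with x hx hπσ
  exact mem_biUnion (Finset.mem_singleton_self ()) ⟨σ x, hx, hπσ⟩

lemma prodMap_id {J E F : Type} [NormedAddCommGroup E] [NormedAddCommGroup F] {π : J → E → F}
    (h : IsGermCover π) : IsGermCover fun j (p : E × ℝ) ↦ (π j p.1, p.2) := by
  intro V hV
  choose A hA B hB hAB using fun j ↦ mem_nhds_prod_iff.1 (hV j)
  obtain ⟨T, hT⟩ := h A hA
  have hBT : (⋂ j ∈ T, B j) ∈ 𝓝 (0 : ℝ) := (Finset.iInter_mem_sets T).2 fun j _ ↦ hB j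
  refine ⟨T, mem_of_superset (prod_mem_nhds hT hBT) ?_⟩
  rintro ⟨x, y⟩ ⟨hx, hy⟩
  simp only [mem_iUnion, mem_iInter] at hx hy ⊢
  obtain ⟨j, hj, z, hz, rfl⟩ := hx
  exact ⟨j, hj, (z, y), hAB j ⟨hz, hy j hj⟩, rfl⟩

end IsGermCover

namespace Resolvable

lemma congr {P : (E → ℝ) → Prop} (hP : ∀ f g : E → ℝ, f =ᶠ[𝓝 0] g → P f → P g) {f g : E → ℝ}
    (h : Resolvable M P f) (hfg : f =ᶠ[𝓝 0] g) : Resolvable M P g := by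
  induction h generalizing g with
  | base f h => exact .base _ (hP _ _ hfg h)
  | step π hπ h0 hcover f _ ih =>
    exact .step π hπ h0 hcover g fun j ↦ ih j (((hπ j).tendsto (h0 j)).eventually hfg)

lemma of_right_inverse {P : (E → ℝ) → Prop} {π σ : E → E} (hπ : IsGerm M π) (h0 : π 0 = 0)
    (hσ : Tendsto σ (𝓝 0) (𝓝 0)) (hπσ : ∀ᶠ x in 𝓝 0, π (σ x) = x) {f : E → ℝ}
    (h : Resolvable M P fun x ↦ f (π x)) : Resolvable M P f :=
  .step _ (fun _ ↦ hπ) (fun _ ↦ h0) (.of_right_inverse hσ hπσ) f fun _ ↦ h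

lemma comp_equiv (hM : IsWeight M) {P : (E → ℝ) → Prop} {P' : (F → ℝ) → Prop} (e : F ≃L[ℝ] E)
    (hP : ∀ f, P f → P' fun x ↦ f (e x)) {f : E → ℝ} (h : Resolvable M P f) :
    Resolvable M P' fun x ↦ f (e x) := by
  have he : Tendsto e (𝓝 0) (𝓝 0) := e.continuous.tendsto' _ _ (map_zero e)
  have he' : Tendsto e.symm (𝓝 0) (𝓝 0) := e.symm.continuous.tendsto' _ _ (map_zero e.symm)
  induction h with
  | base f h => exact .base _ (hP _ h)
  | step π hπ h0 hcover f _ ih =>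
    refine .step (fun j x ↦ e.symm (π j (e x)))
      (fun j ↦ ((hπ j).comp_clm hM (e : F →L[ℝ] E)).clm_comp hM (e.symm : E →L[ℝ] F))
      (fun j ↦ by simp [h0]) (fun V hV ↦ ?_) _ fun j ↦ by simpa using ih j
    obtain ⟨T, hT⟩ := hcover (fun j ↦ e.symm ⁻¹' V j) fun j ↦ he' (hV j)
    refine ⟨T, mem_of_superset (he hT) fun x hx ↦ ?_⟩
    simp only [mem_preimage, mem_iUnion] at hx ⊢
    obtain ⟨j, hj, z, hz, hzx⟩ := hx
    exact ⟨j, hj, e.symm z, hz, by simp [hzx]⟩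

end Resolvable

end Resolvable

section Coordinates

variable {ι : Type}

lemma tendsto_diagonal_zero : Tendsto (fun s : ℝ ↦ fun _ : ι ↦ s) (𝓝[>] 0) (𝓝 0) :=
  (Continuous.tendsto' (by fun_prop) _ _ rfl).mono_left nhdsWithin_le_nhds

lemma not_eventually_apply_eq_zero (i : ι) : ¬ ∀ᶠ x : ι → ℝ in 𝓝 0, x i = 0 := by
  intro h
  obtain ⟨s, hs0, hs : 0 < s⟩ :=
    ((tendsto_diagonal_zero.eventually h).and self_mem_nhdsWithin).exists
  exact hs.ne' hs0

variable [DecidableEq ι]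

/-- The linear projection onto the hyperplane `x i = 0`. -/
noncomputable def zeroCoord (i : ι) : (ι → ℝ) →L[ℝ] (ι → ℝ) :=
  .pi fun j ↦ if j = i then 0 else .proj j

@[simp]
lemma zeroCoord_self (i : ι) (x : ι → ℝ) : zeroCoord i x i = 0 := by simp [zeroCoord]

lemma zeroCoord_of_ne {i j : ι} (h : j ≠ i) (x : ι → ℝ) : zeroCoord i x j = x j := by
  simp [zeroCoord, h]

lemma zeroCoord_eq_self {i : ι} {x : ι → ℝ} (h : x i = 0) : zeroCoord i x = x := by
  ext j
  rcases eq_or_ne j i with rfl | hj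
  · rw [zeroCoord_self, h]
  · rw [zeroCoord_of_ne hj]

lemma tendsto_zeroCoord (i : ι) : Tendsto (zeroCoord i) (𝓝 0) (𝓝 0) :=
  (zeroCoord i).continuous.tendsto' _ _ (map_zero _)

lemma exists_eq_add_single {γ : ι → ℕ} {i : ι} (h : γ i ≠ 0) :
    ∃ γ' : ι → ℕ, γ = γ' + Pi.single i 1 := by
  refine ⟨γ - Pi.single i 1, (tsub_add_cancel_of_le fun j ↦ ?_).symm⟩
  rcases eq_or_ne j i with rfl | hj
  · simpa [Nat.one_le_iff_ne_zero] using h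
  · simp [hj]

end Coordinates

section Monomial

variable {ι : Type} [Fintype ι]

/-- The monomial `x ^ γ`. -/
def monom (γ : ι → ℕ) (x : ι → ℝ) : ℝ := ∏ i, x i ^ γ i

lemma monom_add (α β : ι → ℕ) (x : ι → ℝ) : monom (α + β) x = monom α x * monom β x := by
  simp [monom, pow_add, Finset.prod_mul_distrib]

@[simp]
lemma monom_zero (x : ι → ℝ) : monom 0 x = 1 := by simp [monom]

lemma monom_smul (k : ℕ) (α : ι → ℕ) (x : ι → ℝ) : monom (k • α) x = monom α x ^ k := by
  simp [monom, ← Finset.prod_pow, mul_comm k, pow_mul]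

lemma monom_eq_zero {γ : ι → ℕ} {x : ι → ℝ} {i : ι} (hγ : γ i ≠ 0) (hx : x i = 0) :
    monom γ x = 0 :=
  Finset.prod_eq_zero (Finset.mem_univ i) (by rw [hx, zero_pow hγ])

lemma monom_apply_zero {γ : ι → ℕ} (hγ : γ ≠ 0) : monom γ 0 = 0 := by
  obtain ⟨i, hi⟩ := Function.ne_iff.1 hγ
  exact monom_eq_zero hi rfl

lemma not_eventually_monom_mul_eq_zero (γ : ι → ℕ) {u : (ι → ℝ) → ℝ} (hu : ContinuousAt u 0)
    (h0 : u 0 ≠ 0) : ¬ ∀ᶠ x in 𝓝 0, monom γ x * u x = 0 := by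
  intro h
  obtain ⟨s, ⟨hzero, hus⟩, hs : 0 < s⟩ :=
    ((tendsto_diagonal_zero.eventually (h.and (hu.eventually_ne h0))).and
      self_mem_nhdsWithin).exists
  exact mul_ne_zero (Finset.prod_pos fun i _ ↦ pow_pos hs (γ i)).ne' hus hzero

lemma not_eventually_monom_eq_zero (γ : ι → ℕ) : ¬ ∀ᶠ x in 𝓝 0, monom γ x = 0 := by
  simpa using not_eventually_monom_mul_eq_zero γ (u := fun _ ↦ 1) continuousAt_const one_ne_zero

variable [DecidableEq ι]

lemma monom_single (i : ι) (k : ℕ) (x : ι → ℝ) : monom (Pi.single i k) x = x i ^ k := by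
  rw [monom, Finset.prod_eq_single i] <;> simp +contextual

lemma monom_zeroCoord {γ : ι → ℕ} {i : ι} (h : γ i = 0) (x : ι → ℝ) :
    monom γ (zeroCoord i x) = monom γ x := by
  refine Finset.prod_congr rfl fun j _ ↦ ?_
  rcases eq_or_ne j i with rfl | hj
  · simp [h]
  · rw [zeroCoord_of_ne hj]

lemma monom_zeroCoord_eq_zero {γ : ι → ℕ} {i : ι} (h : γ i ≠ 0) (x : ι → ℝ) :
    monom γ (zeroCoord i x) = 0 :=
  monom_eq_zero h (zeroCoord_self i x)

end Monomial

section NormalCrossing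

variable {M : ℕ → ℝ} {E : Type} [NormedAddCommGroup E] [NormedSpace ℝ E] {ι : Type} [Fintype ι]

/-- `f` is a monomial times a unit, near `0`. -/
def IsNormalCrossing (M : ℕ → ℝ) (f : (ι → ℝ) → ℝ) : Prop :=
  ∃ (γ : ι → ℕ) (u : (ι → ℝ) → ℝ), IsGerm M u ∧ u 0 ≠ 0 ∧ ∀ᶠ x in 𝓝 0, f x = monom γ x * u x

/-- The analogue of `IsNormalCrossing` with one variable split off. -/
def IsNormalCrossingProd (M : ℕ → ℝ) (f : (ι → ℝ) × ℝ → ℝ) : Prop :=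
  ∃ (γ : ι → ℕ) (k : ℕ) (u : (ι → ℝ) × ℝ → ℝ), IsGerm M u ∧ u 0 ≠ 0 ∧
    ∀ᶠ p in 𝓝 0, f p = monom γ p.1 * p.2 ^ k * u p

lemma IsNormalCrossing.congr (f g : (ι → ℝ) → ℝ) (h : f =ᶠ[𝓝 0] g) (hf : IsNormalCrossing M f) :
    IsNormalCrossing M g := by
  obtain ⟨γ, u, hu, h0, hx⟩ := hf
  exact ⟨γ, u, hu, h0, h.symm.trans hx⟩

lemma IsNormalCrossingProd.congr (f g : (ι → ℝ) × ℝ → ℝ) (h : f =ᶠ[𝓝 0] g)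
    (hf : IsNormalCrossingProd M f) : IsNormalCrossingProd M g := by
  obtain ⟨γ, k, u, hu, h0, hx⟩ := hf
  exact ⟨γ, k, u, hu, h0, h.symm.trans hx⟩

namespace IsGerm

lemma apply (hM : IsWeight M) (i : ι) : IsGerm M (fun x : ι → ℝ ↦ x i) :=
  IsGerm.clm hM (ContinuousLinearMap.proj i : (ι → ℝ) →L[ℝ] ℝ)

protected lemma monom (hM : IsWeight M) (γ : ι → ℕ) : IsGerm M (monom γ) :=
  IsGerm.prod hM Finset.univ fun i _ ↦ (IsGerm.apply hM i).pow hM (γ i)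

lemma eventually_eq_of_mul_eq_mul (hM : IsQuasianalyticWeight M) {a f g : E → ℝ} (ha : IsGerm M a)
    (hf : IsGerm M f) (hg : IsGerm M g) (h0 : ¬ ∀ᶠ x in 𝓝 0, a x = 0)
    (h : ∀ᶠ x in 𝓝 0, a x * f x = a x * g x) : ∀ᶠ x in 𝓝 0, f x = g x := by
  have hmul : ∀ᶠ x in 𝓝 0, a x * (f x - g x) = 0 :=
    h.mono fun x hx ↦ by rw [mul_sub, hx, sub_self]
  exact ((ha.eventually_eq_zero_or_eq_zero hM (hf.sub hM.toIsWeight hg) hmul).resolve_left h0).mono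
    fun x ↦ sub_eq_zero.1

lemma exists_eq_apply_mul [DecidableEq ι] (hM : IsWeight M) {g : (ι → ℝ) → ℝ} (hg : IsGerm M g)
    (i : ι) (h : ∀ᶠ x in 𝓝 0, g (zeroCoord i x) = 0) :
    ∃ g₁, IsGerm M g₁ ∧ ∀ᶠ x in 𝓝 0, g x = x i * g₁ x :=
  hg.exists_eq_linear_mul hM (.proj i : (ι → ℝ) →L[ℝ] ℝ) (Pi.single i 1) (by simp)
    (h.mono fun x hx (hxi : x i = 0) ↦ by rwa [zeroCoord_eq_self hxi] at hx)

lemma exists_eq_apply_mul_or (hM : IsQuasianalyticWeight M) {g h : (ι → ℝ) → ℝ} (hg : IsGerm M g)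
    (hh : IsGerm M h) (i : ι) (hgh : ∀ᶠ x in 𝓝 0, x i = 0 → g x * h x = 0) :
    (∃ g₁, IsGerm M g₁ ∧ ∀ᶠ x in 𝓝 0, g x = x i * g₁ x) ∨
      ∃ h₁, IsGerm M h₁ ∧ ∀ᶠ x in 𝓝 0, h x = x i * h₁ x := by
  classical
  have hzero : ∀ᶠ x in 𝓝 0, g (zeroCoord i x) * h (zeroCoord i x) = 0 := by
    filter_upwards [(tendsto_zeroCoord i).eventually hgh] with x hx using hx (zeroCoord_self i x)
  exact ((hg.comp_clm hM.toIsWeight (zeroCoord i)).eventually_eq_zero_or_eq_zero hM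
    (hh.comp_clm hM.toIsWeight (zeroCoord i)) hzero).imp
      (hg.exists_eq_apply_mul hM.toIsWeight i) (hh.exists_eq_apply_mul hM.toIsWeight i)

end IsGerm

namespace IsNormalCrossing

lemma apply_mul (i : ι) {f : (ι → ℝ) → ℝ} (hf : IsNormalCrossing M f) :
    IsNormalCrossing M (fun x ↦ x i * f x) := by
  classical
  obtain ⟨γ, u, hu, hu0, hfu⟩ := hf
  refine ⟨γ + Pi.single i 1, u, hu, hu0, ?_⟩
  filter_upwards [hfu] with x hx
  rw [hx, monom_add, monom_single]
  ring

lemma of_mul (hM : IsQuasianalyticWeight M) {g h : (ι → ℝ) → ℝ} (hg : IsGerm M g)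
    (hh : IsGerm M h) (hgh : IsNormalCrossing M (fun x ↦ g x * h x)) : IsNormalCrossing M g := by
  classical
  have hM' := hM.toIsWeight
  obtain ⟨γ, u, hu, hu0, hghu⟩ := hgh
  beta_reduce at hghu
  induction hs : ∑ i, γ i generalizing γ g h with
  | zero =>
    obtain rfl : γ = 0 := funext fun i ↦ by simpa using Finset.sum_eq_zero_iff.1 hs i
    have hg0 : g 0 ≠ 0 := fun hg0 ↦ hu0 <| by simpa [hg0] using hghu.self_of_nhds.symm
    exact ⟨0, g, hg, hg0, by simp⟩
  | succ s ih =>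
    obtain ⟨i, hi⟩ : ∃ i, γ i ≠ 0 := by
      by_contra! hγ
      simp [hγ] at hs
    obtain ⟨γ', rfl⟩ := exists_eq_add_single hi
    have hs' : ∑ i, γ' i = s := by simpa [Finset.sum_add_distrib] using hs
    have hcancel {p : (ι → ℝ) → ℝ} (hp : IsGerm M p) (h : ∀ᶠ x in 𝓝 0, g x * h x = x i * p x) :
        ∀ᶠ x in 𝓝 0, p x = monom γ' x * u x := by
      refine (IsGerm.apply hM' i).eventually_eq_of_mul_eq_mul hM hp
        ((IsGerm.monom hM' γ').mul hM' hu) (not_eventually_apply_eq_zero i) ?_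
      filter_upwards [h, hghu] with x hx hx'
      rw [← hx, hx', monom_add, monom_single]
      ring
    rcases hg.exists_eq_apply_mul_or hM hh i (hghu.mono fun x hx hxi ↦ by
      rw [hx, monom_eq_zero hi hxi, zero_mul]) with ⟨g₁, hg₁, hgg₁⟩ | ⟨h₁, hh₁, hhh₁⟩
    · refine congr _ _ (hgg₁.mono fun x hx ↦ hx.symm) ((ih hg₁ hh γ' ?_ hs').apply_mul i)
      exact hcancel (hg₁.mul hM' hh) (hgg₁.mono fun x hx ↦ by rw [hx, mul_assoc])
    · refine ih hg hh₁ γ' (hcancel (hg.mul hM' hh₁) ?_) hs'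
      exact hhh₁.mono fun x hx ↦ by rw [hx, mul_left_comm]

lemma of_prod (hM : IsQuasianalyticWeight M) {κ : Type} {s : Finset κ} {g : κ → (ι → ℝ) → ℝ}
    (hg : ∀ i ∈ s, IsGerm M (g i)) (h : IsNormalCrossing M (fun x ↦ ∏ i ∈ s, g i x)) {i : κ}
    (hi : i ∈ s) : IsNormalCrossing M (g i) := by
  classical
  refine of_mul hM (hg i hi) (h := fun x ↦ ∏ j ∈ s.erase i, g j x)
    (IsGerm.prod hM.toIsWeight _ fun j hj ↦ hg j (Finset.mem_of_mem_erase hj)) ?_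
  exact congr _ _ (.of_forall fun x ↦ (Finset.mul_prod_erase s (fun j ↦ g j x) hi).symm) h

end IsNormalCrossing

lemma not_eventually_monom_mul_eq (hM : IsWeight M) {α β : ι → ℕ} {u v : (ι → ℝ) → ℝ}
    (hv : IsGerm M v) (hv0 : v 0 ≠ 0) {i : ι} (hα : α i ≠ 0) (hβ : β i = 0) :
    ¬ ∀ᶠ x in 𝓝 0, monom α x * u x = monom β x * v x := by
  classical
  intro h
  refine not_eventually_monom_mul_eq_zero β (hv.comp_clm hM (zeroCoord i)).continuousAt
    (by simpa using hv0) ?_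
  filter_upwards [(tendsto_zeroCoord i).eventually h] with x hx
  rw [← monom_zeroCoord hβ, ← hx, monom_zeroCoord_eq_zero hα, zero_mul]

lemma not_isNormalCrossing_monom_mul_sub (hM : IsWeight M) {α β : ι → ℕ} {u v : (ι → ℝ) → ℝ}
    (hu : IsGerm M u) (hv : IsGerm M v) (hu0 : u 0 ≠ 0) (hv0 : v 0 ≠ 0) (hα : α ≠ 0) (hβ : β ≠ 0)
    (hdisj : ∀ k, α k = 0 ∨ β k = 0) :
    ¬ IsNormalCrossing M (fun x ↦ monom α x * u x - monom β x * v x) := by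
  classical
  rintro ⟨γ, w, -, hw0, hw⟩
  -- the difference vanishes at `0`, hence on a hyperplane `x k = 0`
  obtain ⟨k, hk⟩ : ∃ k, γ k ≠ 0 := by
    by_contra! hγ
    obtain rfl : γ = 0 := funext hγ
    exact hw0 (by simpa [monom_apply_zero hα, monom_apply_zero hβ] using hw.self_of_nhds.symm)
  -- a hyperplane `x j = 0` on which only the second monomial vanishes excludes `α k = 0`
  have key {α β : ι → ℕ} {u v : (ι → ℝ) → ℝ} (hu : IsGerm M u) (hu0 : u 0 ≠ 0) (hβ : β ≠ 0)
      (hdisj : ∀ k, α k = 0 ∨ β k = 0)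
      (h : ∀ᶠ x in 𝓝 0, x k = 0 → monom α x * u x = monom β x * v x) : α k ≠ 0 := by
    intro hαk
    obtain ⟨j, hj⟩ := Function.ne_iff.1 hβ
    have htend := (tendsto_zeroCoord (ι := ι) k).comp (tendsto_zeroCoord j)
    refine not_eventually_monom_mul_eq_zero α
      (hu.comp_clm hM ((zeroCoord k).comp (zeroCoord j))).continuousAt (by simpa using hu0) ?_
    filter_upwards [htend.eventually h] with x hx
    have hxj : zeroCoord k (zeroCoord j x) j = 0 := by
      rcases eq_or_ne j k with rfl | hjk
      · simp
      · simp [zeroCoord_of_ne hjk]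
    have hx := hx (by simp)
    rwa [Function.comp_apply, monom_zeroCoord hαk, monom_zeroCoord ((hdisj j).resolve_right hj),
      monom_eq_zero hj hxj, zero_mul] at hx
  have heq : ∀ᶠ x in 𝓝 0, x k = 0 → monom α x * u x = monom β x * v x := by
    filter_upwards [hw] with x hx hxk
    rwa [monom_eq_zero hk hxk, zero_mul, sub_eq_zero] at hx
  exact (hdisj k).elim (key hu hu0 hβ hdisj heq) (key hv hv0 hα (fun k ↦ (hdisj k).symm)
    (heq.mono fun x hx hxk ↦ (hx hxk).symm))

lemma le_or_le_of_isNormalCrossing_sub (hM : IsQuasianalyticWeight M) {α β : ι → ℕ}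
    {u v : (ι → ℝ) → ℝ} (hu : IsGerm M u) (hv : IsGerm M v) (hu0 : u 0 ≠ 0) (hv0 : v 0 ≠ 0)
    (h : IsNormalCrossing M (fun x ↦ monom α x * u x - monom β x * v x) ∨
      ∀ᶠ x in 𝓝 0, monom α x * u x - monom β x * v x = 0) : α ≤ β ∨ β ≤ α := by
  have hM' := hM.toIsWeight
  by_contra! hcon
  simp only [Pi.le_def, not_forall, not_le] at hcon
  obtain ⟨⟨i, hi⟩, j, hj⟩ := hcon
  obtain ⟨a, ha⟩ : ∃ a, α = α ⊓ β + a := exists_add_of_le inf_le_left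
  obtain ⟨b, hb⟩ : ∃ b, β = α ⊓ β + b := exists_add_of_le inf_le_right
  have hα (k : ι) : α k = min (α k) (β k) + a k := congrFun ha k
  have hβ (k : ι) : β k = min (α k) (β k) + b k := congrFun hb k
  have hai : a i ≠ 0 := by have := hα i; lia
  have hbi : b i = 0 := by have := hβ i; lia
  have hbj : b j ≠ 0 := by have := hβ j; lia
  have hab (k : ι) : a k = 0 ∨ b k = 0 := by have := hα k; have := hβ k; lia
  have hdiff := ((IsGerm.monom hM' a).mul hM' hu).sub hM' ((IsGerm.monom hM' b).mul hM' hv)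
  have hfactor (x : ι → ℝ) : monom α x * u x - monom β x * v x =
      monom (α ⊓ β) x * (monom a x * u x - monom b x * v x) := by
    rw [mul_sub, ← mul_assoc, ← mul_assoc, ← monom_add, ← monom_add, ← ha, ← hb]
  simp only [hfactor] at h
  rcases h with h | h
  · refine not_isNormalCrossing_monom_mul_sub hM' hu hv hu0 hv0 (Function.ne_iff.2 ⟨i, hai⟩)
      (Function.ne_iff.2 ⟨j, hbj⟩) hab (.of_mul hM hdiff (IsGerm.monom hM' (α ⊓ β)) ?_)
    simpa only [mul_comm] using h
  · refine not_eventually_monom_mul_eq hM' (u := u) hv hv0 hai hbi ?_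
    refine ((((IsGerm.monom hM' (α ⊓ β)).eventually_eq_zero_or_eq_zero hM hdiff h).resolve_left
      (not_eventually_monom_eq_zero _))).mono fun x hx ↦ sub_eq_zero.1 hx

end NormalCrossing

section Ramification

variable {M : ℕ → ℝ} {ι : Type}

/-- The ramification `x i ↦ ± x i ^ m`; the signs `s` index the maps needed to cover all orthants
when `m` is even. -/
def ramify (m : ℕ) (s : ι → ℤˣ) (x : ι → ℝ) : ι → ℝ := fun i ↦ (s i : ℤ) * x i ^ m

lemma ramify_zero {m : ℕ} (hm : m ≠ 0) (s : ι → ℤˣ) : ramify m s 0 = 0 := by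
  ext i
  simp [ramify, hm]

variable [Fintype ι]

protected lemma IsGerm.ramify (hM : IsWeight M) (m : ℕ) (s : ι → ℤˣ) : IsGerm M (ramify m s) :=
  IsGerm.pi hM fun i ↦ (IsGerm.const hM _).mul hM ((IsGerm.apply hM i).pow hM m)

lemma monom_ramify (m : ℕ) (s : ι → ℤˣ) (γ : ι → ℕ) (x : ι → ℝ) :
    monom γ (ramify m s x) = monom γ (fun i ↦ ((s i : ℤ) : ℝ)) * monom (m • γ) x := by
  simp [monom, ramify, mul_pow, pow_mul, Finset.prod_mul_distrib]

lemma monom_units_ne_zero (γ : ι → ℕ) (s : ι → ℤˣ) : monom γ (fun i ↦ ((s i : ℤ) : ℝ)) ≠ 0 :=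
  Finset.prod_ne_zero_iff.2 fun i _ ↦ pow_ne_zero _ (Int.cast_ne_zero.2 (s i).ne_zero)

lemma IsGermCover.ramify {m : ℕ} (hm : m ≠ 0) :
    IsGermCover fun s : ι → ℤˣ ↦ DenjoyCarleman.ramify m s := by
  classical
  intro V hV
  have hroot : Tendsto (fun (z : ι → ℝ) i ↦ |z i| ^ (m : ℝ)⁻¹) (𝓝 0) (𝓝 0) := by
    refine Continuous.tendsto' ?_ _ _ (funext fun i ↦ by simp [Real.zero_rpow, hm])
    exact continuous_pi fun i ↦
      (continuous_abs.comp (continuous_apply i)).rpow_const fun _ ↦ .inr (by positivity)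
  refine ⟨Finset.univ, ?_⟩
  filter_upwards [hroot (Filter.iInter_mem.2 hV)] with z hz
  refine mem_biUnion (Finset.mem_univ fun i ↦ if 0 ≤ z i then 1 else -1)
    ⟨_, mem_iInter.1 hz _, funext fun i ↦ ?_⟩
  rw [DenjoyCarleman.ramify, Real.rpow_inv_natCast_pow (abs_nonneg _) hm]
  split_ifs with h
  · simp [abs_of_nonneg h]
  · simp [abs_of_neg (not_le.1 h)]

end Ramification

section BlowUp

variable {M : ℕ → ℝ} {ι : Type} [DecidableEq ι]

/-- The blow-up of `x k = y = 0` in the chart centred at the direction `y = l * x k` for `some l`,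
and at the direction `x k = 0` for `none`. -/
def blowupChart (k : ι) : Option ℝ → (ι → ℝ) × ℝ → (ι → ℝ) × ℝ
  | some l, p => (p.1, p.1 k * (l + p.2))
  | none, p => (Function.update p.1 k (p.1 k * p.2), p.2)

lemma blowupChart_zero (k : ι) (j : Option ℝ) : blowupChart k j 0 = 0 := by
  cases j <;> simp [blowupChart]

lemma blowupChart_some_div {k : ι} {x : ι → ℝ} {y : ℝ} (h : x k = 0 → y = 0) (l : ℝ) :
    blowupChart k (some l) (x, y / x k - l) = (x, y) := by
  rw [blowupChart, add_sub_cancel, mul_div_cancel_of_imp' h]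

lemma blowupChart_none_div (k : ι) (x : ι → ℝ) {y : ℝ} (hy : y ≠ 0) :
    blowupChart k none (Function.update x k (x k / y), y) = (x, y) := by
  simp [blowupChart, hy]

lemma exists_finset_abs_sub_lt {r : ℝ → ℝ} (hr : ∀ l, 0 < r l) (R : ℝ) :
    ∃ T : Finset ℝ, ∀ t, |t| ≤ R → ∃ l ∈ T, |t - l| < r l := by
  obtain ⟨T, -, hT⟩ := (isCompact_Icc (a := -R) (b := R)).elim_nhds_subcover
    (fun l ↦ Metric.ball l (r l)) fun l _ ↦ Metric.ball_mem_nhds l (hr l)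
  refine ⟨T, fun t ht ↦ ?_⟩
  simpa [Real.dist_eq] using hT (abs_le.1 ht)

variable [Fintype ι]

namespace IsGerm

lemma update_mul_snd (hM : IsWeight M) (k : ι) :
    IsGerm M (fun p : (ι → ℝ) × ℝ ↦ Function.update p.1 k (p.1 k * p.2)) := by
  refine IsGerm.pi hM fun i ↦ ?_
  rcases eq_or_ne i k with rfl | hi
  · simpa using ((IsGerm.apply hM i).comp_fst hM).mul hM (IsGerm.snd hM)
  · simpa [hi] using (IsGerm.apply hM i).comp_fst hM

protected lemma blowupChart (hM : IsWeight M) (k : ι) (j : Option ℝ) :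
    IsGerm M (blowupChart k j) := by
  cases j with
  | none => exact (IsGerm.update_mul_snd hM k).prodMk hM (IsGerm.snd hM)
  | some l =>
    exact (IsGerm.clm hM (.fst ℝ (ι → ℝ) ℝ)).prodMk hM (((IsGerm.apply hM k).comp_fst hM).mul hM
      ((IsGerm.const hM l).add hM (IsGerm.snd hM)))

end IsGerm

lemma IsGermCover.blowupChart (k : ι) : IsGermCover (DenjoyCarleman.blowupChart k) := by
  classical
  intro V hV
  choose r hr hrV using fun j ↦ Metric.mem_nhds_iff.1 (hV j)
  have hmem {j : Option ℝ} {x : ι → ℝ} {y : ℝ} (hx : ‖x‖ < r j) (hy : |y| < r j) :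
      (x, y) ∈ V j := hrV j (by simpa [Prod.norm_def] using ⟨hx, hy⟩)
  -- slopes of absolute value at least `R` are covered by the chart `none`
  set R := 2 / r none with hR
  have hRpos : 0 < R := div_pos two_pos (hr none)
  obtain ⟨T, hT⟩ := exists_finset_abs_sub_lt (fun l ↦ hr (some l)) R
  let T' : Finset (Option ℝ) := insert none (T.image some)
  obtain ⟨δ, hδ, hδr⟩ : ∃ δ > 0, ∀ j ∈ T', δ ≤ r j :=
    ⟨T'.inf' ⟨none, by simp [T']⟩ r, (Finset.lt_inf'_iff _).2 fun j _ ↦ hr j,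
      fun j hj ↦ Finset.inf'_le _ hj⟩
  refine ⟨T', ?_⟩
  filter_upwards [Metric.ball_mem_nhds (0 : (ι → ℝ) × ℝ) hδ] with ⟨x, y⟩ hxy
  obtain ⟨hx, hy⟩ : ‖x‖ < δ ∧ |y| < δ := by simpa [Prod.norm_def] using hxy
  rcases le_or_gt |y| (R * |x k|) with hslope | hslope
  · have hzero : x k = 0 → y = 0 := fun h ↦ by simpa [h] using hslope
    obtain ⟨l, hl, hlr⟩ := hT (y / x k) (by
      rw [abs_div]
      exact div_le_of_le_mul₀ (abs_nonneg _) hRpos.le hslope)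
    have hlT : some l ∈ T' := by simp [T', hl]
    exact mem_biUnion hlT
      ⟨_, hmem (hx.trans_le (hδr _ hlT)) hlr, blowupChart_some_div hzero l⟩
  · have hnone : none ∈ T' := by simp [T']
    have hypos : 0 < |y| := (by positivity : 0 ≤ R * |x k|).trans_lt hslope
    have hslope' : |x k / y| < r none := by
      rw [hR, div_mul_eq_mul_div, div_lt_iff₀ (hr none)] at hslope
      rw [abs_div, div_lt_iff₀ hypos]
      linarith [abs_nonneg (x k)]
    refine mem_biUnion hnone ⟨_, hmem ((pi_norm_lt_iff (hr none)).2 fun i ↦ ?_)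
      (hy.trans_le (hδr _ hnone)), blowupChart_none_div k x (abs_pos.1 hypos)⟩
    rcases eq_or_ne i k with rfl | hi
    · rwa [Function.update_self, Real.norm_eq_abs]
    · simpa [hi] using (norm_le_pi_norm x i).trans_lt (hx.trans_le (hδr _ hnone))

lemma monom_update_mul (γ : ι → ℕ) (k : ι) (x : ι → ℝ) (y : ℝ) :
    monom γ (Function.update x k (x k * y)) = monom γ x * y ^ γ k := by
  rw [monom, monom, ← Finset.mul_prod_erase _ _ (Finset.mem_univ k),
    ← Finset.mul_prod_erase _ (fun i ↦ x i ^ γ i) (Finset.mem_univ k), Function.update_self,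
    Finset.prod_congr rfl fun i hi ↦ by rw [Function.update_of_ne (Finset.ne_of_mem_erase hi)]]
  ring

end BlowUp

section RestrictedDerivative

variable {M : ℕ → ℝ} {E : Type} [NormedAddCommGroup E] [NormedSpace ℝ E]

lemma IsGerm.vertDeriv_iterate_zero (hM : IsWeight M) {f : E × ℝ → ℝ} (hf : IsGerm M f) (d : ℕ) :
    vertDeriv^[d] f 0 = iteratedDeriv d (fun t ↦ f (0, t)) 0 := by
  have hdir : dirDeriv (1 : ℝ) = deriv := by
    ext h x
    simp [dirDeriv]
  have h := (hf.dirDeriv_iterate_comp_clm hM (.inr ℝ E ℝ) 1 d).self_of_nhds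
  rw [hdir, ← iteratedDeriv_eq_iterate] at h
  exact h.symm

lemma iteratedDeriv_sum_mul_pow_add (d : ℕ) (c : ℕ → ℝ) (u l : ℝ) :
    iteratedDeriv d (fun t ↦ ∑ i ∈ Finset.range d, c i * (l + t) ^ i + (l + t) ^ (d + 1) * u) 0 =
      (d + 1).descFactorial d * l * u := by
  rw [iteratedDeriv_comp_const_add d
    (fun x ↦ ∑ i ∈ Finset.range d, c i * x ^ i + x ^ (d + 1) * u) l]
  beta_reduce
  rw [iteratedDeriv_fun_add (by fun_prop) (by fun_prop),
    iteratedDeriv_fun_sum fun i _ ↦ by fun_prop, Finset.sum_eq_zero fun i hi ↦ ?_]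
  · simp [mul_comm _ u]
  · rw [iteratedDeriv_const_mul_field, iteratedDeriv_pow,
      Nat.descFactorial_eq_zero_iff_lt.2 (Finset.mem_range.1 hi)]
    simp

end RestrictedDerivative

section WeightedPolynomial

variable {M : ℕ → ℝ} {ι : Type} [Fintype ι]

/-- Germs which are regular of order `d` in the last variable can be resolved, even after
multiplication by a germ in the other variables. -/
def RegularResolution (M : ℕ → ℝ) (ι : Type) [Fintype ι] (d : ℕ) : Prop :=
  ∀ (b : (ι → ℝ) → ℝ) (F : (ι → ℝ) × ℝ → ℝ), IsGerm M b → (¬ ∀ᶠ x in 𝓝 0, b x = 0) →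
    IsGerm M F → vertDeriv^[d] F 0 ≠ 0 →
    Resolvable M (IsNormalCrossingProd M) fun p ↦ b p.1 * F p

/-- The polynomial `∑ i < d, c i x ^ ((d - i) α) y ^ i + v y ^ d`, quasihomogeneous when `y` has
the weight of `x ^ α`. -/
def weightedPoly (d : ℕ) (α : ι → ℕ) (c : ℕ → ℝ) (v : ℝ) (x : ι → ℝ) (y : ℝ) : ℝ :=
  ∑ i ∈ Finset.range d, c i * monom ((d - i) • α) x * y ^ i + v * y ^ d

lemma weightedPoly_zero_right (d : ℕ) {α : ι → ℕ} (hα : α ≠ 0) (c : ℕ → ℝ) (v y : ℝ) :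
    weightedPoly d α c v 0 y = v * y ^ d := by
  rw [weightedPoly, Finset.sum_eq_zero fun i hi ↦ ?_, zero_add]
  have hd : d - i ≠ 0 := by have := Finset.mem_range.1 hi; lia
  rw [monom_smul, monom_apply_zero hα, zero_pow hd, mul_zero, zero_mul]

lemma weightedPoly_exponent_zero (d : ℕ) (c : ℕ → ℝ) (v : ℝ) (x : ι → ℝ) (y : ℝ) :
    weightedPoly d 0 c v x y = ∑ i ∈ Finset.range d, c i * y ^ i + y ^ d * v := by
  simp [weightedPoly, mul_comm v]

lemma weightedPoly_add_single_mul [DecidableEq ι] (d : ℕ) (α : ι → ℕ) (k : ι) (c : ℕ → ℝ) (v : ℝ)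
    (x : ι → ℝ) (y : ℝ) :
    weightedPoly d (α + Pi.single k 1) c v x (x k * y) = x k ^ d * weightedPoly d α c v x y := by
  rw [weightedPoly, weightedPoly, mul_add, Finset.mul_sum]
  congr 1
  · refine Finset.sum_congr rfl fun i hi ↦ ?_
    rw [monom_smul, monom_smul, monom_add, monom_single, pow_one, mul_pow, mul_pow,
      ← pow_sub_mul_pow (x k) (Finset.mem_range.1 hi).le]
    ring
  · ring

lemma weightedPoly_update_mul [DecidableEq ι] (d : ℕ) (α : ι → ℕ) (k : ι) (c : ℕ → ℝ) (v : ℝ)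
    (x : ι → ℝ) (y : ℝ) :
    weightedPoly d (α + Pi.single k 1) c v (Function.update x k (x k * y)) y =
      y ^ d * weightedPoly d (α + Pi.single k 1) (fun i ↦ y ^ ((d - i) * α k) * c i) v x 1 := by
  rw [weightedPoly, weightedPoly, mul_add, Finset.mul_sum]
  congr 1
  · refine Finset.sum_congr rfl fun i hi ↦ ?_
    rw [monom_update_mul, ← pow_sub_mul_pow y (Finset.mem_range.1 hi).le]
    simp only [Pi.smul_apply, Pi.add_apply, Pi.single_eq_same, smul_eq_mul]
    ring
  · ring

lemma IsGerm.weightedPoly (hM : IsWeight M) {d : ℕ} {α : ι → ℕ} {c : ℕ → (ι → ℝ) × ℝ → ℝ}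
    {v y : (ι → ℝ) × ℝ → ℝ} (hc : ∀ i, IsGerm M (c i)) (hv : IsGerm M v) (hy : IsGerm M y) :
    IsGerm M fun p ↦ weightedPoly d α (fun i ↦ c i p) (v p) p.1 (y p) :=
  (IsGerm.sum hM _ fun i _ ↦ ((hc i).mul hM ((IsGerm.monom hM _).comp_fst hM)).mul hM
    (hy.pow hM i)).add hM (hv.mul hM (hy.pow hM d))

end WeightedPolynomial

section NormalCrossingProd

variable {M : ℕ → ℝ} {ι : Type} [Fintype ι]

namespace IsNormalCrossing

lemma isGerm (hM : IsWeight M) {f : (ι → ℝ) → ℝ} (hf : IsNormalCrossing M f) : IsGerm M f := by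
  obtain ⟨γ, u, hu, -, hfu⟩ := hf
  exact ((IsGerm.monom hM γ).mul hM hu).congr (hfu.mono fun x hx ↦ hx.symm)

lemma not_eventually_eq_zero {f : (ι → ℝ) → ℝ} (hf : IsNormalCrossing M f) :
    ¬ ∀ᶠ x in 𝓝 0, f x = 0 := by
  obtain ⟨γ, u, hu, hu0, hfu⟩ := hf
  intro h
  exact not_eventually_monom_mul_eq_zero γ hu.continuousAt hu0
    ((h.and hfu).mono fun x hx ↦ hx.2 ▸ hx.1)

lemma pow_apply_mul (i : ι) (d : ℕ) {f : (ι → ℝ) → ℝ} (hf : IsNormalCrossing M f) :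
    IsNormalCrossing M fun x ↦ x i ^ d * f x := by
  induction d with
  | zero => simpa using hf
  | succ d ih => simpa only [pow_succ', mul_assoc] using ih.apply_mul i

lemma comp_fst (hM : IsWeight M) {f : (ι → ℝ) → ℝ} (hf : IsNormalCrossing M f) :
    IsNormalCrossingProd M fun p ↦ f p.1 := by
  obtain ⟨γ, u, hu, hu0, hfu⟩ := hf
  exact ⟨γ, 0, _, hu.comp_fst hM, hu0, by simpa using tendsto_fst_zero.eventually hfu⟩

lemma comp_update_mul_snd [DecidableEq ι] (hM : IsWeight M) (k : ι) {f : (ι → ℝ) → ℝ}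
    (hf : IsNormalCrossing M f) :
    IsNormalCrossingProd M fun p ↦ f (Function.update p.1 k (p.1 k * p.2)) := by
  obtain ⟨γ, u, hu, hu0, hfu⟩ := hf
  have hupdate := IsGerm.update_mul_snd hM k
  have hzero : Function.update (0 : ι → ℝ) k (0 * 0) = 0 := by simp
  refine ⟨γ, γ k, _, hu.comp hM hupdate hzero, by simpa using hu0, ?_⟩
  filter_upwards [(hupdate.tendsto hzero).eventually hfu] with p hp
  rw [hp, monom_update_mul]

lemma comp_ramify (hM : IsWeight M) {m : ℕ} (hm : m ≠ 0) (s : ι → ℤˣ) {f : (ι → ℝ) → ℝ}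
    (hf : IsNormalCrossing M f) : IsNormalCrossing M fun x ↦ f (ramify m s x) := by
  obtain ⟨γ, u, hu, hu0, hfu⟩ := hf
  have hs := IsGerm.ramify hM m s
  have hs0 := ramify_zero hm s
  refine ⟨m • γ, _, (IsGerm.const hM (monom γ fun i ↦ ((s i : ℤ) : ℝ))).mul hM (hu.comp hM hs hs0),
    mul_ne_zero (monom_units_ne_zero γ s) (by rwa [hs0]), ?_⟩
  filter_upwards [(hs.tendsto hs0).eventually hfu] with x hx
  rw [hx, monom_ramify]
  ring

end IsNormalCrossing

lemma IsNormalCrossingProd.mul_snd_pow_mul (hM : IsWeight M) {f u : (ι → ℝ) × ℝ → ℝ}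
    (hf : IsNormalCrossingProd M f) (d : ℕ) (hu : IsGerm M u) (hu0 : u 0 ≠ 0) :
    IsNormalCrossingProd M fun p ↦ f p * (p.2 ^ d * u p) := by
  obtain ⟨γ, k, v, hv, hv0, hfv⟩ := hf
  refine ⟨γ, k + d, _, hv.mul hM hu, mul_ne_zero hv0 hu0, ?_⟩
  filter_upwards [hfv] with p hp
  rw [hp]
  ring

end NormalCrossingProd

section WeightedPolynomialResolution

variable {M : ℕ → ℝ} {ι : Type} [Fintype ι]

lemma vertDeriv_iterate_weightedPoly_ne_zero (hM : IsWeight M) {e : ℕ} {c : ℕ → (ι → ℝ) → ℝ}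
    (hc : ∀ i, IsGerm M (c i)) (hce : c e 0 = 0) {u : (ι → ℝ) × ℝ → ℝ} (hu : IsGerm M u)
    (hu0 : u 0 ≠ 0) (hu' : ∀ t, u (0, t) = u 0) {l : ℝ} (hl : l ≠ 0) :
    vertDeriv^[e] (fun p ↦ weightedPoly (e + 1) 0 (fun i ↦ c i p.1) (u p) p.1 (l + p.2)) 0 ≠ 0 := by
  rw [(IsGerm.weightedPoly hM (fun i ↦ (hc i).comp_fst hM) hu
    ((IsGerm.const hM l).add hM (IsGerm.snd hM))).vertDeriv_iterate_zero hM]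
  simp only [weightedPoly_exponent_zero, Finset.sum_range_succ, hce, zero_mul, add_zero, hu',
    iteratedDeriv_sum_mul_pow_add]
  have : (e + 1).descFactorial e ≠ 0 := by simp [Nat.descFactorial_eq_zero_iff_lt]
  positivity

lemma isNormalCrossingProd_mul_weightedPoly_blowupChart_none [DecidableEq ι] (hM : IsWeight M)
    {d : ℕ} {α : ι → ℕ} {a : (ι → ℝ) → ℝ} (ha : IsNormalCrossing M a) {c : ℕ → (ι → ℝ) → ℝ}
    (hc : ∀ i, IsGerm M (c i)) {u : (ι → ℝ) × ℝ → ℝ} (hu : IsGerm M u) (hu0 : u 0 ≠ 0) (k : ι) :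
    IsNormalCrossingProd M fun p ↦ a (blowupChart k none p).1 *
      weightedPoly d (α + Pi.single k 1) (fun i ↦ c i (blowupChart k none p).1)
        (u (blowupChart k none p)) (blowupChart k none p).1 (blowupChart k none p).2 := by
  have hα : α + Pi.single k 1 ≠ 0 := fun h ↦ by simpa using congrFun h k
  have hupdate {f : (ι → ℝ) → ℝ} (hf : IsGerm M f) :=
    hf.comp hM (IsGerm.update_mul_snd hM k) (by simp)
  have hchart := hu.comp hM (.blowupChart hM k none) (blowupChart_zero k none)
  simp only [blowupChart, weightedPoly_update_mul] at hchart ⊢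
  refine (ha.comp_update_mul_snd hM k).mul_snd_pow_mul hM d (IsGerm.weightedPoly hM
    (fun i ↦ ((IsGerm.snd hM).pow hM _).mul hM (hupdate (hc i))) hchart (.const hM 1)) ?_
  simpa [weightedPoly_zero_right d hα, ← Prod.zero_eq_mk] using hu0

lemma isNormalCrossingProd_mul_weightedPoly_add (hM : IsWeight M) {d : ℕ} {α : ι → ℕ}
    (hα : α ≠ 0) {a : (ι → ℝ) → ℝ} (ha : IsNormalCrossing M a) {c : ℕ → (ι → ℝ) → ℝ}
    (hc : ∀ i, IsGerm M (c i)) {u : (ι → ℝ) × ℝ → ℝ} (hu : IsGerm M u) (hu0 : u 0 ≠ 0) {l : ℝ}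
    (hl : l ≠ 0) :
    IsNormalCrossingProd M fun p ↦
      a p.1 * weightedPoly d α (fun i ↦ c i p.1) (u p) p.1 (l + p.2) := by
  have hW := IsGerm.weightedPoly hM (d := d) (α := α) (fun i ↦ (hc i).comp_fst hM) hu
    ((IsGerm.const hM l).add hM (IsGerm.snd hM))
  simpa using (ha.comp_fst hM).mul_snd_pow_mul hM 0 hW
    (by simpa [weightedPoly_zero_right d hα, hl] using hu0)

-- Blowing up `x k = y = 0` for some `k` with `α k ≠ 0` decreases `α` in the charts around `y = 0`;
-- around all other directions the order in `y` drops below `d`.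
lemma resolvable_mul_weightedPoly (hM : IsWeight M) {d : ℕ}
    (hreg : ∀ j < d, RegularResolution M ι j) {α : ι → ℕ} {a : (ι → ℝ) → ℝ}
    (ha : IsNormalCrossing M a) {c : ℕ → (ι → ℝ) → ℝ} (hc : ∀ i, IsGerm M (c i))
    {u : (ι → ℝ) × ℝ → ℝ} (hu : IsGerm M u) (hu0 : u 0 ≠ 0) {i₀ : ℕ} (hi₀ : i₀ < d)
    (hci₀ : c i₀ 0 ≠ 0) (hlast : ∀ i, i + 1 = d → c i 0 = 0) :
    Resolvable M (IsNormalCrossingProd M) fun p ↦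
      a p.1 * weightedPoly d α (fun i ↦ c i p.1) (u p) p.1 p.2 := by
  classical
  induction hs : ∑ i, α i generalizing α a u with
  | zero =>
    obtain rfl : α = 0 := funext fun i ↦ by simpa using Finset.sum_eq_zero_iff.1 hs i
    refine hreg i₀ hi₀ a _ (ha.isGerm hM) ha.not_eventually_eq_zero
      (.weightedPoly hM (fun i ↦ (hc i).comp_fst hM) hu (.snd hM)) ?_
    have htaylor := (eventually_vertDeriv_iterate_taylor hM d hc hu (.of_forall fun p ↦
      weightedPoly_exponent_zero d (fun i ↦ c i p.1) (u p) p.1 p.2)).self_of_nhds.1 i₀ hi₀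
    exact htaylor ▸ mul_ne_zero (by positivity) hci₀
  | succ s ih =>
    obtain ⟨k, hk⟩ : ∃ k, α k ≠ 0 := by
      by_contra! hα
      simp [hα] at hs
    obtain ⟨α, rfl⟩ := exists_eq_add_single hk
    have hs' : ∑ i, α i = s := by simpa [Finset.sum_add_distrib] using hs
    refine .step (blowupChart k) (.blowupChart hM k) (blowupChart_zero k) (.blowupChart k) _
      fun j ↦ ?_
    cases j with
    | none =>
      exact .base _ (isNormalCrossingProd_mul_weightedPoly_blowupChart_none hM ha hc hu hu0 k)
    | some l =>
      have ha' := ha.pow_apply_mul k d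
      have hu' := hu.comp hM (.blowupChart hM k (some l)) (blowupChart_zero k _)
      have hu0' : u (blowupChart k (some l) 0) ≠ 0 := by rwa [blowupChart_zero]
      simp only [blowupChart, weightedPoly_add_single_mul, mul_left_comm (a _), ← mul_assoc]
        at hu' hu0' ⊢
      rcases eq_or_ne l 0 with rfl | hl
      · simpa only [zero_add] using ih ha' hu' hu0' hs'
      rcases ne_or_eq α 0 with hα | rfl
      · exact .base _ (isNormalCrossingProd_mul_weightedPoly_add hM hα ha' hc hu' hu0' hl)
      obtain ⟨e, rfl⟩ := Nat.exists_eq_add_of_lt hi₀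
      refine hreg _ (Nat.lt_succ_self _) _ _ (ha'.isGerm hM) ha'.not_eventually_eq_zero
        (.weightedPoly hM (fun i ↦ (hc i).comp_fst hM) hu'
          ((IsGerm.const hM l).add hM (.snd hM))) ?_
      exact vertDeriv_iterate_weightedPoly_ne_zero hM hc (hlast _ rfl) hu' hu0' (by simp) hl

end WeightedPolynomialResolution

section NewtonPolygon

variable {M : ℕ → ℝ} {ι : Type} [Fintype ι]

lemma exists_forall_smul_le_smul (hM : IsQuasianalyticWeight M) {κ : Type} {T : Finset κ}
    (hT : T.Nonempty) {e : κ → ℕ} {a : κ → ι → ℕ} {v c : κ → (ι → ℝ) → ℝ}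
    (hv : ∀ i ∈ T, IsGerm M (v i)) (hv0 : ∀ i ∈ T, v i 0 ≠ 0)
    (hcv : ∀ i ∈ T, ∀ᶠ x in 𝓝 0, c i x = monom (a i) x * v i x)
    (hdiff : ∀ i ∈ T, ∀ j ∈ T, IsNormalCrossing M (fun x ↦ c i x ^ e i - c j x ^ e j) ∨
      ∀ᶠ x in 𝓝 0, c i x ^ e i - c j x ^ e j = 0) :
    ∃ i₀ ∈ T, ∀ i ∈ T, e i₀ • a i₀ ≤ e i • a i := by
  have hM' := hM.toIsWeight
  have hpow (i) (hi : i ∈ T) : ∀ᶠ x in 𝓝 0, c i x ^ e i = monom (e i • a i) x * v i x ^ e i :=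
    (hcv i hi).mono fun x hx ↦ by rw [hx, mul_pow, monom_smul]
  obtain ⟨i₀, hi₀, hmin⟩ := T.exists_minimalFor (fun i ↦ e i • a i) hT
  refine ⟨i₀, hi₀, fun i hi ↦ ?_⟩
  have hsub : (fun x ↦ c i₀ x ^ e i₀ - c i x ^ e i) =ᶠ[𝓝 0] fun x ↦
      monom (e i₀ • a i₀) x * v i₀ x ^ e i₀ - monom (e i • a i) x * v i x ^ e i := by
    filter_upwards [hpow i₀ hi₀, hpow i hi] with x h₀ h
    rw [h₀, h]
  exact (le_or_le_of_isNormalCrossing_sub hM ((hv i₀ hi₀).pow hM' _) ((hv i hi).pow hM' _)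
    (pow_ne_zero _ (hv0 i₀ hi₀)) (pow_ne_zero _ (hv0 i hi))
    ((hdiff i₀ hi₀ i hi).imp (.congr _ _ hsub) fun h ↦ hsub.symm.trans h)).elim id (hmin hi)

lemma exists_comp_ramify_eq_mul (hM : IsWeight M) {k e m : ℕ} (hm : m ≠ 0) (hke : k * e = m)
    {a α : ι → ℕ} (hα : α ≤ e • a) {c v : (ι → ℝ) → ℝ} (hv : IsGerm M v) (hv0 : v 0 ≠ 0)
    (hcv : ∀ᶠ x in 𝓝 0, c x = monom a x * v x) (s : ι → ℤˣ) :
    ∃ c', IsGerm M c' ∧ (α = e • a → c' 0 ≠ 0) ∧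
      ∀ᶠ x in 𝓝 0, c (ramify m s x) = c' x * monom (k • α) x := by
  have hs := IsGerm.ramify hM m s
  have hs0 := ramify_zero hm s
  obtain ⟨β, hβ⟩ := exists_add_of_le hα
  refine ⟨fun x ↦ monom a (fun i ↦ ((s i : ℤ) : ℝ)) * (monom (k • β) x * v (ramify m s x)),
    (IsGerm.const hM _).mul hM ((IsGerm.monom hM _).mul hM (hv.comp hM hs hs0)), fun hαa ↦ ?_, ?_⟩
  · obtain rfl : β = 0 := by simpa [hαa] using hβ
    simpa [hs0] using ⟨monom_units_ne_zero a s, hv0⟩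
  · filter_upwards [(hs.tendsto hs0).eventually hcv] with x hx
    rw [hx, monom_ramify, ← hke, mul_smul, hβ, smul_add, monom_add]
    ring

/-- The exponent for which `c i ^ newtonExponent d i` has the weight of `y ^ d !` whenever
`c i * y ^ i` has the weight of `y ^ d`. -/
def newtonExponent (d i : ℕ) : ℕ := d ! / (d - i)

lemma sub_mul_newtonExponent {d i : ℕ} (h : i < d) : (d - i) * newtonExponent d i = d ! :=
  Nat.mul_div_cancel' (Nat.dvd_factorial (by lia) (by lia))

lemma exists_forall_comp_ramify_eq_mul (hM : IsQuasianalyticWeight M) {d : ℕ}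
    {c : ℕ → (ι → ℝ) → ℝ}
    (hc : ∀ i < d, IsNormalCrossing M (c i) ∨ ∀ᶠ x in 𝓝 0, c i x = 0)
    (hdiff : ∀ i < d, ∀ j < d,
      IsNormalCrossing M (fun x ↦ c i x ^ newtonExponent d i - c j x ^ newtonExponent d j) ∨
        ∀ᶠ x in 𝓝 0, c i x ^ newtonExponent d i - c j x ^ newtonExponent d j = 0)
    (hne : ∃ i < d, ¬ ∀ᶠ x in 𝓝 0, c i x = 0) :
    ∃ (α : ι → ℕ) (i₀ : ℕ), i₀ < d ∧ ∀ s : ι → ℤˣ, ∃ c' : ℕ → (ι → ℝ) → ℝ,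
      (∀ i, IsGerm M (c' i)) ∧ c' i₀ 0 ≠ 0 ∧ ∀ i < d,
        (∀ᶠ x in 𝓝 0, c i (ramify (d !) s x) = c' i x * monom ((d - i) • α) x) ∧
        ((∀ᶠ x in 𝓝 0, c i x = 0) → c' i 0 = 0) := by
  classical
  have hM' := hM.toIsWeight
  have hm := d.factorial_ne_zero
  let T := {i ∈ Finset.range d | ¬ ∀ᶠ x in 𝓝 0, c i x = 0}
  have hT {i : ℕ} : i ∈ T ↔ i < d ∧ ¬ ∀ᶠ x in 𝓝 0, c i x = 0 := by simp [T]
  choose! a v hv hv0 hcv using fun i (hi : i ∈ T) ↦ (hc i (hT.1 hi).1).resolve_right (hT.1 hi).2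
  obtain ⟨i₀, hi₀, hmin⟩ := exists_forall_smul_le_smul hM (hne.imp fun i ↦ hT.2) hv hv0 hcv
    fun i hi j hj ↦ hdiff i (hT.1 hi).1 j (hT.1 hj).1
  refine ⟨newtonExponent d i₀ • a i₀, i₀, (hT.1 hi₀).1, fun s ↦ ?_⟩
  choose! c' hc' hc'0 hcc' using fun i (hi : i ∈ T) ↦ exists_comp_ramify_eq_mul hM' hm
    (sub_mul_newtonExponent (hT.1 hi).1) (hmin i hi) (hv i hi) (hv0 i hi) (hcv i hi) s
  refine ⟨fun i ↦ if i ∈ T then c' i else 0, fun i ↦ ?_, by simpa [hi₀] using hc'0 i₀ hi₀ rfl,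
    fun i hi ↦ ?_⟩
  · dsimp only
    split_ifs with hiT
    exacts [hc' i hiT, .const hM' 0]
  · by_cases hzero : ∀ᶠ x in 𝓝 0, c i x = 0
    · have hs := (IsGerm.ramify hM' (d !) s).tendsto (ramify_zero hm s)
      simpa [hT, hzero] using hs.eventually hzero
    · simpa [hT, hzero, hi] using hcc' i (hT.2 ⟨hi, hzero⟩)

lemma resolvable_mul_of_isNormalCrossing (hM : IsQuasianalyticWeight M) {d : ℕ}
    (hreg : ∀ j < d, RegularResolution M ι j) {b : (ι → ℝ) → ℝ} (hb : IsNormalCrossing M b)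
    {c : ℕ → (ι → ℝ) → ℝ} (hc : ∀ i < d, IsNormalCrossing M (c i) ∨ ∀ᶠ x in 𝓝 0, c i x = 0)
    (hdiff : ∀ i < d, ∀ j < d,
      IsNormalCrossing M (fun x ↦ c i x ^ newtonExponent d i - c j x ^ newtonExponent d j) ∨
        ∀ᶠ x in 𝓝 0, c i x ^ newtonExponent d i - c j x ^ newtonExponent d j = 0)
    (hlast : ∀ i, i + 1 = d → ∀ᶠ x in 𝓝 0, c i x = 0) {u : (ι → ℝ) × ℝ → ℝ} (hu : IsGerm M u)
    (hu0 : u 0 ≠ 0) :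
    Resolvable M (IsNormalCrossingProd M) fun p ↦
      b p.1 * (∑ i ∈ Finset.range d, c i p.1 * p.2 ^ i + p.2 ^ d * u p) := by
  have hM' := hM.toIsWeight
  have hall {f : ℕ → (ι → ℝ) → Prop} (h : ∀ i < d, ∀ᶠ x in 𝓝 0, f i x) :
      ∀ᶠ p : (ι → ℝ) × ℝ in 𝓝 0, ∀ i ∈ Finset.range d, f i p.1 :=
    (Filter.eventually_all_finset _).2 fun i hi ↦
      tendsto_fst_zero.eventually (h i (Finset.mem_range.1 hi))
  by_cases! hne : ∃ i < d, ¬ ∀ᶠ x in 𝓝 0, c i x = 0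
  · obtain ⟨α, i₀, hi₀, hramify⟩ := exists_forall_comp_ramify_eq_mul hM hc hdiff hne
    have hm := d.factorial_ne_zero
    have hπ (s : ι → ℤˣ) := (IsGerm.ramify hM' (d !) s).prodMap_id hM'
    have hπ0 (s : ι → ℤˣ) : (ramify (d !) s (0 : (ι → ℝ) × ℝ).1, (0 : (ι → ℝ) × ℝ).2) = 0 := by
      simp [ramify_zero hm]
    refine .step _ hπ hπ0 (IsGermCover.ramify hm).prodMap_id _ fun s ↦ ?_
    obtain ⟨c', hc', hc'0, hcc'⟩ := hramify s
    refine (resolvable_mul_weightedPoly hM' hreg (α := α) (hb.comp_ramify hM' hm s) hc'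
      (hu.comp hM' (hπ s) (hπ0 s)) (by rwa [hπ0]) hi₀ hc'0 fun i hi ↦
        (hcc' i (by lia)).2 (hlast i hi)).congr IsNormalCrossingProd.congr ?_
    filter_upwards [hall fun i hi ↦ (hcc' i hi).1] with p hp
    simp only [weightedPoly, Finset.sum_congr rfl fun i hi ↦ congrArg (· * p.2 ^ i) (hp i hi),
      mul_comm (p.2 ^ d)]
  · refine .base _ (((hb.comp_fst hM').mul_snd_pow_mul hM' d hu hu0).congr _ _ ?_)
    filter_upwards [hall hne] with p hp
    rw [Finset.sum_eq_zero fun i hi ↦ by rw [hp i hi, zero_mul], zero_add]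

end NewtonPolygon

section Shear

variable {M : ℕ → ℝ} {E : Type} [NormedAddCommGroup E] [NormedSpace ℝ E]

/-- The vertical translation by `ψ` along the fibres of `E × ℝ → E`. -/
def shear {E : Type} (ψ : E → ℝ) (p : E × ℝ) : E × ℝ := (p.1, p.2 + ψ p.1)

lemma shear_zero {E : Type} [NormedAddCommGroup E] {ψ : E → ℝ} (h0 : ψ 0 = 0) : shear ψ 0 = 0 := by
  simp [shear, h0]

protected lemma IsGerm.shear (hM : IsWeight M) {ψ : E → ℝ} (hψ : IsGerm M ψ) :
    IsGerm M (shear ψ) :=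
  (IsGerm.clm hM (.fst ℝ E ℝ)).prodMk hM ((IsGerm.snd hM).add hM (hψ.comp_fst hM))

lemma vertDeriv_comp_shear {ψ : E → ℝ} {f : E × ℝ → ℝ} {p : E × ℝ}
    (hf : DifferentiableAt ℝ f (shear ψ p)) (hfψ : DifferentiableAt ℝ (fun p ↦ f (shear ψ p)) p) :
    vertDeriv (fun p ↦ f (shear ψ p)) p = vertDeriv f (shear ψ p) := by
  simp only [vertDeriv, dirDeriv, ← hf.lineDeriv_eq_fderiv, ← hfψ.lineDeriv_eq_fderiv]
  simp [lineDeriv, shear, add_right_comm]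

lemma IsGerm.vertDeriv_iterate_comp_shear (hM : IsWeight M) {ψ : E → ℝ} (hψ : IsGerm M ψ)
    (h0 : ψ 0 = 0) (k : ℕ) : ∀ {f : E × ℝ → ℝ}, IsGerm M f →
      ∀ᶠ p in 𝓝 0, vertDeriv^[k] (fun p ↦ f (shear ψ p)) p = vertDeriv^[k] f (shear ψ p) := by
  induction k with
  | zero => simp
  | succ k ih =>
    intro f hf
    have hshear := hψ.shear hM
    have hderiv : vertDeriv (fun p ↦ f (shear ψ p)) =ᶠ[𝓝 0] fun p ↦ vertDeriv f (shear ψ p) := by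
      filter_upwards [(hf.comp hM hshear (shear_zero h0)).eventually_contDiffAt,
        (hshear.tendsto (shear_zero h0)).eventually hf.eventually_contDiffAt] with p hp hp'
      exact vertDeriv_comp_shear (hp'.differentiableAt (by simp)) (hp.differentiableAt (by simp))
    exact (dirDeriv_iterate_congr hderiv _ k).trans (ih (hf.dirDeriv hM _))

lemma Resolvable.of_comp_shear (hM : IsWeight M) {ψ : E → ℝ} (hψ : IsGerm M ψ) (h0 : ψ 0 = 0)
    {P : (E × ℝ → ℝ) → Prop} {f : E × ℝ → ℝ} (h : Resolvable M P fun p ↦ f (shear ψ p)) :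
    Resolvable M P f := by
  have hneg : IsGerm M fun x ↦ -ψ x := hψ.clm_comp hM (-.id ℝ ℝ)
  refine .of_right_inverse (σ := shear fun x ↦ -ψ x) (hψ.shear hM) (shear_zero h0)
    ((hneg.shear hM).tendsto (shear_zero (by simp [h0]))) (.of_forall fun p ↦ ?_) h
  simp [shear]

end Shear

section SimultaneousResolution

variable {M : ℕ → ℝ}

lemma not_eventually_prod_eq_zero {E : Type} [NormedAddCommGroup E] [NormedSpace ℝ E]
    (hM : IsQuasianalyticWeight M) (S : Finset (E → ℝ)) (hS : ∀ g ∈ S, IsGerm M g)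
    (h : ∀ g ∈ S, ¬ ∀ᶠ x in 𝓝 0, g x = 0) : ¬ ∀ᶠ x in 𝓝 0, ∏ g ∈ S, g x = 0 := by
  classical
  induction S using Finset.induction_on with
  | empty => simpa using NeBot.ne inferInstance
  | insert g S hg ih =>
    rw [Finset.forall_mem_insert] at hS h
    simp only [Finset.prod_insert hg]
    exact fun hzero ↦ (hS.1.eventually_eq_zero_or_eq_zero hM (.prod hM.toIsWeight S hS.2)
      hzero).elim h.1 (ih hS.2 h.2)

lemma Resolvable.of_forall_comp_fst {E : Type} [NormedAddCommGroup E] [NormedSpace ℝ E]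
    (hM : IsWeight M) {P : (E → ℝ) → Prop} {P' : (E × ℝ → ℝ) → Prop} {f : E → ℝ}
    (hf : Resolvable M P f) : ∀ {G : E × ℝ → ℝ},
      (∀ π : E → E, IsGerm M π → π 0 = 0 → P (fun x ↦ f (π x)) →
        Resolvable M P' fun p ↦ G (π p.1, p.2)) → Resolvable M P' G := by
  induction hf with
  | base f hf => exact fun h ↦ h id (IsGerm.clm hM (.id ℝ E)) rfl hf
  | step π hπ h0 hcover f _ ih =>
    intro G h
    refine .step _ (fun j ↦ (hπ j).prodMap_id hM) (fun j ↦ by simp [h0]) hcover.prodMap_id G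
      fun j ↦ ih j fun π' hπ' h0' hP ↦ ?_
    exact h (fun x ↦ π j (π' x)) ((hπ j).comp hM hπ' h0') (by simp [h0, h0']) hP

/-- Resolution of singularities for germs of class `M` in the variables `ι`. -/
def Resolution (M : ℕ → ℝ) (ι : Type) [Fintype ι] : Prop :=
  ∀ f : (ι → ℝ) → ℝ, IsGerm M f → (¬ ∀ᶠ x in 𝓝 0, f x = 0) → Resolvable M (IsNormalCrossing M) f

variable {ι : Type} [Fintype ι]

-- Factors of a normal crossing are normal crossings, so it suffices to resolve a product.
lemma Resolution.resolvable_of_forall (hM : IsQuasianalyticWeight M) (hres : Resolution M ι)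
    (S : Finset ((ι → ℝ) → ℝ)) (hS : ∀ g ∈ S, IsGerm M g) {P : ((ι → ℝ) × ℝ → ℝ) → Prop}
    {G : (ι → ℝ) × ℝ → ℝ} (h : ∀ π, IsGerm M π → π 0 = 0 →
      (∀ g ∈ S, IsNormalCrossing M (fun x ↦ g (π x)) ∨ ∀ᶠ x in 𝓝 0, g x = 0) →
      Resolvable M P fun p ↦ G (π p.1, p.2)) : Resolvable M P G := by
  classical
  let T := S.filter fun g ↦ ¬ ∀ᶠ x in 𝓝 0, g x = 0
  have hT : ∀ g ∈ T, IsGerm M g := fun g hg ↦ hS g (Finset.mem_filter.1 hg).1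
  have hT0 := not_eventually_prod_eq_zero hM T hT fun g hg ↦ (Finset.mem_filter.1 hg).2
  refine (hres _ (.prod hM.toIsWeight T hT) hT0).of_forall_comp_fst hM.toIsWeight
    fun π hπ h0 hprod ↦ h π hπ h0 fun g hg ↦ or_iff_not_imp_right.2 fun hg0 ↦ ?_
  exact .of_prod hM (g := fun g x ↦ g (π x)) (fun g hg ↦ (hT g hg).comp hM.toIsWeight hπ h0) hprod
    (Finset.mem_filter.2 ⟨hg, hg0⟩)

end SimultaneousResolution

section Resolution

variable {M : ℕ → ℝ} {ι : Type} [Fintype ι]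

lemma Resolution.resolvable_mul_of_vertDeriv_eq_zero (hM : IsQuasianalyticWeight M)
    (hres : Resolution M ι) {d : ℕ} (hreg : ∀ j < d, RegularResolution M ι j) {b : (ι → ℝ) → ℝ}
    (hb : IsGerm M b) (hb0 : ¬ ∀ᶠ x in 𝓝 0, b x = 0) {F : (ι → ℝ) × ℝ → ℝ} (hF : IsGerm M F)
    (hd : vertDeriv^[d] F 0 ≠ 0)
    (hlast : ∀ i, i + 1 = d → ∀ᶠ x in 𝓝 0, vertDeriv^[i] F (x, 0) = 0) :
    Resolvable M (IsNormalCrossingProd M) fun p ↦ b p.1 * F p := by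
  classical
  have hM' := hM.toIsWeight
  obtain ⟨c, u, hc, hu, hFcu⟩ := hF.exists_taylor hM' d
  have hcoeff := eventually_vertDeriv_iterate_taylor hM' d hc hu hFcu
  have hu0 : u 0 ≠ 0 := fun hu0 ↦ hd <| by
    simpa [← Prod.zero_eq_mk, hu0] using hcoeff.self_of_nhds.2
  have hclast : ∀ i, i + 1 = d → ∀ᶠ x in 𝓝 0, c i x = 0 := fun i hi ↦ by
    filter_upwards [hcoeff, hlast i hi] with x hx hx0
    simpa [hx0, i.factorial_ne_zero] using (hx.1 i (by lia)).symm
  let diff (q : ℕ × ℕ) (x : ι → ℝ) : ℝ :=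
    c q.1 x ^ newtonExponent d q.1 - c q.2 x ^ newtonExponent d q.2
  let S : Finset ((ι → ℝ) → ℝ) := insert b
    ((Finset.range d).image c ∪ (Finset.range d ×ˢ Finset.range d).image diff)
  have hcS : ∀ i < d, c i ∈ S := fun i hi ↦ Finset.mem_insert_of_mem <|
    Finset.mem_union_left _ <| Finset.mem_image_of_mem _ <| Finset.mem_range.2 hi
  have hdiffS : ∀ i < d, ∀ j < d, diff (i, j) ∈ S := fun i hi j hj ↦ Finset.mem_insert_of_mem <|
    Finset.mem_union_right _ <| Finset.mem_image_of_mem _ <| by simp [hi, hj]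
  have hS : ∀ g ∈ S, IsGerm M g := by
    simp only [S, Finset.forall_mem_insert, Finset.forall_mem_union, Finset.forall_mem_image]
    exact ⟨hb, fun i _ ↦ hc i, fun q _ ↦ ((hc _).pow hM' _).sub hM' ((hc _).pow hM' _)⟩
  refine .congr .congr (hres.resolvable_of_forall hM S hS fun π hπ h0 hnc ↦ ?_) (g := fun p ↦ _)
    (hFcu.mono fun p hp ↦ congrArg (b p.1 * ·) hp.symm)
  have ht := hπ.tendsto h0
  have hπ' := hπ.prodMap_id hM'
  exact resolvable_mul_of_isNormalCrossing hM hreg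
    ((hnc b (Finset.mem_insert_self _ _)).resolve_right hb0)
    (fun i hi ↦ (hnc _ (hcS i hi)).imp_right fun h ↦ ht.eventually h)
    (fun i hi j hj ↦ (hnc _ (hdiffS i hi j hj)).imp_right fun h ↦ ht.eventually h)
    (fun i hi ↦ ht.eventually (hclast i hi)) (hu.comp hM' hπ' (by simp [h0])) (by simpa [h0])

-- The Tschirnhaus shear along a zero of the `(d - 1)`-st derivative kills its coefficient.
lemma Resolution.regularResolution (hM : IsQuasianalyticWeight M) (hres : Resolution M ι) (d : ℕ) :
    RegularResolution M ι d := by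
  have hM' := hM.toIsWeight
  induction d using Nat.strong_induction_on with
  | _ d hreg =>
    intro b F hb hb0 hF hd
    rcases d with _ | e
    · exact hres.resolvable_mul_of_vertDeriv_eq_zero hM hreg hb hb0 hF hd (by simp)
    by_cases! he : vertDeriv^[e] F 0 ≠ 0
    · exact hreg e (Nat.lt_succ_self e) b F hb hb0 hF he
    rw [Function.iterate_succ_apply'] at hd
    obtain ⟨ψ, hψ, hψ0, hroot⟩ := (hF.dirDeriv_iterate hM' _ e).exists_implicit hM' he hd
    have hshear := hψ.shear hM'
    refine .of_comp_shear hM' hψ hψ0 (hres.resolvable_mul_of_vertDeriv_eq_zero hM hreg hb hb0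
      (hF.comp hM' hshear (shear_zero hψ0)) ?_ fun i hi ↦ ?_)
    · rw [(hψ.vertDeriv_iterate_comp_shear hM' hψ0 _ hF).self_of_nhds, shear_zero hψ0,
        Function.iterate_succ_apply']
      exact hd
    · obtain rfl : i = e := Nat.succ_injective hi
      filter_upwards [tendsto_prodMk_zero.eventually
        (hψ.vertDeriv_iterate_comp_shear hM' hψ0 i hF), hroot] with x hx hx0
      rw [hx]
      simpa [shear] using hx0

lemma Resolution.of_equiv (hM : IsWeight M) {κ : Type} [Fintype κ] (e : ι ≃ κ)
    (hres : Resolution M ι) : Resolution M κ := by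
  intro f hf hf0
  let L : (κ → ℝ) ≃L[ℝ] (ι → ℝ) := (ContinuousLinearEquiv.piCongrLeft ℝ (fun _ ↦ ℝ) e).symm
  have hL : Tendsto L (𝓝 0) (𝓝 0) := L.continuous.tendsto' _ _ (map_zero L)
  have hcomp (γ : ι → ℕ) (x : κ → ℝ) : monom γ (L x) = monom (γ ∘ e.symm) x := by
    have hLx (i : ι) : L x i = x (e i) := rfl
    simpa [monom, hLx] using e.prod_comp fun k ↦ x k ^ γ (e.symm k)
  have hres' := hres (fun x ↦ f (L.symm x)) (hf.comp_clm hM (L.symm : (ι → ℝ) →L[ℝ] (κ → ℝ)))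
    fun h ↦ hf0 <| by simpa using hL.eventually h
  simpa using hres'.comp_equiv hM (P' := IsNormalCrossing M) L fun g ⟨γ, u, hu, hu0, hgu⟩ ↦
    ⟨γ ∘ e.symm, fun x ↦ u (L x), hu.comp_clm hM (L : (κ → ℝ) →L[ℝ] (ι → ℝ)), by simpa,
      (hL.eventually hgu).mono fun x hx ↦ by rwa [hcomp] at hx⟩

/-- Splitting off the coordinate `none`. -/
noncomputable def splitOption (ι : Type) [Fintype ι] : (Option ι → ℝ) ≃L[ℝ] (ι → ℝ) × ℝ :=
  (LinearEquiv.piOptionEquivProd ℝ ≪≫ₗ LinearEquiv.prodComm ℝ ℝ (ι → ℝ)).toContinuousLinearEquiv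

lemma IsNormalCrossingProd.comp_splitOption (hM : IsWeight M) {f : (ι → ℝ) × ℝ → ℝ}
    (hf : IsNormalCrossingProd M f) : IsNormalCrossing M fun x ↦ f (splitOption ι x) := by
  obtain ⟨γ, k, u, hu, hu0, hfu⟩ := hf
  have hsplit : Tendsto (splitOption ι) (𝓝 0) (𝓝 0) :=
    (splitOption ι).continuous.tendsto' _ _ (map_zero _)
  refine ⟨fun o ↦ o.elim k γ, fun x ↦ u (splitOption ι x),
    hu.comp_clm hM (splitOption ι : (Option ι → ℝ) →L[ℝ] _), by simpa, ?_⟩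
  filter_upwards [hsplit.eventually hfu] with x hx
  have hmonom : monom (fun o ↦ o.elim k γ) x = x none ^ k * monom γ (splitOption ι x).1 :=
    Fintype.prod_option _
  rw [hx, hmonom, mul_comm (x none ^ k)]
  rfl

lemma Resolution.option (hM : IsQuasianalyticWeight M) (hres : Resolution M ι) :
    Resolution M (Option ι) := by
  have hM' := hM.toIsWeight
  intro f hf hf0
  by_cases! h0 : f 0 ≠ 0
  · exact .base _ ⟨0, f, hf, h0, by simp⟩
  obtain ⟨v, d, hd⟩ := hf.exists_dirDeriv_iterate_ne_zero hM hf0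
  have hv : v ≠ 0 := by
    rintro rfl
    rcases d with _ | d
    · exact hd h0
    · simp [Function.iterate_succ_apply', dirDeriv] at hd
  let e := (splitOption ι).symm
  have he : e (0, 1) ≠ 0 := by simp
  obtain ⟨A, hA⟩ := SeparatingDual.exists_continuousLinearEquiv_apply_eq (R := ℝ) he hv
  let L : (ι → ℝ) × ℝ →L[ℝ] (Option ι → ℝ) := (e.trans A : ((ι → ℝ) × ℝ) ≃L[ℝ] (Option ι → ℝ))
  have hregular : vertDeriv^[d] (fun p ↦ f (L p)) 0 ≠ 0 := by
    rw [(hf.dirDeriv_iterate_comp_clm hM' L _ d).self_of_nhds, map_zero]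
    simpa [L, hA] using hd
  have hsplit := hres.regularResolution hM d _ _ (.const hM' 1)
    (by simpa using NeBot.ne inferInstance) (hf.comp_clm hM' L) hregular
  refine .of_right_inverse (σ := A.symm) (IsGerm.clm hM' (A : (Option ι → ℝ) →L[ℝ] _)) (map_zero A)
    (A.symm.continuous.tendsto' _ _ (map_zero _)) (by simp) ?_
  simpa [L, e] using hsplit.comp_equiv hM' (splitOption ι) fun g hg ↦ hg.comp_splitOption hM'

theorem resolution (hM : IsQuasianalyticWeight M) (ι : Type) [Fintype ι] : Resolution M ι := by
  have hM' := hM.toIsWeight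
  refine Finite.induction_empty_option (P := fun ι ↦ ∀ [Fintype ι], Resolution M ι) ?_ ?_ ?_ ι
  · intro ι κ e h _
    have := Fintype.ofEquiv κ e.symm
    exact .of_equiv hM' e h
  · intro _ f hf hf0
    refine .base _ ⟨0, f, hf, fun h0 ↦ hf0 (.of_forall fun x ↦ ?_), by simp⟩
    rw [Subsingleton.elim x 0, h0]
  · intro ι _ h hι
    rw [Subsingleton.elim hι]
    exact h.option hM

end Resolution

section GradientInequality

variable {E F : Type*} [NormedAddCommGroup E] [NormedSpace ℝ E]
  [NormedAddCommGroup F] [NormedSpace ℝ F]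

/-- The Łojasiewicz gradient inequality for `f` on some neighbourhood of `a`. -/
def HasGradientInequalityAt (f : E → ℝ) (a : E) : Prop :=
  ∃ C > 0, ∃ μ ∈ Ioc (0 : ℝ) 1, ∀ᶠ x in 𝓝 a, C * |f x| ^ (1 - μ) ≤ ‖fderiv ℝ f x‖

lemma exists_mul_rpow_one_sub_le {J : Type*} (T : Finset J) {C μ : J → ℝ} (hC : ∀ j, 0 < C j)
    (hμ : ∀ j, μ j ∈ Ioc 0 1) (H : ℝ) :
    ∃ c > 0, ∃ ν ∈ Ioc (0 : ℝ) 1, ∀ j ∈ T, ∀ t ∈ Icc 0 H,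
      c * t ^ (1 - ν) ≤ C j * t ^ (1 - μ j) := by
  have hH : 0 < max H 1 := lt_max_of_lt_right one_pos
  obtain ⟨c, hcT, hc⟩ := (((eventually_all_finset T).2 fun j _ ↦
    Ioc_mem_nhdsGT (div_pos (hC j) hH)).and self_mem_nhdsWithin).exists
  obtain ⟨ν, hνT, hν⟩ := (((eventually_all_finset T).2 fun j _ ↦
    Ioc_mem_nhdsGT (hμ j).1).and (Ioc_mem_nhdsGT one_pos)).exists
  refine ⟨c, hc, ν, hν, fun j hj t ht ↦ ?_⟩
  have ht' : t ^ (μ j - ν) ≤ max H 1 := calc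
    t ^ (μ j - ν) ≤ max H 1 ^ (μ j - ν) :=
      Real.rpow_le_rpow ht.1 (ht.2.trans (le_max_left _ _)) (sub_nonneg.2 (hνT j hj).2)
    _ ≤ max H 1 :=
      Real.rpow_le_self_of_one_le (le_max_right _ _) (by linarith [(hμ j).2, hν.1])
  calc c * t ^ (1 - ν) = c * t ^ (μ j - ν) * t ^ (1 - μ j) := by
        rw [mul_assoc, ← Real.rpow_add_of_nonneg ht.1 (sub_nonneg.2 (hνT j hj).2)
          (sub_nonneg.2 (hμ j).2)]
        ring_nf
    _ ≤ c * max H 1 * t ^ (1 - μ j) := by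
        have := ht.1
        gcongr
    _ ≤ C j * t ^ (1 - μ j) :=
        mul_le_mul_of_nonneg_right ((le_div_iff₀ hH).1 (hcT j hj).2) (Real.rpow_nonneg ht.1 _)

namespace HasGradientInequalityAt

lemma of_eventually_eq_zero {f : E → ℝ} {a : E} (h : ∀ᶠ x in 𝓝 a, f x = 0) :
    HasGradientInequalityAt f a := by
  refine ⟨1, one_pos, 1 / 2, by norm_num, ?_⟩
  filter_upwards [h] with x hx
  rw [hx, abs_zero, Real.zero_rpow (by norm_num), mul_zero]
  exact norm_nonneg _

lemma of_fderiv_ne_zero {f : E → ℝ} {a : E} (hf : ContinuousAt (fderiv ℝ f) a)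
    (h : fderiv ℝ f a ≠ 0) : HasGradientInequalityAt f a := by
  have ha : 0 < ‖fderiv ℝ f a‖ := norm_pos_iff.2 h
  refine ⟨‖fderiv ℝ f a‖ / 2, half_pos ha, 1, by norm_num, ?_⟩
  filter_upwards [hf.norm.eventually (lt_mem_nhds (half_lt_self ha))] with x hx
  simpa using hx.le

lemma eventually_of_comp {f : F → ℝ} {π : E → F} {a : E}
    (hf : ∀ᶠ y in 𝓝 (π a), DifferentiableAt ℝ f y)
    (hπ : ∀ᶠ x in 𝓝 a, DifferentiableAt ℝ π x) (hπ' : ContinuousAt (fderiv ℝ π) a)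
    (h : HasGradientInequalityAt (fun x ↦ f (π x)) a) :
    ∃ C > 0, ∃ μ ∈ Ioc (0 : ℝ) 1, ∀ᶠ x in 𝓝 a, C * |f (π x)| ^ (1 - μ) ≤ ‖fderiv ℝ f (π x)‖ := by
  obtain ⟨C, hC, μ, hμ, h⟩ := h
  have hL : 0 < ‖fderiv ℝ π a‖ + 1 := by positivity
  refine ⟨C / (‖fderiv ℝ π a‖ + 1), div_pos hC hL, μ, hμ, ?_⟩
  filter_upwards [h, hπ.self_of_nhds.continuousAt.eventually hf, hπ,
    hπ'.norm.eventually (gt_mem_nhds (lt_add_one _))] with x hx hfx hπx hπx'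
  rw [div_mul_eq_mul_div, div_le_iff₀ hL]
  calc C * |f (π x)| ^ (1 - μ) ≤ ‖fderiv ℝ (fun x ↦ f (π x)) x‖ := hx
    _ = ‖(fderiv ℝ f (π x)).comp (fderiv ℝ π x)‖ := by rw [← fderiv_comp x hfx hπx]; rfl
    _ ≤ ‖fderiv ℝ f (π x)‖ * ‖fderiv ℝ π x‖ := ContinuousLinearMap.opNorm_comp_le _ _
    _ ≤ ‖fderiv ℝ f (π x)‖ * (‖fderiv ℝ π a‖ + 1) := by gcongr

theorem exists_uniform {f : E → ℝ} {K U : Set E} (hK : IsCompact K) (hU : IsOpen U) (hKU : K ⊆ U)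
    (hf : ContinuousOn f U) (h : ∀ a ∈ K, HasGradientInequalityAt f a) :
    ∃ C > 0, ∃ μ ∈ Ioc (0 : ℝ) 1, ∃ W, IsOpen W ∧ K ⊆ W ∧ W ⊆ U ∧
      ∀ x ∈ W, C * |f x| ^ (1 - μ) ≤ ‖fderiv ℝ f x‖ := by
  choose C hC μ hμ hCμ using fun a : K ↦ h a a.2
  obtain ⟨H, hH⟩ := (hK.image_of_continuousOn (hf.mono hKU).abs).bddAbove
  have hV (a : K) : ∀ᶠ x in 𝓝 (a : E), x ∈ U ∧ |f x| < H + 1 ∧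
      C a * |f x| ^ (1 - μ a) ≤ ‖fderiv ℝ f x‖ := by
    have haU := hU.mem_nhds (hKU a.2)
    have haH : |f a| < H + 1 := (hH (mem_image_of_mem _ a.2)).trans_lt (lt_add_one H)
    filter_upwards [haU, (hf.continuousAt haU).abs.eventually (gt_mem_nhds haH), hCμ a]
      with x h₁ h₂ h₃ using ⟨h₁, h₂, h₃⟩
  choose V hVsub hVo haV using fun a : K ↦ eventually_nhds_iff.1 (hV a)
  obtain ⟨T, hT⟩ := hK.elim_finite_subcover V hVo fun a ha ↦ mem_iUnion.2 ⟨⟨a, ha⟩, haV ⟨a, ha⟩⟩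
  obtain ⟨c, hc, ν, hν, hcν⟩ := exists_mul_rpow_one_sub_le T hC hμ (H + 1)
  refine ⟨c, hc, ν, hν, ⋃ a ∈ T, V a, isOpen_biUnion fun a _ ↦ hVo a, hT,
    iUnion₂_subset fun a _ x hx ↦ (hVsub a x hx).1, fun x hx ↦ ?_⟩
  obtain ⟨a, haT, hxa⟩ := mem_iUnion₂.1 hx
  obtain ⟨-, hxH, hle⟩ := hVsub a x hxa
  exact (hcν a haT _ ⟨abs_nonneg _, hxH.le⟩).trans hle

end HasGradientInequalityAt

end GradientInequality

section NormalCrossing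

variable {M : ℕ → ℝ} {ι : Type} [Fintype ι]

lemma differentiable_monom (γ : ι → ℕ) : Differentiable ℝ (monom γ) := by
  unfold monom
  fun_prop

lemma coord_mul_fderiv_monom [DecidableEq ι] (γ : ι → ℕ) (x : ι → ℝ) (i : ι) :
    x i * fderiv ℝ (monom γ) x (Pi.single i 1) = γ i * monom γ x := by
  have hpow (j : ι) : HasFDerivAt (fun y : ι → ℝ ↦ y j ^ γ j) _ x :=
    HasFDerivAt.pow (hasFDerivAt_apply (𝕜 := ℝ) j x) (γ j)
  have h : HasFDerivAt (monom γ) _ x :=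
    HasFDerivAt.finsetProd (u := Finset.univ) fun j _ ↦ hpow j
  rw [h.fderiv]
  suffices x i * ((∏ j ∈ Finset.univ.erase i, x j ^ γ j) * (γ i * x i ^ (γ i - 1))) =
    γ i * monom γ x by simpa [Pi.single_apply]
  rw [monom, ← Finset.mul_prod_erase _ _ (Finset.mem_univ i)]
  rcases eq_or_ne (γ i) 0 with hi | hi
  · simp [hi]
  · rw [← mul_pow_sub_one hi (x i)]
    ring

lemma abs_monom_mul_le {γ : ι → ℕ} {f u : (ι → ℝ) → ℝ} {x : ι → ℝ}
    (hf : ∀ᶠ y in 𝓝 x, f y = monom γ y * u y) (hu : DifferentiableAt ℝ u x) {i : ι}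
    (hi : γ i ≠ 0) :
    (|u x| - ‖x‖ * ‖fderiv ℝ u x‖) * |monom γ x| ≤ |x i| * ‖fderiv ℝ f x‖ := by
  classical
  have he : ‖(Pi.single i 1 : ι → ℝ)‖ = 1 := by rw [Pi.norm_single, norm_one]
  have hfx : x i * fderiv ℝ f x (Pi.single i 1) =
      monom γ x * (γ i * u x + x i * fderiv ℝ u x (Pi.single i 1)) := by
    rw [EventuallyEq.fderiv_eq hf, fderiv_fun_mul (differentiable_monom γ x) hu]
    simp only [add_apply, smul_apply, smul_eq_mul]
    linear_combination u x * coord_mul_fderiv_monom γ x i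
  have hfi : |fderiv ℝ f x (Pi.single i 1)| ≤ ‖fderiv ℝ f x‖ := by
    simpa [he] using (fderiv ℝ f x).le_opNorm (Pi.single i 1)
  have hui : |x i * fderiv ℝ u x (Pi.single i 1)| ≤ ‖x‖ * ‖fderiv ℝ u x‖ := by
    rw [abs_mul]
    gcongr
    · exact norm_le_pi_norm x i
    · simpa [he] using (fderiv ℝ u x).le_opNorm (Pi.single i 1)
  have hγu : |u x| ≤ |γ i * u x| := by
    rw [abs_mul, Nat.abs_cast]
    exact le_mul_of_one_le_left (abs_nonneg _) (mod_cast Nat.one_le_iff_ne_zero.2 hi)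
  have hsum : |u x| - ‖x‖ * ‖fderiv ℝ u x‖ ≤
      |γ i * u x + x i * fderiv ℝ u x (Pi.single i 1)| := by
    have := abs_sub_abs_le_abs_add (γ i * u x) (x i * fderiv ℝ u x (Pi.single i 1))
    linarith
  calc (|u x| - ‖x‖ * ‖fderiv ℝ u x‖) * |monom γ x|
      ≤ |γ i * u x + x i * fderiv ℝ u x (Pi.single i 1)| * |monom γ x| := by gcongr
    _ = |x i| * |fderiv ℝ f x (Pi.single i 1)| := by rw [← abs_mul, ← abs_mul, hfx, mul_comm]
    _ ≤ |x i| * ‖fderiv ℝ f x‖ := by gcongr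

lemma exists_abs_pow_le_abs_monom {γ : ι → ℕ} (hγ : γ ≠ 0) (x : ι → ℝ) :
    ∃ i, γ i ≠ 0 ∧ |x i| ^ (∑ j, γ j) ≤ |monom γ x| := by
  classical
  obtain ⟨k, hk⟩ := Function.ne_iff.1 hγ
  obtain ⟨i, hi, hmin⟩ := (Finset.univ.filter (γ · ≠ 0)).exists_min_image (|x ·|)
    ⟨k, by simpa using hk⟩
  refine ⟨i, (Finset.mem_filter.1 hi).2, ?_⟩
  rw [monom, Finset.abs_prod, ← Finset.prod_pow_eq_pow_sum]
  refine Finset.prod_le_prod (fun _ _ ↦ by positivity) fun j _ ↦ ?_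
  rw [abs_pow]
  by_cases hj : γ j = 0
  · simp [hj]
  · exact pow_le_pow_left₀ (abs_nonneg _) (hmin j (by simpa using hj)) _

lemma mul_rpow_one_sub_le {a m t g : ℝ} {n : ℕ} (hn : 1 < n) (hm : 0 ≤ m) (ht : 0 ≤ t)
    (hg : 0 ≤ g) (htm : t ^ n ≤ m) (h : a * m ≤ t * g) : a * m ^ (1 - (n : ℝ)⁻¹) ≤ g := by
  have hn' : (n : ℝ)⁻¹ < 1 := inv_lt_one_of_one_lt₀ (mod_cast hn)
  rcases hm.eq_or_lt with rfl | hm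
  · rwa [Real.zero_rpow (sub_pos.2 hn').ne', mul_zero]
  have htm' : t ≤ m ^ (n : ℝ)⁻¹ := by
    rw [← Real.pow_rpow_inv_natCast ht (Nat.ne_zero_of_lt hn)]
    exact Real.rpow_le_rpow (by positivity) htm (by positivity)
  rw [Real.rpow_sub hm, Real.rpow_one, ← mul_div_assoc, div_le_iff₀ (by positivity), mul_comm g]
  exact h.trans (mul_le_mul_of_nonneg_right htm' hg)

lemma IsNormalCrossing.hasGradientInequalityAt (hM : IsWeight M) {f : (ι → ℝ) → ℝ}
    (h : IsNormalCrossing M f) (h0 : f 0 = 0) : HasGradientInequalityAt f 0 := by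
  classical
  obtain ⟨γ, u, hu, hu0, hfu⟩ := h
  have hγ : γ ≠ 0 := by
    rintro rfl
    have := hfu.self_of_nhds
    simp only [h0, monom_zero, one_mul] at this
    exact hu0 this.symm
  have ha : 0 < |u 0| := abs_pos.2 hu0
  set n : ℕ := ∑ j, γ j + 1
  have hn1 : 1 < n := by
    obtain ⟨k, hk⟩ := Function.ne_iff.1 hγ
    have := Finset.single_le_sum (fun j _ ↦ Nat.zero_le (γ j)) (Finset.mem_univ k)
    have : γ k ≠ 0 := hk
    omega
  have hμ : (n : ℝ)⁻¹ ∈ Ioc 0 1 := ⟨by positivity, (inv_lt_one_of_one_lt₀ (mod_cast hn1)).le⟩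
  have hlow : Tendsto (fun x ↦ |u x| - ‖x‖ * ‖fderiv ℝ u x‖) (𝓝 0) (𝓝 |u 0|) := by
    have : ContinuousAt (fun x ↦ |u x| - ‖x‖ * ‖fderiv ℝ u x‖) 0 :=
      hu.continuousAt.abs.sub (continuousAt_id.norm.mul (hu.fderiv hM).continuousAt.norm)
    simpa [ContinuousAt] using this
  refine ⟨|u 0| / 2 / (2 * |u 0|) ^ (1 - (n : ℝ)⁻¹), by positivity, (n : ℝ)⁻¹, hμ, ?_⟩
  filter_upwards [hfu.eventually_nhds, hu.eventually_contDiffAt,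
    hlow.eventually (lt_mem_nhds (half_lt_self ha)),
    hu.continuousAt.abs.eventually (gt_mem_nhds (by linarith : |u 0| < 2 * |u 0|)),
    Metric.ball_mem_nhds 0 one_pos] with x hfx hux hlow hup hx
  obtain ⟨i, hi, hxi⟩ := exists_abs_pow_le_abs_monom hγ x
  have hxn : |x i| ^ n ≤ |monom γ x| := by
    have : |x i| ≤ 1 := (norm_le_pi_norm x i).trans (mem_ball_zero_iff.1 hx).le
    exact (pow_le_pow_of_le_one (abs_nonneg _) this (Nat.le_succ _)).trans hxi
  have hmonom : |u 0| / 2 * |monom γ x| ^ (1 - (n : ℝ)⁻¹) ≤ ‖fderiv ℝ f x‖ :=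
    mul_rpow_one_sub_le hn1 (abs_nonneg _) (abs_nonneg _) (norm_nonneg _) hxn <|
      (mul_le_mul_of_nonneg_right hlow.le (abs_nonneg _)).trans
        (abs_monom_mul_le hfx (hux.differentiableAt (by simp)) hi)
  refine le_trans ?_ hmonom
  rw [hfx.self_of_nhds, abs_mul, Real.mul_rpow (abs_nonneg _) (abs_nonneg _), div_mul_eq_mul_div,
    div_le_iff₀ (by positivity), ← mul_assoc]
  gcongr
  exact sub_nonneg.2 hμ.2

end NormalCrossing

section GermGradientInequality

variable {M : ℕ → ℝ}

lemma HasGradientInequalityAt.of_isGermCover {E F J : Type} [NormedAddCommGroup E]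
    [NormedSpace ℝ E] [NormedAddCommGroup F] [NormedSpace ℝ F] (hM : IsWeight M) {π : J → E → F}
    (hπ : ∀ j, IsGerm M (π j)) (h0 : ∀ j, π j 0 = 0) (hcover : IsGermCover π) {f : F → ℝ}
    (hf : IsGerm M f) (hf0 : f 0 = 0) (h : ∀ j, HasGradientInequalityAt (fun x ↦ f (π j x)) 0) :
    HasGradientInequalityAt f 0 := by
  have hf' : ∀ᶠ y in 𝓝 0, DifferentiableAt ℝ f y :=
    hf.eventually_contDiffAt.mono fun y hy ↦ hy.differentiableAt (by simp)
  choose C hC μ hμ hCμ using fun j ↦ (h j).eventually_of_comp (by rwa [h0])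
    ((hπ j).eventually_contDiffAt.mono fun x hx ↦ hx.differentiableAt (by simp))
    ((hπ j).fderiv hM).continuousAt
  have hf1 : ∀ᶠ y in 𝓝 0, |f y| < 1 :=
    hf.continuousAt.abs.eventually (gt_mem_nhds (by simp [hf0]))
  obtain ⟨T, hT⟩ := hcover _ hCμ
  obtain ⟨c, hc, ν, hν, hcν⟩ := exists_mul_rpow_one_sub_le T hC hμ 1
  refine ⟨c, hc, ν, hν, ?_⟩
  filter_upwards [hT, hf1] with y hy hy1
  obtain ⟨j, hj, x, hx, rfl⟩ := mem_iUnion₂.1 hy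
  exact (hcν j hj _ ⟨abs_nonneg _, hy1.le⟩).trans hx

variable {ι : Type} [Fintype ι]

lemma Resolvable.hasGradientInequalityAt (hM : IsWeight M) {f : (ι → ℝ) → ℝ}
    (h : Resolvable M (IsNormalCrossing M) f) (hf : IsGerm M f) (h0 : f 0 = 0) :
    HasGradientInequalityAt f 0 := by
  induction h with
  | base f h => exact h.hasGradientInequalityAt hM h0
  | step π hπ hπ0 hcover f _ ih =>
    exact .of_isGermCover hM hπ hπ0 hcover hf h0 fun j ↦
      ih j (hf.comp hM (hπ j) (hπ0 j)) (by simp only [hπ0, h0])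

theorem IsGerm.hasGradientInequalityAt (hM : IsQuasianalyticWeight M) {f : (ι → ℝ) → ℝ}
    (hf : IsGerm M f) (h0 : f 0 = 0) : HasGradientInequalityAt f 0 := by
  by_cases h : ∀ᶠ x in 𝓝 0, f x = 0
  · exact .of_eventually_eq_zero h
  · exact (resolution hM ι f hf h).hasGradientInequalityAt hM.toIsWeight hf h0

end GermGradientInequality

section WeightSequence

variable {M : ℕ → ℝ}

lemma mul_le_of_logConvex (hpos : ∀ j, 0 < M j) (hM0 : M 0 = 1)
    (hlog : ∀ j, M (j + 1) / M j ≤ M (j + 2) / M (j + 1)) (i j : ℕ) : M i * M j ≤ M (i + j) := by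
  have hratio : Monotone fun j ↦ M (j + 1) / M j := monotone_nat_of_le_succ hlog
  induction j with
  | zero => simp [hM0]
  | succ j ih =>
    have hij : M (j + 1) / M j ≤ M (i + j + 1) / M (i + j) := hratio (Nat.le_add_left j i)
    calc M i * M (j + 1) = M i * M j * (M (j + 1) / M j) := by have := hpos j; field_simp
      _ ≤ M (i + j) * (M (i + j + 1) / M (i + j)) :=
        mul_le_mul ih hij (div_pos (hpos _) (hpos _)).le (hpos _).le
      _ = M (i + (j + 1)) := mul_div_cancel₀ _ (hpos _).ne'

lemma exists_succ_le_of_ratio_rpow_le (hpos : ∀ j, 0 < M j) {C : ℝ}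
    (hC : ∀ j : ℕ, 1 ≤ j → (M (j + 1) / M j) ^ ((1 : ℝ) / j) ≤ C) :
    ∃ C D : ℝ, 0 < C ∧ 0 < D ∧ ∀ j, M (j + 1) ≤ C * D ^ j * M j := by
  have hC0 : 0 < C := (Real.rpow_pos_of_pos (div_pos (hpos 2) (hpos 1)) _).trans_le (hC 1 le_rfl)
  refine ⟨max 1 (M 1 / M 0), C, lt_max_of_lt_left one_pos, hC0, fun j ↦ ?_⟩
  rw [← div_le_iff₀ (hpos j)]
  rcases Nat.eq_zero_or_pos j with rfl | hj
  · simp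
  have hr : 0 ≤ M (j + 1) / M j := (div_pos (hpos _) (hpos _)).le
  have hpow := pow_le_pow_left₀ (Real.rpow_nonneg hr _) (hC j hj) j
  rw [one_div, Real.rpow_inv_natCast_pow hr hj.ne'] at hpow
  exact hpow.trans (le_mul_of_one_le_left (by positivity) (le_max_left _ _))

lemma IsQuasianalyticWeight.of_monotone (hmono : Monotone M) (hM0 : M 0 = 1)
    (hlog : ∀ j, M (j + 1) / M j ≤ M (j + 2) / M (j + 1))
    (hqa : ∑' k : ℕ, ENNReal.ofReal (M k / (((k : ℝ) + 1) * M (k + 1))) = ⊤)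
    (hder : ∃ C : ℝ, ∀ j : ℕ, 1 ≤ j → (M (j + 1) / M j) ^ ((1 : ℝ) / j) ≤ C) :
    IsQuasianalyticWeight M := by
  have hone (j : ℕ) : 1 ≤ M j := hM0 ▸ hmono (Nat.zero_le j)
  have hpos (j : ℕ) : 0 < M j := one_pos.trans_le (hone j)
  obtain ⟨C, hC⟩ := hder
  exact
    { one_le := hone
      zero := hM0
      mul_le := mul_le_of_logConvex hpos hM0 hlog
      succ_le := exists_succ_le_of_ratio_rpow_le hpos hC
      log_convex := hlog
      not_summable := fun h ↦ h.tsum_ofReal_ne_top hqa }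

end WeightSequence

section PartialDerivatives

variable {ι : Type} [Fintype ι] [DecidableEq ι] {W : Type} [NormedAddCommGroup W]
  [NormedSpace ℝ W] {U : Set (EuclideanSpace ℝ ι)} {f : EuclideanSpace ℝ ι → W}

/-- The iterated partial derivative of `f` along the indices in `L`, the last of which is applied
first. -/
noncomputable def listDeriv (L : List ι) (f : EuclideanSpace ℝ ι → W) : EuclideanSpace ℝ ι → W :=
  L.foldr pd f

lemma listDeriv_append (L L' : List ι) (f : EuclideanSpace ℝ ι → W) :
    listDeriv (L ++ L') f = listDeriv L (listDeriv L' f) :=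
  List.foldr_append

lemma listDeriv_replicate (k : ℕ) (i : ι) (f : EuclideanSpace ℝ ι → W) :
    listDeriv (List.replicate k i) f = (pd i)^[k] f := by
  induction k with
  | zero => rfl
  | succ k ih =>
    rw [Function.iterate_succ_apply', ← ih]
    rfl

lemma mderiv_eq_listDeriv (α : ι → ℕ) (f : EuclideanSpace ℝ ι → W) :
    mderiv α f = listDeriv (Finset.univ.toList.flatMap fun i ↦ List.replicate (α i) i) f := by
  unfold mderiv
  induction (Finset.univ : Finset ι).toList with
  | nil => rfl
  | cons i l ih =>
    rw [List.foldr_cons, ih, List.flatMap_cons, listDeriv_append, listDeriv_replicate]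

lemma eqOn_pd (hU : IsOpen U) {g : EuclideanSpace ℝ ι → W} (h : EqOn f g U) (i : ι) :
    EqOn (pd i f) (pd i g) U := by
  intro x hx
  simp only [pd, (h.eventuallyEq_of_mem (hU.mem_nhds hx)).fderiv_eq]

lemma contDiffAt_listDeriv {x : EuclideanSpace ℝ ι} (hf : ContDiffAt ℝ ∞ f x) (L : List ι) :
    ContDiffAt ℝ ∞ (listDeriv L f) x := by
  induction L with
  | nil => exact hf
  | cons i L ih => exact (ih.fderiv_right (m := ∞) (by simp)).clm_apply contDiffAt_const

lemma pd_comm {x : EuclideanSpace ℝ ι} (hf : ContDiffAt ℝ ∞ f x) (i j : ι) :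
    pd i (pd j f) x = pd j (pd i f) x := by
  have hsymm : IsSymmSndFDerivAt ℝ f x := hf.isSymmSndFDerivAt <| by
    rw [minSmoothness_of_isRCLikeNormedField]
    exact WithTop.coe_le_coe.2 (le_top : (2 : ℕ∞) ≤ ⊤)
  have hf' : DifferentiableAt ℝ (fderiv ℝ f) x :=
    (hf.fderiv_right (m := ∞) (by simp)).differentiableAt (by simp)
  have hsnd (v w : EuclideanSpace ℝ ι) :
      fderiv ℝ (fun y ↦ fderiv ℝ f y v) x w = fderiv ℝ (fderiv ℝ f) x w v := by
    rw [fderiv_clm_apply hf' (differentiableAt_const v)]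
    simp
  unfold pd
  rw [hsnd, hsnd]
  exact hsymm _ _

lemma eqOn_listDeriv_of_perm (hU : IsOpen U) (hf : ∀ x ∈ U, ContDiffAt ℝ ∞ f x) {L L' : List ι}
    (h : L.Perm L') : EqOn (listDeriv L f) (listDeriv L' f) U := by
  induction h with
  | nil => exact eqOn_refl _ _
  | cons i _ ih => exact eqOn_pd hU ih i
  | swap i j l => exact fun x hx ↦ pd_comm (contDiffAt_listDeriv (hf x hx) l) j i
  | trans _ _ ih₁ ih₂ => exact ih₁.trans ih₂

lemma iteratedFDeriv_apply_single (hU : IsOpen U) (hf : ∀ x ∈ U, ContDiffAt ℝ ∞ f x) {m : ℕ}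
    (s : Fin m → ι) {x : EuclideanSpace ℝ ι} (hx : x ∈ U) :
    iteratedFDeriv ℝ m f x (fun k ↦ EuclideanSpace.single (s k) 1) =
      listDeriv (List.ofFn s) f x := by
  induction m generalizing x with
  | zero => simp [listDeriv]
  | succ m ih =>
    have hd : DifferentiableAt ℝ (iteratedFDeriv ℝ m f) x :=
      ((hf x hx).iteratedFDeriv_right (m := 1) (i := m)
        (by exact_mod_cast le_top)).differentiableAt (by simp)
    have hih : (fun y ↦ iteratedFDeriv ℝ m f y fun k ↦ EuclideanSpace.single (s k.succ) 1)
        =ᶠ[𝓝 x] listDeriv (List.ofFn fun k ↦ s k.succ) f := by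
      filter_upwards [hU.mem_nhds hx] with y hy using ih _ hy
    have happly := ((ContinuousMultilinearMap.apply ℝ (fun _ : Fin m ↦ EuclideanSpace ℝ ι) W
      fun k ↦ EuclideanSpace.single (s k.succ) 1).hasFDerivAt.comp x hd.hasFDerivAt).fderiv
    calc iteratedFDeriv ℝ (m + 1) f x (fun k ↦ EuclideanSpace.single (s k) 1)
        = fderiv ℝ (fun y ↦ iteratedFDeriv ℝ m f y fun k ↦ EuclideanSpace.single (s k.succ) 1) x
            (EuclideanSpace.single (s 0) 1) :=
          (DFunLike.congr_fun happly (EuclideanSpace.single (s 0) 1)).symm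
      _ = listDeriv (s 0 :: List.ofFn fun k ↦ s k.succ) f x := by
          rw [hih.fderiv_eq]
          rfl
      _ = listDeriv (List.ofFn s) f x := by rw [List.ofFn_succ]

lemma perm_flatMap_replicate_count (L : List ι) :
    L.Perm (Finset.univ.toList.flatMap fun i ↦ List.replicate (L.count i) i) := by
  rw [List.perm_iff_count]
  intro a
  have h : (List.count a ∘ fun i ↦ List.replicate (L.count i) i) =
      fun i ↦ if i = a then L.count i else 0 := by
    ext i
    simp [List.count_replicate]
  rw [List.count_flatMap, h, Finset.sum_map_toList]
  simp

lemma sum_count_eq_length (L : List ι) : ∑ i, L.count i = L.length := by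
  simpa using Multiset.sum_count_eq_card (s := Finset.univ) (m := (L : Multiset ι)) (by simp)

lemma iteratedFDeriv_apply_single_eq_mderiv (hU : IsOpen U) (hf : ∀ x ∈ U, ContDiffAt ℝ ∞ f x)
    {m : ℕ} (s : Fin m → ι) : ∃ α : ι → ℕ, ∑ i, α i = m ∧ ∀ x ∈ U,
      iteratedFDeriv ℝ m f x (fun k ↦ EuclideanSpace.single (s k) 1) = mderiv α f x := by
  refine ⟨(List.ofFn s).count, by simp [sum_count_eq_length], fun x hx ↦ ?_⟩
  rw [iteratedFDeriv_apply_single hU hf s hx, mderiv_eq_listDeriv]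
  exact eqOn_listDeriv_of_perm hU hf (perm_flatMap_replicate_count _) hx

lemma sum_smul_single (v : EuclideanSpace ℝ ι) :
    ∑ i, v i • EuclideanSpace.single i (1 : ℝ) = v := by
  ext j
  simp [Finset.sum_apply, Pi.single_apply]

lemma opNorm_le_of_apply_single_le {m : ℕ}
    (T : ContinuousMultilinearMap ℝ (fun _ : Fin m ↦ EuclideanSpace ℝ ι) W) {c : ℝ} (hc : 0 ≤ c)
    (h : ∀ s : Fin m → ι, ‖T fun k ↦ EuclideanSpace.single (s k) 1‖ ≤ c) :
    ‖T‖ ≤ Fintype.card ι ^ m * c := by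
  refine T.opNorm_le_bound (by positivity) fun v ↦ ?_
  have hT : T v =
      ∑ s : Fin m → ι, (∏ k, v k (s k)) • T fun k ↦ EuclideanSpace.single (s k) 1 := by
    conv_lhs => rw [← funext fun k ↦ sum_smul_single (v k)]
    simp only [T.map_sum, T.map_smul_univ]
  have hterm (s : Fin m → ι) :
      ‖(∏ k, v k (s k)) • T fun k ↦ EuclideanSpace.single (s k) 1‖ ≤ (∏ k, ‖v k‖) * c := by
    rw [norm_smul, norm_prod]
    gcongr
    · exact PiLp.norm_apply_le _ _
    · exact h s
  calc ‖T v‖ ≤ ∑ _s : Fin m → ι, (∏ k, ‖v k‖) * c := by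
        rw [hT]
        exact norm_sum_le_of_le _ fun s _ ↦ hterm s
    _ = Fintype.card ι ^ m * c * ∏ k, ‖v k‖ := by
        simp only [Finset.sum_const, Finset.card_univ, Fintype.card_fun, Fintype.card_fin,
          nsmul_eq_mul, Nat.cast_pow]
        ring

end PartialDerivatives

section Euclidean

variable {ι : Type} [Fintype ι] [DecidableEq ι] {M : ℕ → ℝ} {U : Set (EuclideanSpace ℝ ι)}
  {f : EuclideanSpace ℝ ι → ℝ} {a : EuclideanSpace ℝ ι}

lemma norm_iteratedFDeriv_le_of_mderiv_le (hM : IsWeight M) (hU : IsOpen U)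
    (hf : ∀ x ∈ U, ContDiffAt ℝ ∞ f x) {A B : ℝ} (hA : 0 ≤ A) (hB : 0 ≤ B)
    {x : EuclideanSpace ℝ ι} (hx : x ∈ U)
    (h : ∀ α : ι → ℕ, 1 / (∏ i, ((α i)! : ℝ)) * |mderiv α f x| ≤
      A * B ^ (∑ i, α i) * M (∑ i, α i)) (m : ℕ) :
    ‖iteratedFDeriv ℝ m f x‖ ≤ A * (Fintype.card ι * B) ^ m * (m ! * M m) := by
  have hMm := hM.pos m
  have hsingle (s : Fin m → ι) :
      ‖iteratedFDeriv ℝ m f x fun k ↦ EuclideanSpace.single (s k) 1‖ ≤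
        m ! * (A * B ^ m * M m) := by
    obtain ⟨α, rfl, hα⟩ := iteratedFDeriv_apply_single_eq_mderiv hU hf s
    have hprod : (∏ i, ((α i)! : ℝ)) ≤ (∑ i, α i)! := by
      exact_mod_cast Nat.le_of_dvd (Nat.factorial_pos _)
        (Nat.prod_factorial_dvd_factorial_sum Finset.univ α)
    have hle := h α
    rw [one_div, inv_mul_le_iff₀ (Finset.prod_pos fun i _ ↦ by positivity)] at hle
    rw [hα x hx]
    exact hle.trans (mul_le_mul_of_nonneg_right hprod (by positivity))
  calc ‖iteratedFDeriv ℝ m f x‖ ≤ Fintype.card ι ^ m * (m ! * (A * B ^ m * M m)) :=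
        opNorm_le_of_apply_single_le _ (by positivity) hsingle
    _ = A * (Fintype.card ι * B) ^ m * (m ! * M m) := by ring

lemma isGerm_of_CRM (hM : IsWeight M) (hU : IsOpen U) (hf : CRM M U f) (ha : a ∈ U) :
    IsGerm M fun x ↦ f (a + x) := by
  have hf' (x) (hx : x ∈ U) : ContDiffAt ℝ ∞ f x := hf.1.contDiffAt (hU.mem_nhds hx)
  obtain ⟨r, hr, hrU⟩ := Metric.nhds_basis_closedBall.mem_iff.1 (hU.mem_nhds ha)
  obtain ⟨A, B, hA, hB, hAB⟩ := hf.2 _ hrU (isCompact_closedBall a r)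
  have hlim : Tendsto (a + ·) (𝓝 0) (𝓝 a) := (continuous_const_add a).tendsto' _ _ (add_zero a)
  refine ⟨A, (Fintype.card ι + 1) * B, hA, by positivity, ?_⟩
  filter_upwards [hlim (Metric.closedBall_mem_nhds a hr)] with x hx
  refine ⟨(hf' _ (hrU hx)).comp x (by fun_prop), fun m ↦ ?_⟩
  have := hM.pos m
  rw [iteratedFDeriv_comp_add_left, add_zero]
  calc ‖iteratedFDeriv ℝ m f (a + x)‖ ≤ A * (Fintype.card ι * B) ^ m * (m ! * M m) :=
        norm_iteratedFDeriv_le_of_mderiv_le hM hU hf' hA.le hB.le (hrU hx) (hAB _ hx) m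
    _ ≤ A * ((Fintype.card ι + 1) * B) ^ m * (m ! * M m) := by
        gcongr
        exact le_add_of_nonneg_right zero_le_one

lemma norm_fderiv_le_norm_grad (f : EuclideanSpace ℝ ι → ℝ) (x : EuclideanSpace ℝ ι) :
    ‖fderiv ℝ f x‖ ≤ ‖(EuclideanSpace.equiv ι ℝ).symm fun i ↦ pd i f x‖ := by
  refine ContinuousLinearMap.opNorm_le_bound _ (norm_nonneg _) fun v ↦ ?_
  have hinner : fderiv ℝ f x v =
      inner ℝ ((EuclideanSpace.equiv ι ℝ).symm fun i ↦ pd i f x) v := by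
    conv_lhs => rw [← sum_smul_single v, map_sum]
    simp [PiLp.inner_apply, pd]
  rw [hinner]
  exact norm_inner_le_norm _ _

lemma hasGradientInequalityAt_of_apply_eq_zero (hM : IsQuasianalyticWeight M) (hU : IsOpen U)
    (hf : CRM M U f) (ha : a ∈ U) (hfa : f a = 0) : HasGradientInequalityAt f a := by
  let e : (ι → ℝ) ≃L[ℝ] EuclideanSpace ℝ ι := (EuclideanSpace.equiv ι ℝ).symm
  have hgerm : IsGerm M fun y ↦ f (a + e y) :=
    (isGerm_of_CRM hM.toIsWeight hU hf ha).comp_clm hM.toIsWeight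
      (e : (ι → ℝ) →L[ℝ] EuclideanSpace ℝ ι)
  have hdiff : ∀ᶠ x in 𝓝 (a + e 0), DifferentiableAt ℝ f x := by
    rw [map_zero, add_zero]
    filter_upwards [hU.mem_nhds ha] with x hx
    exact (hf.1.contDiffAt (hU.mem_nhds hx)).differentiableAt (by simp)
  have he (y) : HasFDerivAt (fun y ↦ a + e y) (e : (ι → ℝ) →L[ℝ] EuclideanSpace ℝ ι) y :=
    e.hasFDerivAt.const_add a
  obtain ⟨C, hC, μ, hμ, h⟩ :=
    HasGradientInequalityAt.eventually_of_comp (π := fun y ↦ a + e y) hdiff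
      (.of_forall fun y ↦ (he y).differentiableAt)
      (by simp only [funext fun y ↦ (he y).fderiv]; exact continuousAt_const)
      (hgerm.hasGradientInequalityAt hM (by simpa using hfa))
  have hlim : Tendsto (fun x ↦ e.symm (x - a)) (𝓝 a) (𝓝 0) :=
    (by fun_prop : Continuous fun x ↦ e.symm (x - a)).tendsto' _ _ (by simp)
  exact ⟨C, hC, μ, hμ, (hlim.eventually h).mono fun x hx ↦ by simpa using hx⟩

theorem hasGradientInequalityAt_of_CRM (hM : IsQuasianalyticWeight M) (hU : IsOpen U)
    (hf : CRM M U f) (ha : a ∈ U) (hcrit : (∀ i, pd i f a = 0) → f a = 0) :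
    HasGradientInequalityAt f a := by
  by_cases h : fderiv ℝ f a = 0
  · exact hasGradientInequalityAt_of_apply_eq_zero hM hU hf ha (hcrit fun i ↦ by simp [pd, h])
  · exact .of_fderiv_ne_zero (((hf.1.contDiffAt (hU.mem_nhds ha)).fderiv_right
      (m := ∞) (by simp)).continuousAt) h

end Euclidean

end DenjoyCarleman

open DenjoyCarleman in
theorem stmt13_general {ι : Type} [Fintype ι] [DecidableEq ι] {M : ℕ → ℝ}
    (hM : IsQuasianalyticWeight M) {U : Set (EuclideanSpace ℝ ι)} (hU : IsOpen U)
    {f : EuclideanSpace ℝ ι → ℝ} (hf : CRM M U f) (hcrit : ∀ x ∈ U, (∀ i, pd i f x = 0) → f x = 0)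
    {K : Set (EuclideanSpace ℝ ι)} (hK : IsCompact K) (hKU : K ⊆ U) :
    ∃ C : ℝ, 0 < C ∧ ∃ μ : ℝ, 0 < μ ∧ μ ≤ 1 ∧
      ∃ W : Set (EuclideanSpace ℝ ι), IsOpen W ∧ K ⊆ W ∧ W ⊆ U ∧
        ∀ x ∈ W, C * |f x| ^ (1 - μ) ≤ ‖(EuclideanSpace.equiv ι ℝ).symm fun i ↦ pd i f x‖ := by
  obtain ⟨C, hC, μ, ⟨hμ, hμ1⟩, W, hW, hKW, hWU, hle⟩ :=
    HasGradientInequalityAt.exists_uniform hK hU hKU hf.1.continuousOn fun a ha ↦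
      hasGradientInequalityAt_of_CRM hM hU hf (hKU ha) (hcrit a (hKU ha))
  exact ⟨C, hC, μ, hμ, hμ1, W, hW, hKW, hWU, fun x hx ↦
    (hle x hx).trans (norm_fderiv_le_norm_grad f x)⟩

/-- Łojasiewicz gradient inequality in the class `C^ℝ_M`. -/
theorem stmt13 {N : ℕ} (M : ℕ → ℝ)
    (hpos : ∀ j, 0 < M j) (hmono : Monotone M) (hM0 : M 0 = 1)
    (hlog : ∀ j : ℕ, M (j+1) / M j ≤ M (j+2) / M (j+1))
    (hqa : ∑' k : ℕ, ENNReal.ofReal (M k / (((k : ℝ) + 1) * M (k+1))) = ⊤)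
    (hder : ∃ C : ℝ, ∀ j : ℕ, 1 ≤ j → (M (j+1) / M j) ^ ((1 : ℝ) / j) ≤ C)
    (U : Set (EuclideanSpace ℝ (Fin N))) (hUopen : IsOpen U) (hUconn : IsConnected U)
    (f : EuclideanSpace ℝ (Fin N) → ℝ) (hf : CRM M U f)
    (hcrit : ∀ x ∈ U, (∀ i, pd i f x = 0) → f x = 0)
    (K : Set (EuclideanSpace ℝ (Fin N))) (hKcpt : IsCompact K) (hKU : K ⊆ U) :
    ∃ C : ℝ, 0 < C ∧ ∃ μ : ℝ, 0 < μ ∧ μ ≤ 1 ∧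
      ∃ W : Set (EuclideanSpace ℝ (Fin N)), IsOpen W ∧ K ⊆ W ∧ W ⊆ U ∧
        ∀ x ∈ W,
          C * |f x| ^ ((1 : ℝ) - μ) ≤
            ‖(EuclideanSpace.equiv (Fin N) ℝ).symm (fun i => pd i f x)‖ :=
  stmt13_general (.of_monotone hmono hM0 hlog hqa hder) hUopen hf hcrit hKcpt hKU
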